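/- arXiv:0811.2806 — 3 statements merged into one kernel-verified Lean document; each statement's English description precedes it below -/
import Mathlib

section
/- Define the upper approximation exponent μ⁺(s) = sup{ν : 0 < p/q - s < q^{-ν} has infinitely many rational solutions}. For irrational s, with Λ_s = {(m, sm+n)} and h_t = [[1,t],[0,1]], limsup_{t→+∞} log α₁(h_t Λ_s)/log t = 1 - 1/μ⁺(s). -/
open MeasureTheory Filter Matrix Real ENNReal

noncomputable section

/-- `SL(n, ℝ)`. -/
abbrev SLR (n : ℕ) := Matrix.SpecialLinearGroup (Fin n) ℝ

instance (n : ℕ) : TopologicalSpace (SLR n) :=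
  TopologicalSpace.induced (fun g => (g : Matrix (Fin n) (Fin n) ℝ)) inferInstance

/-- The image of `SL(n, ℤ)` in `SL(n, ℝ)`. -/
def latticeGamma (n : ℕ) : Subgroup (SLR n) :=
  (Matrix.SpecialLinearGroup.map (n := Fin n) (Int.castRingHom ℝ)).range

/-- The space of unimodular lattices `X_n = SL(n,ℝ)/SL(n,ℤ)`. -/
abbrev LatticeSpace (n : ℕ) := SLR n ⧸ latticeGamma n

instance (n : ℕ) : MeasurableSpace (LatticeSpace n) := borel _

/-- The real vector `g · m` of the lattice `g ℤⁿ` coming from the integer vector `m`. -/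
def vecOf (n : ℕ) (g : SLR n) (m : Fin n → ℤ) : Fin n → ℝ :=
  (g : Matrix (Fin n) (Fin n) ℝ).mulVec (fun i => (m i : ℝ))

/-- Euclidean norm on `Fin n → ℝ`. -/
def eNorm {n : ℕ} (v : Fin n → ℝ) : ℝ := ‖(WithLp.equiv 2 (Fin n → ℝ)).symm v‖

/-- The lattice `Λ` contains a nonzero vector lying in `A`. -/
def Intersects (n : ℕ) (Λ : LatticeSpace n) (A : Set (Fin n → ℝ)) : Prop :=
  ∀ g : SLR n, (QuotientGroup.mk g : LatticeSpace n) = Λ →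
    ∃ m : Fin n → ℤ, m ≠ 0 ∧ vecOf n g m ∈ A

/-- `α₁(Λ) = sup_{0 ≠ v ∈ Λ} 1/‖v‖` (Euclidean norm). -/
def alpha1 (n : ℕ) (Λ : LatticeSpace n) : ℝ :=
  sSup {r : ℝ | ∃ g : SLR n, (QuotientGroup.mk g : LatticeSpace n) = Λ ∧
    ∃ m : Fin n → ℤ, m ≠ 0 ∧ r = 1 / eNorm (vecOf n g m)}

/-- The horocycle matrix `h_t = [[1,t],[0,1]]`. -/
def hMat (t : ℝ) : SLR 2 := ⟨!![1, t; 0, 1], by simp [Matrix.det_fin_two_of]⟩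

/-- The matrix `[[1,0],[s,1]]`, so that `gMat s · ℤ² = Λ_s = {(m, sm+n)}`. -/
def gMat (s : ℝ) : SLR 2 := ⟨!![1, 0; s, 1], by simp [Matrix.det_fin_two_of]⟩

/-- The point `Λ_s` of the space of lattices. -/
def LambdaS (s : ℝ) : LatticeSpace 2 := QuotientGroup.mk (gMat s)

/-- The approximation exponent `μ(s)`, valued in `[0,∞]`:
the sup of all `ν` such that `|s - p/q| < q^{-ν}` has infinitely many rational solutions. -/
def approxExp (s : ℝ) : ℝ≥0∞ :=
  ⨆ (ν : ℝ) (_ : {pq : ℤ × ℕ+ |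
    |s - (pq.1 : ℝ) / ((pq.2 : ℕ) : ℝ)| < ((pq.2 : ℕ) : ℝ) ^ (-ν)}.Infinite),
    ENNReal.ofReal ν

/-- The upper approximation exponent `μ⁺(s)`: the sup of all `ν` such that
`0 < p/q - s < q^{-ν}` has infinitely many rational solutions. -/
def upperApproxExp (s : ℝ) : ℝ≥0∞ :=
  ⨆ (ν : ℝ) (_ : {pq : ℤ × ℕ+ |
    0 < (pq.1 : ℝ) / ((pq.2 : ℕ) : ℝ) - s ∧
      (pq.1 : ℝ) / ((pq.2 : ℕ) : ℝ) - s < ((pq.2 : ℕ) : ℝ) ^ (-ν)}.Infinite),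
    ENNReal.ofReal ν

/-- The logarithmic growth rate of `α₁` along the horocycle through `Λ_s`. -/
def horocycleRate (s t : ℝ) : ℝ :=
  Real.log (alpha1 2 (QuotientGroup.mk (hMat t * gMat s))) / Real.log t

/-- The pairs `(p, q)` with `0 < p/q - s < q^{-ν}`. -/
def upperApproximants (s ν : ℝ) : Set (ℤ × ℕ+) :=
  {pq : ℤ × ℕ+ |
    0 < (pq.1 : ℝ) / ((pq.2 : ℕ) : ℝ) - s ∧
      (pq.1 : ℝ) / ((pq.2 : ℕ) : ℝ) - s < ((pq.2 : ℕ) : ℝ) ^ (-ν)}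

lemma vecOf_hMat_mul_gMat (s t : ℝ) (m : Fin 2 → ℤ) :
    vecOf 2 (hMat t * gMat s) m = ![m 0 + t * (s * m 0 + m 1), s * m 0 + m 1] := by
  have h : ((hMat t * gMat s : SLR 2) : Matrix (Fin 2) (Fin 2) ℝ) =
      !![1, t; 0, 1] * !![1, 0; s, 1] := rfl
  rw [vecOf, h]
  ext i
  fin_cases i <;> simp [Matrix.mulVec, dotProduct, Fin.sum_univ_two]
  ring

lemma eNorm_pair (x y : ℝ) : eNorm ![x, y] = √(x ^ 2 + y ^ 2) := by
  simp [eNorm, EuclideanSpace.norm_eq, Fin.sum_univ_two]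

lemma abs_fst_le_eNorm (x y : ℝ) : |x| ≤ eNorm ![x, y] := by
  rw [eNorm_pair]
  exact Real.abs_le_sqrt (by nlinarith [sq_nonneg y])

lemma abs_snd_le_eNorm (x y : ℝ) : |y| ≤ eNorm ![x, y] := by
  rw [eNorm_pair]
  exact Real.abs_le_sqrt (by nlinarith [sq_nonneg x])

/-- Two representatives of a lattice have the same nonzero vectors. -/
lemma exists_vecOf_eq {n : ℕ} {g g' : SLR n}
    (h : (QuotientGroup.mk g' : LatticeSpace n) = QuotientGroup.mk g)
    {m : Fin n → ℤ} (hm : m ≠ 0) :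
    ∃ m' : Fin n → ℤ, m' ≠ 0 ∧ vecOf n g' m = vecOf n g m' := by
  obtain ⟨γ, hγ⟩ := QuotientGroup.eq.1 h.symm
  refine ⟨(γ : Matrix (Fin n) (Fin n) ℤ).mulVec m, fun h0 => hm ?_, ?_⟩
  · have hdet : (γ : Matrix (Fin n) (Fin n) ℤ).det ≠ 0 := by simp
    exact Matrix.eq_zero_of_mulVec_eq_zero hdet h0
  · have hg : g' = g * Matrix.SpecialLinearGroup.map (Int.castRingHom ℝ) γ := by
      rw [hγ]; group
    rw [hg]
    simp only [vecOf, Matrix.SpecialLinearGroup.coe_mul, ← Matrix.mulVec_mulVec]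
    congr 1
    ext i
    simp [Matrix.mulVec, dotProduct]

/-- A short vector of `h_t Λ_s` comes from a rational slightly larger than `s`. -/
lemma exists_approximant_of_pos {s t ε : ℝ} (ht : 0 < t) {m n : ℤ} (hm : 0 < m)
    (hx : |m + t * (s * m + n)| ≤ ε) (hy : |s * m + n| ≤ ε) (hε : ε < 1 / 2) :
    ∃ (p : ℤ) (q : ℕ+), 1 / (2 * t) ≤ (p : ℝ) / ((q : ℕ) : ℝ) - s ∧
      (p : ℝ) / ((q : ℕ) : ℝ) - s ≤ 2 / t ∧
      ((q : ℕ) : ℝ) * ((p : ℝ) / ((q : ℕ) : ℝ) - s) ≤ ε := by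
  have hqm : ((m.toNat : ℕ) : ℝ) = m := by
    exact_mod_cast Int.toNat_of_nonneg hm.le
  refine ⟨-n, ⟨m.toNat, by omega⟩, ?_⟩
  have hm1 : (1 : ℝ) ≤ m := by exact_mod_cast hm
  have hm0 : (0 : ℝ) < m := by linarith
  simp only [PNat.mk_coe, hqm, Int.cast_neg]
  have hδ : -(n : ℝ) / m - s = -(s * m + n) / m := by field_simp; ring
  rw [hδ]
  rw [abs_le] at hx hy
  refine ⟨?_, ?_, ?_⟩
  · rw [div_le_div_iff₀ (by positivity) hm0]
    nlinarith
  · rw [div_le_div_iff₀ hm0 ht]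
    nlinarith
  · rw [mul_div_cancel₀ _ hm0.ne']
    linarith

lemma exists_approximant {s t ε : ℝ} (ht : 0 < t) {m n : ℤ} (hmn : m ≠ 0 ∨ n ≠ 0)
    (hx : |m + t * (s * m + n)| ≤ ε) (hy : |s * m + n| ≤ ε) (hε : ε < 1 / 2) :
    ∃ (p : ℤ) (q : ℕ+), 1 / (2 * t) ≤ (p : ℝ) / ((q : ℕ) : ℝ) - s ∧
      (p : ℝ) / ((q : ℕ) : ℝ) - s ≤ 2 / t ∧
      ((q : ℕ) : ℝ) * ((p : ℝ) / ((q : ℕ) : ℝ) - s) ≤ ε := by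
  rcases lt_trichotomy m 0 with hm | rfl | hm
  · refine exists_approximant_of_pos (n := -n) ht (neg_pos.2 hm) ?_ ?_ hε
    · rw [← abs_neg]; convert hx using 2; push_cast; ring
    · rw [← abs_neg]; convert hy using 2; push_cast; ring
  · have hn : n ≠ 0 := by simpa using hmn
    have h1 : (1 : ℝ) ≤ |(n : ℝ)| := by exact_mod_cast Int.one_le_abs hn
    simp at hy
    linarith
  · exact exists_approximant_of_pos ht hm hx hy hε

/-- A lower bound for the denominators of rationals at distance about `1/t` above `s`
bounds every inverse length in `h_t Λ_s`. -/
lemma one_div_eNorm_le {s t a : ℝ} (ht : 2 ≤ t) (ha : a ≤ 1)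
    (H : ∀ (p : ℤ) (q : ℕ+), 1 / (2 * t) ≤ (p : ℝ) / ((q : ℕ) : ℝ) - s →
      (p : ℝ) / ((q : ℕ) : ℝ) - s ≤ 2 / t → (t / 2) ^ a ≤ ((q : ℕ) : ℝ))
    {g : SLR 2} (hg : (QuotientGroup.mk g : LatticeSpace 2) = QuotientGroup.mk (hMat t * gMat s))
    {m : Fin 2 → ℤ} (hm : m ≠ 0) :
    1 / eNorm (vecOf 2 g m) ≤ 2 * t / (t / 2) ^ a := by
  obtain ⟨m', hm', he⟩ := exists_vecOf_eq hg hm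
  have hpos : 0 < (t / 2) ^ a := Real.rpow_pos_of_pos (by linarith) a
  have ht0 : 0 < t := by linarith
  rw [he, vecOf_hMat_mul_gMat]
  set x : ℝ := m' 0 + t * (s * m' 0 + m' 1) with hx
  set y : ℝ := s * m' 0 + m' 1 with hy
  have key : (t / 2) ^ a / (2 * t) ≤ eNorm ![x, y] := by
    rcases lt_or_ge (eNorm ![x, y]) (1 / 2) with hε | hε
    · have hmn : m' 0 ≠ 0 ∨ m' 1 ≠ 0 := by
        by_contra! h
        exact hm' (by ext i; fin_cases i <;> simp [h.1, h.2])
      obtain ⟨p, q, h1, h2, h3⟩ := exists_approximant ht0 hmn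
        (abs_fst_le_eNorm x y) (abs_snd_le_eNorm x y) hε
      refine le_trans ?_ h3
      rw [div_eq_mul_one_div]
      exact mul_le_mul (H p q h1 h2) h1 (by positivity) (by positivity)
    · refine le_trans ?_ hε
      have : (t / 2) ^ a ≤ (t / 2) ^ (1 : ℝ) :=
        Real.rpow_le_rpow_of_exponent_le (by linarith) ha
      rw [Real.rpow_one] at this
      rw [div_le_div_iff₀ (by positivity) (by norm_num)]
      linarith
  calc 1 / eNorm ![x, y] ≤ 1 / ((t / 2) ^ a / (2 * t)) :=
        one_div_le_one_div_of_le (by positivity) key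
    _ = 2 * t / (t / 2) ^ a := by rw [one_div_div]

/-- `α₁(h_t Λ_s)` dominates every inverse length in the lattice. -/
lemma one_div_eNorm_le_alpha1 {s t : ℝ} (ht : 2 ≤ t) {m : Fin 2 → ℤ} (hm : m ≠ 0) :
    1 / eNorm (vecOf 2 (hMat t * gMat s) m) ≤
      alpha1 2 (QuotientGroup.mk (hMat t * gMat s)) := by
  refine le_csSup ⟨2 * t / (t / 2) ^ (0 : ℝ), ?_⟩ ⟨_, rfl, m, hm, rfl⟩
  rintro r ⟨g, hg, m, hm, rfl⟩
  refine one_div_eNorm_le ht zero_le_one (fun p q _ _ => ?_) hg hm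
  rw [Real.rpow_zero]
  exact_mod_cast q.pos

lemma alpha1_pos {s t : ℝ} (ht : 2 ≤ t) :
    0 < alpha1 2 (QuotientGroup.mk (hMat t * gMat s)) := by
  have hm : (![0, 1] : Fin 2 → ℤ) ≠ 0 := fun h => by simpa using congrFun h 1
  refine lt_of_lt_of_le ?_ (one_div_eNorm_le_alpha1 ht hm)
  rw [vecOf_hMat_mul_gMat]
  refine one_div_pos.2 (lt_of_lt_of_le ?_ (abs_snd_le_eNorm _ _))
  simp

lemma eventually_horocycleRate_le {s a C : ℝ} (ha : a ≤ 1)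
    (H : ∀ᶠ t : ℝ in atTop, ∀ (p : ℤ) (q : ℕ+), 1 / (2 * t) ≤ (p : ℝ) / ((q : ℕ) : ℝ) - s →
      (p : ℝ) / ((q : ℕ) : ℝ) - s ≤ 2 / t → (t / 2) ^ a ≤ ((q : ℕ) : ℝ))
    (hC : 1 - a < C) :
    ∀ᶠ t in atTop, horocycleRate s t ≤ C := by
  have hlog : ∀ᶠ t in atTop, (1 + a) * Real.log 2 / (C - (1 - a)) ≤ Real.log t :=
    Real.tendsto_log_atTop.eventually_ge_atTop _
  filter_upwards [H, hlog, eventually_ge_atTop 2] with t hH hl ht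
  have ht0 : 0 < t := by linarith
  have hα : alpha1 2 (QuotientGroup.mk (hMat t * gMat s)) ≤ 2 * t / (t / 2) ^ a := by
    refine csSup_le ⟨_, _, rfl, ![0, 1], fun h => by simpa using congrFun h 1, rfl⟩ ?_
    rintro r ⟨g, hg, m, hm, rfl⟩
    exact one_div_eNorm_le ht ha hH hg hm
  have h1 := Real.log_le_log (alpha1_pos ht) hα
  have hpos : 0 < (t / 2) ^ a := Real.rpow_pos_of_pos (by linarith) a
  rw [Real.log_div (by positivity) hpos.ne', Real.log_mul (by norm_num) ht0.ne',
    Real.log_rpow (by linarith), Real.log_div ht0.ne' (by norm_num)] at h1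
  rw [div_le_iff₀ (by linarith)] at hl
  rw [horocycleRate, div_le_iff₀ (Real.log_pos (by linarith))]
  linarith

lemma eventually_horocycleRate_le_of_one_lt {s C : ℝ} (hC : 1 < C) :
    ∀ᶠ t in atTop, horocycleRate s t ≤ C := by
  refine eventually_horocycleRate_le zero_le_one (Eventually.of_forall fun t p q _ _ => ?_)
    (by linarith)
  rw [Real.rpow_zero]
  exact_mod_cast q.pos

lemma eventually_horocycleRate_le_of_finite {s ν C : ℝ} (hν : 1 ≤ ν)
    (hfin : (upperApproximants s ν).Finite) (hC : 1 - 1 / ν < C) :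
    ∀ᶠ t in atTop, horocycleRate s t ≤ C := by
  have hν0 : 0 < ν := by linarith
  refine eventually_horocycleRate_le ((div_le_one hν0).2 hν) ?_ hC
  have hex : ∀ᶠ t : ℝ in atTop, ∀ pq ∈ upperApproximants s ν,
      2 / t < (pq.1 : ℝ) / ((pq.2 : ℕ) : ℝ) - s := by
    rw [eventually_all_finite hfin]
    intro pq hpq
    exact (tendsto_const_nhds.div_atTop tendsto_id).eventually_lt_const hpq.1
  filter_upwards [hex, eventually_gt_atTop 0] with t hex ht p q h1 h2
  have hδ : 0 < (p : ℝ) / ((q : ℕ) : ℝ) - s := lt_of_lt_of_le (by positivity) h1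
  have hq : (0 : ℝ) < ((q : ℕ) : ℝ) := by exact_mod_cast q.pos
  have hlow : ((q : ℕ) : ℝ) ^ (-ν) ≤ 2 / t := by
    by_contra! h
    exact absurd (hex (p, q) ⟨hδ, lt_of_le_of_lt h2 h⟩) (not_lt.2 h2)
  have hqt : t / 2 ≤ ((q : ℕ) : ℝ) ^ ν := by
    rw [Real.rpow_neg hq.le, inv_le_comm₀ (by positivity) (by positivity), inv_div] at hlow
    exact hlow
  calc (t / 2) ^ (1 / ν) ≤ (((q : ℕ) : ℝ) ^ ν) ^ (1 / ν) :=
        Real.rpow_le_rpow (by positivity) hqt (by positivity)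
    _ = ((q : ℕ) : ℝ) := by rw [← Real.rpow_mul hq.le, mul_one_div_cancel hν0.ne', Real.rpow_one]

/-- For `ν ≥ 1`, infinitely many approximants have unbounded denominators. -/
lemma exists_large_denominator {s ν : ℝ} (hν : 1 ≤ ν)
    (hinf : (upperApproximants s ν).Infinite) (Q : ℕ) :
    ∃ pq ∈ upperApproximants s ν, Q < (pq.2 : ℕ) := by
  by_contra! h
  refine hinf (Set.Finite.subset
    (s := (⋃ q ∈ Set.Iic Q, Set.Icc ⌊(q : ℝ) * s⌋ ⌈(q : ℝ) * s + 1⌉ ×ˢ {q' : ℕ+ | (q' : ℕ) = q}))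
    ?_ ?_)
  · refine (Set.finite_Iic Q).biUnion fun q _ => (Set.finite_Icc _ _).prod ?_
    exact Set.Subsingleton.finite fun a ha b hb => PNat.coe_injective (ha.trans hb.symm)
  · rintro ⟨p, q⟩ hpq
    have hqQ := h _ hpq
    obtain ⟨h1, h2⟩ := hpq
    dsimp only at h1 h2 hqQ
    have hq1 : (1 : ℝ) ≤ ((q : ℕ) : ℝ) := by exact_mod_cast q.pos
    have hq : (0 : ℝ) < ((q : ℕ) : ℝ) := by linarith
    have h3 : ((q : ℕ) : ℝ) ^ (-ν) ≤ 1 / ((q : ℕ) : ℝ) := by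
      rw [one_div, ← Real.rpow_neg_one]
      exact Real.rpow_le_rpow_of_exponent_le hq1 (by linarith)
    have h4 : (p : ℝ) / ((q : ℕ) : ℝ) - s < 1 / ((q : ℕ) : ℝ) := h2.trans_le h3
    rw [sub_pos, lt_div_iff₀ hq] at h1
    rw [sub_lt_iff_lt_add, div_lt_iff₀ hq, add_mul, one_div_mul_cancel hq.ne'] at h4
    simp only [Set.mem_iUnion, Set.mem_prod, Set.mem_Icc, Set.mem_ofPred_eq]
    refine ⟨q, hqQ, ⟨?_, ?_⟩, rfl⟩
    · have : (⌊((q : ℕ) : ℝ) * s⌋ : ℝ) ≤ p := (Int.floor_le _).trans (by linarith)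
      exact_mod_cast this
    · have : (p : ℝ) ≤ ⌈((q : ℕ) : ℝ) * s + 1⌉ := le_trans (by linarith) (Int.le_ceil _)
      exact_mod_cast this

lemma frequently_le_horocycleRate {s ν : ℝ} (hν : 1 ≤ ν)
    (hinf : (upperApproximants s ν).Infinite) :
    ∃ᶠ t in atTop, 1 - 1 / ν ≤ horocycleRate s t := by
  rw [frequently_atTop]
  intro T
  obtain ⟨⟨p, q⟩, ⟨hδ, hlt⟩, hQ⟩ := exists_large_denominator hν hinf (max 2 ⌈T⌉₊)
  dsimp only at hδ hlt hQ
  set δ : ℝ := (p : ℝ) / ((q : ℕ) : ℝ) - s with hδdef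
  have hν0 : 0 < ν := by linarith
  have hq2 : (2 : ℝ) ≤ ((q : ℕ) : ℝ) := by
    exact_mod_cast ((le_max_left _ _).trans hQ.le)
  have hq : (0 : ℝ) < ((q : ℕ) : ℝ) := by linarith
  have hqT : T ≤ ((q : ℕ) : ℝ) :=
    (Nat.le_ceil T).trans (by exact_mod_cast ((le_max_right _ _).trans hQ.le))
  have hδq : δ ≤ 1 / ((q : ℕ) : ℝ) := by
    rw [one_div, ← Real.rpow_neg_one]
    exact hlt.le.trans (Real.rpow_le_rpow_of_exponent_le (by linarith) (by linarith))
  have hqt : ((q : ℕ) : ℝ) ≤ 1 / δ := (le_one_div hδ hq).1 hδq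
  refine ⟨1 / δ, hqT.trans hqt, ?_⟩
  have ht2 : 2 ≤ 1 / δ := hq2.trans hqt
  have hm : (![((q : ℕ) : ℤ), -p] : Fin 2 → ℤ) ≠ 0 := fun h => by
    simpa using congrFun h 0
  have hα := one_div_eNorm_le_alpha1 (s := s) ht2 hm
  have hy : s * ((q : ℕ) : ℝ) - p = -(((q : ℕ) : ℝ) * δ) := by
    rw [hδdef]; field_simp; ring
  have hnorm : eNorm (vecOf 2 (hMat (1 / δ) * gMat s) ![((q : ℕ) : ℤ), -p]) =
      ((q : ℕ) : ℝ) * δ := by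
    have hx : ((q : ℕ) : ℝ) + 1 / δ * (s * ((q : ℕ) : ℝ) - p) = 0 := by
      rw [hy]; field_simp; ring
    rw [vecOf_hMat_mul_gMat, eNorm_pair]
    simp only [Matrix.cons_val_zero, Matrix.cons_val_one, Int.cast_natCast, Int.cast_neg,
      ← sub_eq_add_neg]
    rw [hx, hy, zero_pow two_ne_zero, zero_add, neg_sq, Real.sqrt_sq (by positivity)]
  rw [hnorm] at hα
  have hlog := Real.log_le_log (by positivity) hα
  rw [one_div, Real.log_inv, Real.log_mul hq.ne' hδ.ne'] at hlog
  have hlogδ := Real.log_le_log hδ hlt.le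
  rw [Real.log_rpow hq] at hlogδ
  have hlt' : Real.log (1 / δ) = -Real.log δ := by rw [one_div, Real.log_inv]
  have hlq : Real.log ((q : ℕ) : ℝ) ≤ 1 / ν * -Real.log δ := by
    rw [one_div, inv_mul_eq_div, le_div_iff₀ hν0]
    linarith
  rw [horocycleRate, le_div_iff₀ (Real.log_pos (by linarith)), hlt']
  linarith

/-- An irrational number is approximated from above to order `1` infinitely often. -/
lemma infinite_upperApproximants_one {s : ℝ} (hs : Irrational s) :
    (upperApproximants s 1).Infinite := by
  refine Set.infinite_of_injective_forall_mem
    (f := fun q : ℕ+ => (⌈((q : ℕ) : ℝ) * s⌉, q)) (fun a b h => (Prod.ext_iff.1 h).2) ?_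
  intro q
  have hq : (0 : ℝ) < ((q : ℕ) : ℝ) := by exact_mod_cast q.pos
  have hne : ((q : ℕ) : ℝ) * s ≠ ⌈((q : ℕ) : ℝ) * s⌉ :=
    (hs.natCast_mul q.ne_zero).ne_int _
  refine ⟨?_, ?_⟩
  · rw [sub_pos, lt_div_iff₀ hq, mul_comm]
    exact lt_of_le_of_ne (Int.le_ceil _) hne
  · rw [Real.rpow_neg_one, sub_lt_iff_lt_add, div_lt_iff₀ hq, add_mul, inv_mul_cancel₀ hq.ne']
    linarith [Int.ceil_lt_add_one (((q : ℕ) : ℝ) * s)]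

lemma isBoundedUnder_horocycleRate (s : ℝ) :
    IsBoundedUnder (· ≤ ·) atTop (horocycleRate s) :=
  ⟨2, eventually_map.2 (eventually_horocycleRate_le_of_one_lt one_lt_two)⟩

lemma isCoboundedUnder_horocycleRate {s : ℝ} (hs : Irrational s) :
    IsCoboundedUnder (· ≤ ·) atTop (horocycleRate s) :=
  IsCoboundedUnder.of_frequently_ge
    (frequently_le_horocycleRate le_rfl (infinite_upperApproximants_one hs))

lemma le_limsup_horocycleRate {s ν : ℝ} (hν : 1 ≤ ν)
    (hinf : (upperApproximants s ν).Infinite) :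
    1 - 1 / ν ≤ limsup (horocycleRate s) atTop :=
  le_limsup_of_frequently_le (frequently_le_horocycleRate hν hinf) (isBoundedUnder_horocycleRate s)

lemma limsup_horocycleRate_le_one {s : ℝ} (hs : Irrational s) :
    limsup (horocycleRate s) atTop ≤ 1 :=
  le_of_forall_gt_imp_ge_of_dense fun _ hC => limsup_le_of_le
    (isCoboundedUnder_horocycleRate hs) (eventually_horocycleRate_le_of_one_lt hC)

lemma limsup_horocycleRate_le {s ν : ℝ} (hs : Irrational s) (hν : 1 ≤ ν)
    (hfin : (upperApproximants s ν).Finite) :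
    limsup (horocycleRate s) atTop ≤ 1 - 1 / ν :=
  le_of_forall_gt_imp_ge_of_dense fun _ hC => limsup_le_of_le
    (isCoboundedUnder_horocycleRate hs) (eventually_horocycleRate_le_of_finite hν hfin hC)

lemma le_upperApproxExp {s ν : ℝ} (h : (upperApproximants s ν).Infinite) :
    ENNReal.ofReal ν ≤ upperApproxExp s :=
  le_iSup₂_of_le (f := fun (ν : ℝ) (_ : (upperApproximants s ν).Infinite) => ENNReal.ofReal ν)
    ν h le_rfl

/-- For irrational `s`, `limsup_{t→+∞} log α₁(h_t Λ_s)/log t = 1 - 1/μ⁺(s)`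
(interpreted as `1` when `μ⁺(s) = ∞`). -/
theorem horocycle_upper_diophantine (s : ℝ) (hs : Irrational s) :
    ENNReal.ofReal (Filter.limsup
        (fun t : ℝ => Real.log (alpha1 2 (QuotientGroup.mk (hMat t * gMat s))) / Real.log t)
        atTop) = 1 - (upperApproxExp s)⁻¹ := by
  change ENNReal.ofReal (limsup (horocycleRate s) atTop) = _
  have hone : 1 ≤ upperApproxExp s := by
    simpa using le_upperApproxExp (infinite_upperApproximants_one hs)
  have hL0 : 0 ≤ limsup (horocycleRate s) atTop := by
    simpa using le_limsup_horocycleRate le_rfl (infinite_upperApproximants_one hs)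
  set L := limsup (horocycleRate s) atTop with hL
  have hL1 : L ≤ 1 := limsup_horocycleRate_le_one hs
  apply le_antisymm
  · rcases eq_or_ne (upperApproxExp s) ⊤ with htop | htop
    · simpa [htop] using hL1
    · lift upperApproxExp s to NNReal using htop with μ hμ
      have hμ1 : (1 : ℝ) ≤ μ := by exact_mod_cast hone
      have hbound : ∀ ν : ℝ, (μ : ℝ) < ν → L ≤ 1 - 1 / ν := fun ν hν => by
        refine limsup_horocycleRate_le hs (hμ1.trans hν.le) (Set.not_infinite.1 fun hinf => ?_)
        have := le_upperApproxExp hinf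
        rw [← hμ, ENNReal.ofReal_le_iff_le_toReal ENNReal.coe_ne_top, ENNReal.coe_toReal] at this
        linarith
      have hLμ : L ≤ 1 - 1 / (μ : ℝ) := by
        have hcont : Tendsto (fun ν : ℝ => 1 - 1 / ν) (nhdsWithin (μ : ℝ) (Set.Ioi μ))
            (nhds (1 - 1 / (μ : ℝ))) :=
          ((continuousAt_const.sub (continuousAt_const.div continuousAt_id
            (zero_lt_one.trans_le hμ1).ne')).tendsto).mono_left nhdsWithin_le_nhds
        exact ge_of_tendsto hcont (eventually_mem_nhdsWithin.mono hbound)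
      refine (ENNReal.ofReal_le_ofReal hLμ).trans_eq ?_
      rw [ENNReal.ofReal_sub _ (by positivity), ENNReal.ofReal_one, one_div,
        ENNReal.ofReal_inv_of_pos (by linarith), ENNReal.ofReal_coe_nnreal]
  · rcases hL1.eq_or_lt with h1 | h1
    · simp [h1]
    · have hμ : upperApproxExp s ≤ ENNReal.ofReal (1 - L)⁻¹ := by
        refine iSup₂_le fun ν hν => ENNReal.ofReal_le_ofReal ?_
        have hpos : 0 < 1 - L := by linarith
        rcases le_or_gt 1 ν with h | h
        · have := le_limsup_horocycleRate h hν
          rw [le_inv_comm₀ (by linarith) hpos, ← one_div]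
          linarith
        · exact h.le.trans ((one_le_inv₀ hpos).2 (by linarith))
      rw [ENNReal.ofReal_inv_of_pos (by linarith)] at hμ
      have hinv := ENNReal.inv_le_inv.2 hμ
      rw [inv_inv, ENNReal.ofReal_sub _ hL0, ENNReal.ofReal_one] at hinv
      rw [tsub_le_iff_left]
      exact tsub_le_iff_right.1 hinv
end
end

section
/- Let s be irrational with convergents p_n/q_n and r_n = log q_{n+1}/log q_n. Then the upper and lower approximation exponents satisfy μ⁺(s) = 1 + limsup_{n→∞} r_{2n+1} and μ⁻(s) = 1 + limsup_{n→∞} r_{2n}, where μ⁺ (resp. μ⁻) measures approximation by rationals greater (resp. less) than s. In particular there exist irrationals s with μ⁺(s) ≠ μ⁻(s). -/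
open Filter Real ENNReal

noncomputable section

/-- The lower approximation exponent `μ⁻(s)` (approximation by rationals below `s`). -/
def lowerApproxExp (s : ℝ) : ℝ≥0∞ :=
  ⨆ (ν : ℝ) (_ : {pq : ℤ × ℕ+ |
    0 < s - (pq.1 : ℝ) / ((pq.2 : ℕ) : ℝ) ∧
      s - (pq.1 : ℝ) / ((pq.2 : ℕ) : ℝ) < ((pq.2 : ℕ) : ℝ) ^ (-ν)}.Infinite),
    ENNReal.ofReal ν

namespace GenContFract

theorem not_terminatedAt_of_irrational {s : ℝ} (hs : Irrational s) (n : ℕ) :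
    ¬ (GenContFract.of s).TerminatedAt n := by
  intro h
  obtain ⟨q, hq⟩ := (GenContFract.terminates_iff_rat s).1 ⟨n, h⟩
  exact hs ⟨q, hq.symm⟩

theorem fib_succ_le_dens {s : ℝ} (hs : Irrational s) (n : ℕ) :
    (Nat.fib (n + 1) : ℝ) ≤ (GenContFract.of s).dens n :=
  succ_nth_fib_le_of_nth_den (Or.inr (not_terminatedAt_of_irrational hs _))

theorem dens_pos {s : ℝ} (hs : Irrational s) (n : ℕ) : 0 < (GenContFract.of s).dens n :=
  lt_of_lt_of_le (by exact_mod_cast Nat.fib_pos.2 n.succ_pos) (fib_succ_le_dens hs n)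

theorem tendsto_dens_atTop {s : ℝ} (hs : Irrational s) :
    Tendsto (GenContFract.of s).dens atTop atTop := by
  refine tendsto_atTop_mono' atTop ?_ tendsto_natCast_atTop_atTop
  filter_upwards [eventually_ge_atTop 5] with n hn
  refine le_trans ?_ (fib_succ_le_dens hs n)
  exact_mod_cast (Nat.le_fib_self hn).trans Nat.fib_le_fib_succ

theorem dens_monotone (s : ℝ) : Monotone (GenContFract.of s).dens :=
  monotone_nat_of_le_succ fun _ => of_den_mono

/-- The continuants of `GenContFract.of s` are integers. -/
theorem exists_int_contsAux {s : ℝ} (hs : Irrational s) (n : ℕ) :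
    (∃ a b : ℤ, (GenContFract.of s).contsAux n = ⟨(a : ℝ), (b : ℝ)⟩) ∧
      ∃ a b : ℤ, (GenContFract.of s).contsAux (n + 1) = ⟨(a : ℝ), (b : ℝ)⟩ := by
  induction n with
  | zero => exact ⟨⟨1, 0, by simp⟩, ⟨⌊s⌋, 1, by simp⟩⟩
  | succ n ih =>
    obtain ⟨⟨a, b, h⟩, a', b', h'⟩ := ih
    refine ⟨⟨a', b', h'⟩, ?_⟩
    obtain ⟨gp, hgp⟩ := Option.ne_none_iff_exists'.1 (not_terminatedAt_of_irrational hs n)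
    obtain ⟨ha, z, hz⟩ := of_partNum_eq_one_and_exists_int_partDen_eq hgp
    refine ⟨z * a' + a, z * b' + b, ?_⟩
    rw [contsAux_recurrence hgp h h', ha, hz]
    simp

theorem exists_int_nums_dens {s : ℝ} (hs : Irrational s) (n : ℕ) :
    ∃ (p : ℤ) (q : ℕ+), (GenContFract.of s).nums n = p ∧ (GenContFract.of s).dens n = (q : ℕ) := by
  obtain ⟨a, b, h⟩ := (exists_int_contsAux hs n).2
  have hn : (GenContFract.of s).nums n = a := by
    rw [num_eq_conts_a, nth_cont_eq_succ_nth_contAux, h]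
  have hd : (GenContFract.of s).dens n = b := by
    rw [den_eq_conts_b, nth_cont_eq_succ_nth_contAux, h]
  have hb : 0 < b := by exact_mod_cast hd ▸ dens_pos hs n
  lift b to ℕ using hb.le
  exact ⟨a, ⟨b, by exact_mod_cast hb⟩, hn, by simpa using hd⟩

theorem nums_dens_determinant {s : ℝ} (hs : Irrational s) (n : ℕ) :
    (GenContFract.of s).nums n * (GenContFract.of s).dens (n + 1) -
      (GenContFract.of s).dens n * (GenContFract.of s).nums (n + 1) = (-1) ^ (n + 1) :=
  (SimpContFract.of s).determinant (not_terminatedAt_of_irrational hs n)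

/-- A fraction equal to the `n`th convergent has denominator at least that of the convergent. -/
theorem dens_le_of_convs_eq {s : ℝ} (hs : Irrational s) {n : ℕ} {p : ℤ} {q : ℕ+}
    (h : (GenContFract.of s).convs n = (p : ℝ) / ((q : ℕ) : ℝ)) :
    (GenContFract.of s).dens n ≤ (q : ℕ) := by
  obtain ⟨a, b, ha, hb⟩ := exists_int_nums_dens hs n
  obtain ⟨a', b', ha', hb'⟩ := exists_int_nums_dens hs (n + 1)
  have hdet := nums_dens_determinant hs n
  rw [ha, hb, ha', hb'] at hdet
  rw [conv_eq_num_div_den, ha, hb, div_eq_div_iff (by positivity) (by positivity)] at h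
  have hcop : IsCoprime (b : ℤ) a := by
    have : (a : ℤ) * b' - b * a' = (-1) ^ (n + 1) := by exact_mod_cast hdet
    refine ⟨-a' * (-1) ^ (n + 1), b' * (-1) ^ (n + 1), ?_⟩
    have h1 : ((-1 : ℤ) ^ (n + 1)) * (-1) ^ (n + 1) = 1 := by
      rw [← mul_pow]; simp
    linear_combination (-1) ^ (n + 1) * this + h1
  have hdvd : (b : ℤ) ∣ (q : ℤ) := by
    refine hcop.dvd_of_dvd_mul_left ⟨p, ?_⟩
    have : (a : ℤ) * q = p * b := by exact_mod_cast h
    linear_combination this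
  rw [hb]
  exact_mod_cast Int.le_of_dvd (by exact_mod_cast q.pos) hdvd

/-- The error of the `n`th convergent of an irrational number has the sign of `(-1) ^ (n + 1)` and
is comparable to `1 / (qₙ * qₙ₊₁)`. -/
theorem convs_sub_mem_Icc {s : ℝ} (hs : Irrational s) (n : ℕ) :
    (-1) ^ (n + 1) * ((GenContFract.of s).convs n - s) ∈
      Set.Icc (1 / (2 * ((GenContFract.of s).dens n * (GenContFract.of s).dens (n + 1))))
        (1 / ((GenContFract.of s).dens n * (GenContFract.of s).dens (n + 1))) := by
  obtain ⟨gp, hgp⟩ := Option.ne_none_iff_exists'.1 (not_terminatedAt_of_irrational hs n)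
  obtain ⟨i', hi', hb⟩ := IntFractPair.exists_succ_get?_stream_of_gcf_of_get?_eq_some hgp
  obtain ⟨i, hi, hne, hof⟩ := IntFractPair.succ_nth_stream_eq_some_iff.1 hi'
  have herr := sub_convs_eq hi
  have hrec := contsAux_recurrence hgp rfl rfl
  have hBpos := dens_pos hs n
  have hB'pos := dens_pos hs (n + 1)
  have hmono : (GenContFract.of s).dens n ≤ (GenContFract.of s).dens (n + 1) := of_den_mono
  have hpB : 0 ≤ ((GenContFract.of s).contsAux n).b := zero_le_of_contsAux_b
  have hB : (GenContFract.of s).dens n = ((GenContFract.of s).contsAux (n + 1)).b := rfl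
  have hB' : (GenContFract.of s).dens (n + 1) = gp.b * (GenContFract.of s).dens n +
      ((GenContFract.of s).contsAux n).b := by
    rw [den_eq_conts_b, nth_cont_eq_succ_nth_contAux, hrec,
      of_partNum_eq_one (partNum_eq_s_a hgp), hB]
    simp
  simp only [hne, if_false] at herr
  rw [← hB] at herr
  set B := (GenContFract.of s).dens n
  set B' := (GenContFract.of s).dens (n + 1)
  set C := ((GenContFract.of s).contsAux n).b
  have hfl : gp.b = ⌊i.fr⁻¹⌋ := by rw [← hb, ← hof]; rfl
  have h1 : gp.b ≤ i.fr⁻¹ := hfl ▸ Int.floor_le _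
  have h2 : i.fr⁻¹ < gp.b + 1 := hfl ▸ Int.lt_floor_add_one _
  have heq : (-1) ^ (n + 1) * ((GenContFract.of s).convs n - s) = 1 / (B * (i.fr⁻¹ * B + C)) := by
    have hsq : ((-1 : ℝ) ^ n) * (-1) ^ n = 1 := by rw [← mul_pow]; simp
    calc _ = (-1) ^ n * (s - (GenContFract.of s).convs n) := by ring
      _ = _ := by rw [herr, ← mul_div_assoc, hsq]
  have h3 : B' ≤ i.fr⁻¹ * B + C := by rw [hB']; gcongr
  have h4 : i.fr⁻¹ * B + C ≤ 2 * B' := by nlinarith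
  rw [heq]
  constructor
  · rw [show 2 * (B * B') = B * (2 * B') by ring]
    gcongr
    exact mul_pos hBpos (hB'pos.trans_le h3)
  · gcongr

end GenContFract
/-- The pairs `(p, q)` with `0 < ε * (p / q - s) < q ^ (-ν)`; here `ε = ±1` selects the side of `s`
on which `p / q` lies. -/
def oneSidedApprox (ε s ν : ℝ) : Set (ℤ × ℕ+) :=
  {pq | 0 < ε * ((pq.1 : ℝ) / ((pq.2 : ℕ) : ℝ) - s) ∧
    ε * ((pq.1 : ℝ) / ((pq.2 : ℕ) : ℝ) - s) < ((pq.2 : ℕ) : ℝ) ^ (-ν)}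

theorem abs_sub_lt_of_mem_oneSidedApprox {ε s ν : ℝ} (hε : |ε| = 1) {pq : ℤ × ℕ+}
    (h : pq ∈ oneSidedApprox ε s ν) :
    |(pq.1 : ℝ) / ((pq.2 : ℕ) : ℝ) - s| < ((pq.2 : ℕ) : ℝ) ^ (-ν) := by
  have := abs_of_pos h.1
  rw [abs_mul, hε, one_mul] at this
  exact this ▸ h.2

theorem one_le_pnat_cast (q : ℕ+) : (1 : ℝ) ≤ ((q : ℕ) : ℝ) := by exact_mod_cast q.pos

/-- For a nonnegative exponent, there are infinitely many one-sided approximations if and only if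
there are some with arbitrarily large denominator. -/
theorem oneSidedApprox_infinite_iff {ε s ν : ℝ} (hε : |ε| = 1) (hν : 0 ≤ ν) :
    (oneSidedApprox ε s ν).Infinite ↔ ∀ M : ℝ, ∃ pq ∈ oneSidedApprox ε s ν, M < (pq.2 : ℕ) := by
  constructor
  · intro h M
    by_contra! hM
    refine h ?_
    obtain ⟨N, hN⟩ := exists_nat_ge M
    obtain ⟨K, hK⟩ := exists_nat_ge ((|s| + 1) * N)
    refine ((Set.finite_Icc (-(K : ℤ)) K).prod
      (Set.finite_Iic N.succPNat)).subset fun pq hpq => ?_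
    have hq := one_le_pnat_cast pq.2
    have hqN : ((pq.2 : ℕ) : ℝ) ≤ N := (hM pq hpq).trans hN
    have h1 : |(pq.1 : ℝ) / ((pq.2 : ℕ) : ℝ) - s| < 1 :=
      (abs_sub_lt_of_mem_oneSidedApprox hε hpq).trans_le
        (Real.rpow_le_one_of_one_le_of_nonpos hq (by linarith))
    have h2 : |(pq.1 : ℝ)| ≤ K := by
      have h3 : |(pq.1 : ℝ) / ((pq.2 : ℕ) : ℝ)| ≤ |s| + 1 := by
        have := abs_sub_abs_le_abs_sub ((pq.1 : ℝ) / ((pq.2 : ℕ) : ℝ)) s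
        linarith
      rw [abs_div, abs_of_pos (by linarith : (0 : ℝ) < (pq.2 : ℕ)),
        div_le_iff₀ (by linarith)] at h3
      exact h3.trans (le_trans (by gcongr) hK)
    refine ⟨?_, ?_⟩
    · rw [abs_le] at h2
      exact ⟨by exact_mod_cast h2.1, by exact_mod_cast h2.2⟩
    · have : (pq.2 : ℕ) ≤ N := by exact_mod_cast hqN
      exact (PNat.coe_le_coe _ _).1 (this.trans N.le_succ)
  · intro h
    refine Set.Infinite.of_image (fun pq => (pq.2 : ℕ)) (Set.infinite_of_forall_exists_gt fun M => ?_)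
    obtain ⟨pq, hpq, hM⟩ := h M
    exact ⟨_, ⟨pq, hpq, rfl⟩, by exact_mod_cast hM⟩

namespace GenContFract

/-- If `q_{n+1} > q_n ^ c`, then the `n`th convergent is a one-sided approximation of exponent
`1 + c`. -/
theorem exists_mem_oneSidedApprox {s : ℝ} (hs : Irrational s) {n : ℕ} {c : ℝ}
    (h : (GenContFract.of s).dens n ^ c < (GenContFract.of s).dens (n + 1)) :
    ∃ pq ∈ oneSidedApprox ((-1) ^ (n + 1)) s (1 + c),
      ((pq.2 : ℕ) : ℝ) = (GenContFract.of s).dens n := by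
  obtain ⟨p, q, hp, hq⟩ := exists_int_nums_dens hs n
  obtain ⟨h1, h2⟩ := convs_sub_mem_Icc hs n
  have hpos := dens_pos hs n
  have hpos' := dens_pos hs (n + 1)
  refine ⟨(p, q), ?_, hq.symm⟩
  simp only [oneSidedApprox, Set.mem_ofPred_eq]
  rw [← hp, ← hq, ← conv_eq_num_div_den]
  refine ⟨lt_of_lt_of_le (by positivity) h1, h2.trans_lt ?_⟩
  rw [Real.rpow_neg hpos.le, Real.rpow_add hpos, Real.rpow_one, one_div]
  gcongr

/-- A sufficiently good one-sided approximation, of exponent `ν > 2`, comes from a convergent whose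
successor has a large denominator. -/
theorem exists_dens_rpow_lt {s : ℝ} (hs : Irrational s) {k : ℕ} {ν : ℝ} (hν : 2 < ν)
    (hinf : (oneSidedApprox ((-1) ^ (k + 1)) s ν).Infinite) (N : ℕ) :
    ∃ j ≥ N, (GenContFract.of s).dens (2 * j + k) ^ (ν - 1) <
      2 * (GenContFract.of s).dens (2 * j + k + 1) := by
  have hε : |((-1 : ℝ)) ^ (k + 1)| = 1 := by simp
  have hlarge : ∀ᶠ x : ℝ in atTop, 2 < x ^ (ν - 2) :=
    (tendsto_rpow_atTop (by linarith)).eventually_gt_atTop 2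
  obtain ⟨M, hM⟩ := eventually_atTop.1 hlarge
  obtain ⟨pq, hmem, hq⟩ := (oneSidedApprox_infinite_iff hε (by linarith)).1 hinf
    (max M (2 * (GenContFract.of s).dens (2 * N + k)))
  have habs := abs_sub_lt_of_mem_oneSidedApprox hε hmem
  obtain ⟨p, q⟩ := pq
  simp only at hq habs hmem
  have hq0 : (0 : ℝ) < (q : ℕ) := by positivity
  have hqM := hM _ ((le_max_left _ _).trans hq.le)
  have hqN := (le_max_right _ _).trans_lt hq
  have hbound : ((q : ℕ) : ℝ) ^ (-ν) < 1 / (2 * ((q : ℕ) : ℝ) ^ 2) := by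
    rw [show -ν = -(ν - 2) - (2 : ℕ) by push_cast; ring, Real.rpow_sub_natCast hq0.ne',
      Real.rpow_neg hq0.le, ← one_div, div_div]
    gcongr
  obtain ⟨m, hm⟩ : ∃ m, (GenContFract.of s).convs m = (p : ℝ) / ((q : ℕ) : ℝ) := by
    have hcast : (((p : ℚ) / (q : ℕ) : ℚ) : ℝ) = (p : ℝ) / ((q : ℕ) : ℝ) := by push_cast; rfl
    rw [← hcast]
    refine Real.exists_convs_eq_rat ?_
    rw [hcast, abs_sub_comm]
    refine (habs.trans hbound).trans_le ?_
    have hden : (((p : ℚ) / (q : ℕ) : ℚ).den : ℝ) ≤ (q : ℕ) := by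
      have : ((((p : ℚ) / (q : ℕ) : ℚ).den : ℕ) : ℤ) ∣ ((q : ℕ) : ℤ) := by
        simpa [Rat.divInt_eq_div] using Rat.den_dvd p ((q : ℕ) : ℤ)
      exact_mod_cast Nat.le_of_dvd q.pos (by exact_mod_cast this)
    have : (0 : ℝ) < (((p : ℚ) / (q : ℕ) : ℚ).den : ℝ) := by exact_mod_cast Rat.den_pos _
    gcongr
  have herr := convs_sub_mem_Icc hs m
  have hle := dens_le_of_convs_eq hs hm
  rw [hm] at herr
  have hB := dens_pos hs m
  have hB' := dens_pos hs (m + 1)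
  have hpos : 0 < (-1 : ℝ) ^ (m + 1) * ((p : ℝ) / ((q : ℕ) : ℝ) - s) :=
    lt_of_lt_of_le (by positivity) herr.1
  have hsign : ((-1 : ℝ)) ^ (m + 1) = (-1) ^ (k + 1) := by
    have hk := hmem.1
    rcases neg_one_pow_eq_or ℝ (m + 1) with h | h <;>
      rcases neg_one_pow_eq_or ℝ (k + 1) with h' | h' <;> simp only [h, h'] at * <;> linarith
  have herr1 : 1 / (2 * ((GenContFract.of s).dens m * (GenContFract.of s).dens (m + 1))) <
      ((q : ℕ) : ℝ) ^ (-ν) := by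
    refine herr.1.trans_lt ?_
    rw [hsign]
    exact hmem.2
  have hmN : 2 * N + k ≤ m := by
    by_contra! hlt
    have h1 : (GenContFract.of s).dens m ≤ (GenContFract.of s).dens (2 * N + k) :=
      dens_monotone s hlt.le
    have h2 : (GenContFract.of s).dens (m + 1) ≤ (GenContFract.of s).dens (2 * N + k) :=
      dens_monotone s hlt
    have h3 := herr1.trans hbound
    rw [div_lt_div_iff₀ (by positivity) (by positivity)] at h3
    nlinarith [mul_le_mul h1 h2 hB'.le (hB.le.trans h1)]
  have hpar : ∃ j, m = 2 * j + k := by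
    have : Even (m + 1) ↔ Even (k + 1) := by
      rw [← neg_one_pow_eq_one_iff_even (R := ℝ) (by norm_num), hsign,
        neg_one_pow_eq_one_iff_even (by norm_num)]
    refine ⟨(m - k) / 2, ?_⟩
    simp only [Nat.even_iff] at this
    omega
  obtain ⟨j, rfl⟩ := hpar
  refine ⟨j, by omega, ?_⟩
  have h4 : ((q : ℕ) : ℝ) ^ (-ν) ≤ (GenContFract.of s).dens (2 * j + k) ^ (-ν) :=
    Real.rpow_le_rpow_of_nonpos hB hle (by linarith)
  have h5 := herr1.trans_le h4
  rw [Real.rpow_neg hB.le, ← one_div, div_lt_div_iff₀ (by positivity) (by positivity)] at h5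
  rw [Real.rpow_sub_one hB.ne', div_lt_iff₀ hB]
  linarith

theorem eventually_lt_dens {s : ℝ} (hs : Irrational s) (k : ℕ) (C : ℝ) :
    ∀ᶠ j in atTop, C < (GenContFract.of s).dens (2 * j + k) := by
  have : Tendsto (fun j => 2 * j + k) atTop atTop :=
    tendsto_atTop_mono (fun j => by simp only [id]; omega) tendsto_id
  exact ((tendsto_dens_atTop hs).comp this).eventually_gt_atTop C

/-- The one-sided approximation exponent in terms of the growth of the denominators of the
convergents on that side. -/
theorem iSup_oneSidedApprox_eq {s : ℝ} (hs : Irrational s) (k : ℕ) :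
    ⨆ (ν : ℝ) (_ : (oneSidedApprox ((-1) ^ (k + 1)) s ν).Infinite), ENNReal.ofReal ν =
      1 + limsup (fun j : ℕ => ENNReal.ofReal
        (Real.log ((GenContFract.of s).dens (2 * j + k + 1)) /
          Real.log ((GenContFract.of s).dens (2 * j + k)))) atTop := by
  have hε : |((-1 : ℝ)) ^ (k + 1)| = 1 := by simp
  set L := limsup (fun j : ℕ => ENNReal.ofReal
        (Real.log ((GenContFract.of s).dens (2 * j + k + 1)) /
          Real.log ((GenContFract.of s).dens (2 * j + k)))) atTop
  have hratio : ∀ᶠ j in atTop, 1 ≤ Real.log ((GenContFract.of s).dens (2 * j + k + 1)) /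
      Real.log ((GenContFract.of s).dens (2 * j + k)) := by
    filter_upwards [eventually_lt_dens hs k 1] with j hj
    rw [one_le_div (Real.log_pos hj)]
    exact Real.log_le_log (by linarith) of_den_mono
  have hL1 : 1 ≤ L := by
    refine le_limsup_of_frequently_le' (Eventually.frequently ?_)
    filter_upwards [hratio] with j hj
    simpa using hj
  apply le_antisymm
  · refine iSup₂_le fun ν hinf => ?_
    rcases le_or_gt ν 2 with hν | hν
    · calc ENNReal.ofReal ν ≤ ENNReal.ofReal 2 := ENNReal.ofReal_le_ofReal hν
        _ = 1 + 1 := by norm_num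
        _ ≤ 1 + L := by gcongr
    rw [show ν = 1 + (ν - 1) by ring, ENNReal.ofReal_add zero_le_one (by linarith),
      ENNReal.ofReal_one]
    gcongr
    refine ENNReal.le_of_forall_nnreal_lt fun c hc => ?_
    have hc : (c : ℝ) < ν - 1 := by
      rw [← ENNReal.ofReal_coe_nnreal] at hc
      exact (ENNReal.ofReal_lt_ofReal_iff (by linarith)).1 hc
    refine le_limsup_of_frequently_le' ?_
    have hfreq : ∃ᶠ j in atTop, (GenContFract.of s).dens (2 * j + k) ^ (ν - 1) <
        2 * (GenContFract.of s).dens (2 * j + k + 1) :=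
      frequently_atTop.2 (exists_dens_rpow_lt hs hν hinf)
    have hlarge : ∀ᶠ x : ℝ in atTop, 2 < x ^ (ν - 1 - c) :=
      (tendsto_rpow_atTop (by linarith)).eventually_gt_atTop 2
    obtain ⟨M, hM⟩ := eventually_atTop.1 hlarge
    refine (hfreq.and_eventually ((eventually_lt_dens hs k 1).and
      (eventually_lt_dens hs k M))).mono ?_
    rintro j ⟨hj, hj1, hjM⟩
    have hB : 0 < (GenContFract.of s).dens (2 * j + k) := by linarith
    have h2 := hM _ hjM.le
    rw [show ν - 1 = c + (ν - 1 - c) by ring, Real.rpow_add hB] at hj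
    have hlt : (GenContFract.of s).dens (2 * j + k) ^ (c : ℝ) <
        (GenContFract.of s).dens (2 * j + k + 1) := by
      nlinarith [Real.rpow_pos_of_pos hB (c : ℝ)]
    rw [← ENNReal.ofReal_coe_nnreal]
    refine ENNReal.ofReal_le_ofReal ?_
    rw [le_div_iff₀ (Real.log_pos hj1), ← Real.log_rpow hB]
    exact Real.log_le_log (by positivity) hlt.le
  · refine ENNReal.le_of_forall_nnreal_lt fun r hr => ?_
    rw [← ENNReal.ofReal_coe_nnreal]
    refine le_iSup₂_of_le (r : ℝ) ?_ le_rfl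
    refine (oneSidedApprox_infinite_iff hε r.2).2 fun M => ?_
    have hfreq : ∃ᶠ j in atTop, (r : ℝ) - 1 <
        Real.log ((GenContFract.of s).dens (2 * j + k + 1)) /
          Real.log ((GenContFract.of s).dens (2 * j + k)) := by
      rcases lt_or_ge (r : ℝ) 2 with h2 | h2
      · refine Eventually.frequently ?_
        filter_upwards [hratio] with j hj
        linarith
      · have hrL : ENNReal.ofReal (r - 1) < L := by
          rw [← ENNReal.ofReal_coe_nnreal, show (r : ℝ) = 1 + (r - 1) by ring,
            ENNReal.ofReal_add zero_le_one (by linarith), ENNReal.ofReal_one] at hr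
          exact lt_of_add_lt_add_left hr
        exact (frequently_lt_of_lt_limsup (by isBoundedDefault) hrL).mono
          fun j hj => (ENNReal.ofReal_lt_ofReal_iff'.1 hj).1
    obtain ⟨j, hj, hj1, hjM⟩ := (hfreq.and_eventually ((eventually_lt_dens hs k 1).and
      (eventually_lt_dens hs k M))).exists
    have hB : 0 < (GenContFract.of s).dens (2 * j + k) := by linarith
    rw [lt_div_iff₀ (Real.log_pos hj1), ← Real.log_rpow hB,
      Real.log_lt_log_iff (by positivity) (dens_pos hs _)] at hj
    obtain ⟨pq, hmem, hq⟩ := exists_mem_oneSidedApprox hs hj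
    refine ⟨pq, ?_, by rwa [hq]⟩
    rwa [add_assoc, pow_add, pow_mul, neg_one_sq, one_pow, one_mul, add_sub_cancel] at hmem

end GenContFract

theorem upperApproxExp_eq_iSup (s : ℝ) :
    upperApproxExp s = ⨆ (ν : ℝ) (_ : (oneSidedApprox 1 s ν).Infinite), ENNReal.ofReal ν := by
  simp only [upperApproxExp, oneSidedApprox, one_mul]

theorem lowerApproxExp_eq_iSup (s : ℝ) :
    lowerApproxExp s = ⨆ (ν : ℝ) (_ : (oneSidedApprox (-1) s ν).Infinite), ENNReal.ofReal ν := by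
  simp only [lowerApproxExp, oneSidedApprox, neg_one_mul, neg_sub]

theorem upperApproxExp_eq {s : ℝ} (hs : Irrational s) :
    upperApproxExp s = 1 + limsup (fun n : ℕ => ENNReal.ofReal
      (Real.log ((GenContFract.of s).dens (2 * n + 2)) /
        Real.log ((GenContFract.of s).dens (2 * n + 1)))) atTop := by
  rw [upperApproxExp_eq_iSup]
  simpa using GenContFract.iSup_oneSidedApprox_eq hs 1

theorem lowerApproxExp_eq {s : ℝ} (hs : Irrational s) :
    lowerApproxExp s = 1 + limsup (fun n : ℕ => ENNReal.ofReal
      (Real.log ((GenContFract.of s).dens (2 * n + 1)) /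
        Real.log ((GenContFract.of s).dens (2 * n)))) atTop := by
  rw [lowerApproxExp_eq_iSup]
  simpa using GenContFract.iSup_oneSidedApprox_eq hs 0

theorem irrational_liouvilleNumber_two : Irrational (liouvilleNumber 2) := by
  simpa using (liouville_liouvilleNumber (m := 2) le_rfl).irrational

theorem exists_partialSum_two_eq (n : ℕ) :
    ∃ p : ℤ, LiouvilleNumber.partialSum 2 n = (p : ℝ) / 2 ^ n.factorial := by
  obtain ⟨p, hp⟩ := LiouvilleNumber.partialSum_eq_rat (m := 2) two_pos n
  exact ⟨p, by simpa using hp⟩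

/-- The partial sums approximate Liouville's number arbitrarily well from below. -/
theorem lowerApproxExp_liouvilleNumber_two : lowerApproxExp (liouvilleNumber 2) = ⊤ := by
  rw [lowerApproxExp_eq_iSup]
  refine ENNReal.eq_top_of_forall_nnreal_le fun r => ?_
  rw [← ENNReal.ofReal_coe_nnreal]
  refine le_iSup₂_of_le (r : ℝ) ?_ le_rfl
  refine (oneSidedApprox_infinite_iff (by simp) r.2).2 fun M => ?_
  obtain ⟨n, hn⟩ := exists_nat_gt (max M r)
  obtain ⟨p, hp⟩ := exists_partialSum_two_eq n
  have hQ : (1 : ℝ) ≤ 2 ^ n.factorial := one_le_pow₀ one_le_two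
  have hsum := LiouvilleNumber.partialSum_add_remainder (m := 2) one_lt_two n
  rw [hp] at hsum
  have hcast : (((2 ^ n.factorial : ℕ+) : ℕ) : ℝ) = 2 ^ n.factorial := by push_cast; rfl
  refine ⟨(p, 2 ^ n.factorial), ?_, ?_⟩
  · have hrem : -1 * ((p : ℝ) / 2 ^ n.factorial - liouvilleNumber 2) =
        LiouvilleNumber.remainder 2 n := by linarith
    simp only [oneSidedApprox, Set.mem_ofPred_eq, hcast, hrem]
    refine ⟨LiouvilleNumber.remainder_pos one_lt_two n,
      (LiouvilleNumber.remainder_lt n le_rfl).trans_le ?_⟩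
    rw [one_div, ← Real.rpow_natCast _ n, ← Real.rpow_neg (by positivity)]
    exact Real.rpow_le_rpow_of_exponent_le hQ (neg_le_neg ((le_max_right _ _).trans hn.le))
  · rw [hcast]
    calc M < n := (le_max_left _ _).trans_lt hn
      _ ≤ ((2 ^ n : ℕ) : ℝ) := by exact_mod_cast n.lt_two_pow_self.le
      _ = 2 ^ n := by push_cast; rfl
      _ ≤ 2 ^ n.factorial := pow_le_pow_right₀ one_le_two n.self_le_factorial

/-- If `4 * q * 2 ^ n! ≤ 2 ^ (n + 1)!`, then a fraction `p / q` above Liouville's number is separated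
from it by the partial sum of denominator `2 ^ n!`. -/
theorem one_div_le_sub_liouvilleNumber_two {p : ℤ} {q n : ℕ} (hq : 0 < q)
    (hpos : liouvilleNumber 2 < (p : ℝ) / q)
    (hn : 4 * q * 2 ^ n.factorial ≤ 2 ^ (n + 1).factorial) :
    1 / (2 * (q * 2 ^ n.factorial)) ≤ (p : ℝ) / q - liouvilleNumber 2 := by
  obtain ⟨a, ha⟩ := exists_partialSum_two_eq n
  have hsum := LiouvilleNumber.partialSum_add_remainder (m := 2) one_lt_two n
  have hpos' := LiouvilleNumber.remainder_pos (m := 2) one_lt_two n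
  have hlt := LiouvilleNumber.remainder_lt' n (m := 2) one_lt_two
  rw [ha] at hsum
  have hq' : (0 : ℝ) < q := by exact_mod_cast hq
  have hn' : (4 : ℝ) * q * 2 ^ n.factorial ≤ 2 ^ (n + 1).factorial := by exact_mod_cast hn
  have hQ : (0 : ℝ) < 2 ^ n.factorial := by positivity
  have hrem : LiouvilleNumber.remainder 2 n ≤ 1 / (2 * (q * 2 ^ n.factorial)) := by
    refine hlt.le.trans ?_
    rw [show ((1 : ℝ) - 1 / 2)⁻¹ * (1 / 2 ^ (n + 1).factorial) = 2 / 2 ^ (n + 1).factorial by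
      norm_num [div_eq_mul_inv], div_le_div_iff₀ (by positivity) (by positivity)]
    linarith
  have hsep : 1 / ((q : ℝ) * 2 ^ n.factorial) ≤ (p : ℝ) / q - (a : ℝ) / 2 ^ n.factorial := by
    have h1 : (0 : ℝ) < (p : ℝ) / q - (a : ℝ) / 2 ^ n.factorial := by linarith
    rw [div_sub_div _ _ hq'.ne' hQ.ne'] at h1 ⊢
    have h2 : (0 : ℝ) < p * 2 ^ n.factorial - q * a := (div_pos_iff_of_pos_right (by positivity)).1 h1
    have h3 : (0 : ℤ) < p * 2 ^ n.factorial - q * a := by exact_mod_cast h2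
    have h4 : (1 : ℝ) ≤ p * 2 ^ n.factorial - q * a := by exact_mod_cast h3
    gcongr
  have hhalf : 1 / ((q : ℝ) * 2 ^ n.factorial) = 2 * (1 / (2 * (q * 2 ^ n.factorial))) := by
    field_simp
  linarith

theorem exists_two_pow_factorial_bounds {q : ℕ} (hq : 0 < q) :
    ∃ n : ℕ, 4 * q * 2 ^ n.factorial ≤ 2 ^ (n + 1).factorial ∧ 2 ^ n.factorial ≤ 16 * q ^ 2 := by
  have hex : ∃ n : ℕ, 4 * q * 2 ^ n.factorial ≤ 2 ^ (n + 1).factorial := by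
    refine ⟨q + 2, ?_⟩
    calc 4 * q * 2 ^ (q + 2).factorial ≤ 2 ^ (q + 2) * 2 ^ (q + 2).factorial := by
          have h : 4 * q ≤ 2 ^ (q + 2) := by
            have := q.lt_two_pow_self
            rw [pow_add]
            linarith
          gcongr
      _ = 2 ^ ((q + 2) + (q + 2).factorial) := by rw [← pow_add]
      _ ≤ 2 ^ (q + 2 + 1).factorial := by
          have h1 := (q + 2).self_le_factorial
          have h2 : (q + 2 + 1).factorial = (q + 2 + 1) * (q + 2).factorial := rfl
          gcongr
          · norm_num
          · nlinarith
  classical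
  refine ⟨Nat.find hex, Nat.find_spec hex, ?_⟩
  have hmin := fun m (hm : m < Nat.find hex) => not_le.1 (Nat.find_min hex hm)
  have hspec := Nat.find_spec hex
  generalize Nat.find hex = n at hmin hspec ⊢
  match n with
  | 0 => simp at hspec; omega
  | 1 => norm_num [Nat.factorial] at hspec; omega
  | m + 2 =>
    have h := hmin (m + 1) (by omega)
    have h1 : (2 : ℕ) ^ (m + 1 + 1).factorial = (2 ^ (m + 1).factorial) ^ (m + 2) := by
      rw [← pow_mul, mul_comm]; rfl
    have h2 : (2 ^ (m + 1).factorial) ^ 2 ≤ ((2 : ℕ) ^ (m + 1).factorial) ^ (m + 2) :=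
      Nat.pow_le_pow_right (by positivity) (by omega)
    have hQ : 0 < (2 : ℕ) ^ (m + 1).factorial := by positivity
    have h3 : (2 : ℕ) ^ (m + 1).factorial < 4 * q := by
      rw [h1] at h
      nlinarith
    nlinarith

theorem upperApproxExp_liouvilleNumber_two_le : upperApproxExp (liouvilleNumber 2) ≤ 4 := by
  rw [upperApproxExp_eq_iSup]
  refine iSup₂_le fun ν hinf => ?_
  by_contra! hν
  have hν : 4 < ν := by
    rw [show (4 : ℝ≥0∞) = ENNReal.ofReal 4 by norm_num] at hν
    exact (ENNReal.ofReal_lt_ofReal_iff'.1 hν).1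
  obtain ⟨⟨p, q⟩, ⟨hpos, hlt⟩, hq⟩ :=
    (oneSidedApprox_infinite_iff (by simp) (by linarith)).1 hinf 32
  simp only [one_mul, sub_pos] at hpos hlt hq
  obtain ⟨n, hn, hn'⟩ := exists_two_pow_factorial_bounds q.pos
  have hge := one_div_le_sub_liouvilleNumber_two q.pos hpos hn
  have hq0 : (0 : ℝ) < (q : ℕ) := by linarith
  have hQ : (2 : ℝ) ^ n.factorial ≤ 16 * (q : ℕ) ^ 2 := by exact_mod_cast hn'
  have h1 : ((q : ℕ) : ℝ) ^ (-ν) ≤ 1 / (q : ℕ) ^ 4 := by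
    rw [one_div, ← Real.rpow_natCast, ← Real.rpow_neg hq0.le]
    refine Real.rpow_le_rpow_of_exponent_le (by linarith) ?_
    push_cast
    linarith
  have h2 : 1 / (2 * (((q : ℕ) : ℝ) * (16 * (q : ℕ) ^ 2))) ≤
      1 / (2 * ((q : ℕ) * 2 ^ n.factorial)) := by gcongr
  have h3 := ((h2.trans hge).trans_lt hlt).trans_le h1
  rw [div_lt_div_iff₀ (by positivity) (by positivity)] at h3
  have : 0 < ((q : ℕ) : ℝ) ^ 3 := by positivity
  nlinarith

/-- With `r_n = log q_{n+1}/log q_n` for the convergent denominators `q_n` of `s`: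
`μ⁺(s) = 1 + limsup r_{2n+1}` and `μ⁻(s) = 1 + limsup r_{2n}`; in particular there exist
irrationals with `μ⁺(s) ≠ μ⁻(s)`. -/
theorem upper_lower_approxExp :
    (∀ s : ℝ, Irrational s →
      upperApproxExp s = 1 + Filter.limsup
        (fun n : ℕ => ENNReal.ofReal
          (Real.log ((GenContFract.of s).dens (2 * n + 2)) /
            Real.log ((GenContFract.of s).dens (2 * n + 1)))) atTop ∧
      lowerApproxExp s = 1 + Filter.limsup
        (fun n : ℕ => ENNReal.ofReal
          (Real.log ((GenContFract.of s).dens (2 * n + 1)) /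
            Real.log ((GenContFract.of s).dens (2 * n)))) atTop) ∧
    ∃ s : ℝ, Irrational s ∧ upperApproxExp s ≠ lowerApproxExp s := by
  refine ⟨fun s hs => ⟨upperApproxExp_eq hs, lowerApproxExp_eq hs⟩,
    liouvilleNumber 2, irrational_liouvilleNumber_two, ?_⟩
  rw [lowerApproxExp_liouvilleNumber_two]
  exact (upperApproxExp_liouvilleNumber_two_le.trans_lt (by simp)).ne
end
end

section
/- Let n ≥ 2, let {u_t} be a one-parameter unipotent subgroup of SL(n,ℝ), and let r : ℝ → ℝ⁺ satisfy, for some constants c, δ > 0: (1) t ↦ r(t)/t^{1/n} is non-decreasing; (2) r(t)/t^{(1+δ)/n} → 0; (3) liminf_{t→∞} r(t)·t^{2δ/n}/r(t^{1+2δ}) > c. Then for Haar-almost every Λ ∈ X_n there is a sequence t_k → +∞ with α₁(u_{t_k} Λ) ≥ (c/(n-1))·r(t_k)·t_k^{-2δ/n}. -/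
open MeasureTheory Filter Matrix Real ENNReal

noncomputable section

section Topology

variable {n : ℕ}

instance : IsTopologicalGroup (SLR n) := Matrix.SpecialLinearGroup.topologicalGroup

theorem SLR.isClosedEmbedding_coe :
    Topology.IsClosedEmbedding (fun g : SLR n => (g : Matrix (Fin n) (Fin n) ℝ)) :=
  Matrix.SpecialLinearGroup.isClosedEmbedding_val

theorem SLR.continuous_coe : Continuous (fun g : SLR n => (g : Matrix (Fin n) (Fin n) ℝ)) :=
  SLR.isClosedEmbedding_coe.continuous

instance : PolishSpace (SLR n) :=
  haveI : PolishSpace (Matrix (Fin n) (Fin n) ℝ) :=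
    inferInstanceAs (PolishSpace (Fin n → Fin n → ℝ))
  SLR.isClosedEmbedding_coe.polishSpace

instance : LocallyCompactSpace (SLR n) :=
  haveI : LocallyCompactSpace (Matrix (Fin n) (Fin n) ℝ) :=
    inferInstanceAs (LocallyCompactSpace (Fin n → Fin n → ℝ))
  SLR.isClosedEmbedding_coe.locallyCompactSpace

instance : MeasurableSpace (SLR n) := borel _

instance : BorelSpace (SLR n) := ⟨rfl⟩

instance : BorelSpace (LatticeSpace n) := ⟨rfl⟩

theorem isClosed_latticeGamma : IsClosed (latticeGamma n : Set (SLR n)) := by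
  have h : Topology.IsClosedEmbedding
      (Matrix.SpecialLinearGroup.map (n := Fin n) (Int.castRingHom ℝ)) :=
    Topology.IsClosedEmbedding.specialLinearGroup_map Int.isClosedEmbedding_coe_real
  exact h.isClosed_range

instance : T1Space (LatticeSpace n) :=
  haveI : IsClosed (latticeGamma n : Set (SLR n)) := isClosed_latticeGamma
  inferInstance

theorem measurableSet_latticeSpace_iff {s : Set (LatticeSpace n)} :
    MeasurableSet s ↔ MeasurableSet ((QuotientGroup.mk : SLR n → LatticeSpace n) ⁻¹' s) :=
  ((QuotientGroup.continuous_mk (N := latticeGamma n)).measurable.measurableSet_preimage_iff_of_surjective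
    QuotientGroup.mk_surjective).symm

theorem measurable_latticeSpace_iff {β : Type*} [MeasurableSpace β] {f : LatticeSpace n → β} :
    Measurable f ↔ Measurable (fun g : SLR n => f (QuotientGroup.mk g)) :=
  forall₂_congr fun _ _ => measurableSet_latticeSpace_iff

theorem measurable_smul_latticeSpace :
    Measurable (fun p : SLR n × LatticeSpace n => p.1 • p.2) :=
  continuous_smul.measurable

end Topology

section Uniqueness

variable {n : ℕ}

theorem measurePreserving_smul_of_invariant {μ : Measure (LatticeSpace n)}
    (h : ∀ (g : SLR n) (s : Set (LatticeSpace n)), MeasurableSet s →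
      μ ((fun x => g • x) ⁻¹' s) = μ s) (g : SLR n) :
    MeasurePreserving (fun x : LatticeSpace n => g • x) μ μ := by
  have hm : Measurable (fun x : LatticeSpace n => g • x) := (continuous_const_smul g).measurable
  exact ⟨hm, Measure.ext fun s hs => by rw [Measure.map_apply hm hs, h g s hs]⟩

/-- If almost every translate of a function by each group element agrees with it, then the
function is almost everywhere constant. -/
theorem ae_eq_const_of_forall_smul_ae_eq {μ : Measure (LatticeSpace n)} [SFinite μ] [NeZero μ]
    {f : LatticeSpace n → ℝ≥0∞} (hf : Measurable f)
    (h : ∀ g : SLR n, ∀ᵐ x ∂μ, f (g • x) = f x) : ∃ a, ∀ᵐ x ∂μ, f x = a := by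
  set m : Measure (SLR n) := Measure.haar
  have hD : MeasurableSet {p : SLR n × LatticeSpace n | f (p.1 • p.2) = f p.2} :=
    measurableSet_eq_fun (hf.comp measurable_smul_latticeSpace) (hf.comp measurable_snd)
  have h1 : ∀ᵐ p ∂(m.prod μ), f (p.1 • p.2) = f p.2 := by
    rw [Measure.ae_prod_iff_ae_ae hD]
    exact Eventually.of_forall h
  have h2 : ∀ᵐ x ∂μ, ∀ᵐ g ∂m, f (g • x) = f x := by
    have := (Measure.ae_ae_comm (μ := m) (ν := μ)
      (p := fun g x => f (g • x) = f x) hD).1 (Eventually.of_forall h)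
    exact this
  obtain ⟨x₀, hx₀⟩ := h2.exists
  refine ⟨f x₀, ?_⟩
  have h3 : ∀ x : LatticeSpace n, ∀ᵐ g ∂m, f (g • x) = f x₀ := by
    intro x
    obtain ⟨k, rfl⟩ := MulAction.exists_smul_eq (SLR n) x₀ x
    have := (measure_mul_right_null m (s := {g : SLR n | f (g • x₀) = f x₀}ᶜ) k).2 hx₀
    rw [ae_iff]
    simpa [Set.preimage, mul_smul] using this
  have hE : MeasurableSet {p : SLR n × LatticeSpace n | f (p.1 • p.2) = f x₀} :=
    measurableSet_eq_fun (hf.comp measurable_smul_latticeSpace) measurable_const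
  have h4 : ∀ᵐ g ∂m, ∀ᵐ x ∂μ, f (g • x) = f x₀ :=
    (Measure.ae_ae_comm (μ := m) (ν := μ)
      (p := fun g x => f (g • x) = f x₀) hE).2 (Eventually.of_forall h3)
  obtain ⟨g, hg⟩ := h4.exists
  filter_upwards [hg, h g] with x hx hx' using hx'.symm.trans hx

/-- There is at most one invariant probability measure on the space of lattices. -/
theorem eq_of_invariant {μ ν : Measure (LatticeSpace n)} [IsProbabilityMeasure μ]
    [IsProbabilityMeasure ν]
    (hμ : ∀ g : SLR n, MeasurePreserving (fun x : LatticeSpace n => g • x) μ μ)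
    (hν : ∀ g : SLR n, MeasurePreserving (fun x : LatticeSpace n => g • x) ν ν) : μ = ν := by
  have main : ∀ (μ₁ : Measure (LatticeSpace n)) [IsProbabilityMeasure μ₁],
      (∀ g : SLR n, MeasurePreserving (fun x : LatticeSpace n => g • x) μ₁ μ₁) →
      μ₁ ≪ μ + ν → ∃ a : ℝ≥0∞, μ₁ = a • (μ + ν) := by
    intro μ₁ _ h₁ hac
    have hs : ∀ g : SLR n,
        MeasurePreserving (fun x : LatticeSpace n => g • x) (μ + ν) (μ + ν) := fun g =>
      ⟨(hμ g).measurable, by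
        rw [Measure.map_add _ _ (hμ g).measurable, (hμ g).map_eq, (hν g).map_eq]⟩
    have hf : Measurable (μ₁.rnDeriv (μ + ν)) := Measure.measurable_rnDeriv _ _
    have hd := Measure.withDensity_rnDeriv_eq _ _ hac
    have key : ∀ g : SLR n, ∀ᵐ x ∂(μ + ν),
        μ₁.rnDeriv (μ + ν) (g • x) = μ₁.rnDeriv (μ + ν) x := by
      intro g
      refine ae_eq_of_forall_setLIntegral_eq_of_sigmaFinite (hf.comp (hs g).measurable) hf ?_
      intro s hs' _
      have hst : (fun x : LatticeSpace n => g • x) ⁻¹' ((fun x => g⁻¹ • x) ⁻¹' s) = s := by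
        ext x; simp
      have hms := (hs g⁻¹).measurable hs'
      have e1 := (hs g).setLIntegral_comp_preimage hms hf
      rw [hst] at e1
      rw [e1, ← withDensity_apply _ hms, ← withDensity_apply _ hs', hd,
        (h₁ g⁻¹).measure_preimage hs'.nullMeasurableSet]
    have : NeZero (μ + ν) := ⟨fun h0 => by
      have := congrArg (fun m : Measure (LatticeSpace n) => m Set.univ) h0
      simp at this⟩
    obtain ⟨a, ha⟩ := ae_eq_const_of_forall_smul_ae_eq hf key
    refine ⟨a, ?_⟩
    rw [← withDensity_const]
    refine hd.symm.trans ?_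
    exact withDensity_congr_ae ha
  obtain ⟨a, ha⟩ := main μ hμ (Measure.AbsolutelyContinuous.rfl.add_right ν)
  obtain ⟨b, hb⟩ := main ν hν (by
    rw [add_comm]; exact Measure.AbsolutelyContinuous.rfl.add_right μ)
  have hab : a = b := by
    have h1 := congrArg (fun m : Measure (LatticeSpace n) => m Set.univ) ha
    have h2 := congrArg (fun m : Measure (LatticeSpace n) => m Set.univ) hb
    simp only [measure_univ, Measure.smul_apply, Measure.add_apply, smul_eq_mul] at h1 h2
    have h3 : (1 + 1 : ℝ≥0∞) ≠ 0 := by simp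
    have h4 : (1 + 1 : ℝ≥0∞) ≠ ∞ := by simp
    exact (ENNReal.mul_left_inj h3 h4).1 (h1.symm.trans h2)
  rw [ha, hab]
  exact hb.symm

end Uniqueness

section Hecke

variable {n : ℕ}

theorem vecOf_mul (g h : SLR n) (m : Fin n → ℤ) :
    vecOf n (g * h) m = (g : Matrix (Fin n) (Fin n) ℝ).mulVec (vecOf n h m) := by
  simp [vecOf, Matrix.mulVec_mulVec]

theorem vecOf_map (γ : Matrix.SpecialLinearGroup (Fin n) ℤ) (m : Fin n → ℤ) :
    vecOf n (Matrix.SpecialLinearGroup.map (Int.castRingHom ℝ) γ) m =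
      fun i => (((γ : Matrix (Fin n) (Fin n) ℤ).mulVec m i : ℤ) : ℝ) := by
  ext i
  simp [vecOf, Matrix.mulVec, dotProduct]

/-- Inclusion of lattices of the same covolume forces equality of the corresponding points. -/
theorem mk_eq_of_vecOf_subset {g g' : SLR n}
    (h : ∀ m, ∃ m', vecOf n g m = vecOf n g' m') :
    (QuotientGroup.mk g : LatticeSpace n) = QuotientGroup.mk g' := by
  choose f hf using h
  set A : Matrix (Fin n) (Fin n) ℤ := Matrix.of fun i j => f (Pi.single j 1) i
  have hA : A.map (Int.castRingHom ℝ) =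
      ((g'⁻¹ * g : SLR n) : Matrix (Fin n) (Fin n) ℝ) := by
    ext i j
    have h1 : vecOf n (g'⁻¹ * g) (Pi.single j 1) = fun i => (f (Pi.single j 1) i : ℝ) := by
      rw [vecOf_mul, hf, ← vecOf_mul, inv_mul_cancel]
      simp [vecOf]
    have h2 := congrFun h1 i
    have h3 : (fun k => ((Pi.single j 1 : Fin n → ℤ) k : ℝ)) = Pi.single j 1 := by
      ext k; by_cases hk : k = j <;> simp [hk]
    rw [vecOf, h3, Matrix.mulVec_single_one] at h2
    simpa [A] using h2.symm
  have hdet : A.det = 1 := by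
    have h1 := congrArg Matrix.det hA
    rw [Matrix.SpecialLinearGroup.det_coe, ← RingHom.mapMatrix_apply, ← RingHom.map_det] at h1
    simpa using h1
  refine (QuotientGroup.eq.2 ?_).symm
  exact ⟨⟨A, hdet⟩, Subtype.ext hA⟩

theorem exists_vecOf_eq_of_mk_eq {g g' : SLR n}
    (h : (QuotientGroup.mk g : LatticeSpace n) = QuotientGroup.mk g') (m : Fin n → ℤ)
    (hm : m ≠ 0) : ∃ m', m' ≠ 0 ∧ vecOf n g' m' = vecOf n g m := by
  obtain ⟨γ, hγ⟩ := QuotientGroup.eq.1 h.symm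
  have hg : g = g' * Matrix.SpecialLinearGroup.map (Int.castRingHom ℝ) γ := by
    rw [hγ]; group
  refine ⟨(γ : Matrix (Fin n) (Fin n) ℤ).mulVec m, fun h0 => hm ?_, ?_⟩
  · have h1 : ((γ⁻¹ * γ : Matrix.SpecialLinearGroup (Fin n) ℤ) :
        Matrix (Fin n) (Fin n) ℤ).mulVec m = 0 := by
      rw [Matrix.SpecialLinearGroup.coe_mul, ← Matrix.mulVec_mulVec, h0, Matrix.mulVec_zero]
    simpa using h1
  · rw [hg, vecOf_mul, vecOf_map]
    rfl

theorem intersects_mk {g : SLR n} {A : Set (Fin n → ℝ)} :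
    Intersects n (QuotientGroup.mk g) A ↔ ∃ m : Fin n → ℤ, m ≠ 0 ∧ vecOf n g m ∈ A := by
  refine ⟨fun h => h g rfl, fun ⟨m, hm, hA⟩ g' hg' => ?_⟩
  obtain ⟨m', hm', he⟩ := exists_vecOf_eq_of_mk_eq hg'.symm m hm
  exact ⟨m', hm', he ▸ hA⟩

variable {p : ℕ} [Fact p.Prime]

/-- The pairing of an integer vector with a covector modulo `p`. -/
def modPairing (a : Fin n → ZMod p) (m : Fin n → ℤ) : ZMod p := a ⬝ᵥ fun i => (m i : ZMod p)

theorem exists_matrix_range_eq_ker {a : Fin n → ZMod p} (ha : a ≠ 0) :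
    ∃ H : Matrix (Fin n) (Fin n) ℤ, H.det = p ∧
      ∀ m, (∃ k, H.mulVec k = m) ↔ modPairing a m = 0 := by
  obtain ⟨i, hi⟩ := Function.ne_iff.1 ha
  replace hi : a i ≠ 0 := hi
  set b : Fin n → ℤ := fun j => if j = i then (p : ℤ) else -(((a i)⁻¹ * a j).val : ℤ) with hb
  have hbi : b i = p := by simp [hb]
  have hbj : ∀ j, j ≠ i → a i * ((b j : ℤ) : ZMod p) = - a j := by
    intro j hj
    have h1 : ((((a i)⁻¹ * a j).val : ℕ) : ZMod p) = (a i)⁻¹ * a j := ZMod.natCast_zmod_val _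
    simp only [hb, hj, if_false, Int.cast_neg, Int.cast_natCast]
    rw [h1]
    field_simp
  have hmul : ∀ k : Fin n → ℤ, (Matrix.updateRow 1 i b).mulVec k =
      Function.update k i (b ⬝ᵥ k) := by
    intro k
    ext j
    by_cases hj : j = i
    · subst hj; simp [Matrix.mulVec]
    · simp [Matrix.mulVec, hj, Matrix.one_apply, dotProduct]
  have hsplit : ∀ m : Fin n → ℤ, modPairing a m = a i * (m i : ZMod p) +
      ∑ j ∈ Finset.univ.erase i, a j * (m j : ZMod p) := fun m =>
    (Finset.add_sum_erase _ _ (Finset.mem_univ i)).symm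
  have hbsplit : ∀ k : Fin n → ℤ, b ⬝ᵥ k = p * k i + ∑ j ∈ Finset.univ.erase i, b j * k j :=
    fun k => by
      rw [← hbi]
      exact (Finset.add_sum_erase _ _ (Finset.mem_univ i)).symm
  have hsum : ∀ k : Fin n → ℤ, a i * ((∑ j ∈ Finset.univ.erase i, b j * k j : ℤ) : ZMod p) =
      -∑ j ∈ Finset.univ.erase i, a j * (k j : ZMod p) := by
    intro k
    push_cast
    rw [Finset.mul_sum, ← Finset.sum_neg_distrib]
    refine Finset.sum_congr rfl fun j hj => ?_
    rw [← mul_assoc, hbj j (Finset.ne_of_mem_erase hj), neg_mul]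
  refine ⟨Matrix.updateRow 1 i b, ?_, fun m => ⟨?_, fun hm => ?_⟩⟩
  · rw [← Matrix.det_transpose, ← Matrix.updateCol_transpose, Matrix.transpose_one,
      ← Matrix.cramer_apply, Matrix.cramer_one]
    simpa using hbi
  · rintro ⟨k, rfl⟩
    rw [hmul, hsplit, Function.update_self, hbsplit]
    have h1 : ∑ j ∈ Finset.univ.erase i, a j * ((Function.update k i
        ((p : ℤ) * k i + ∑ j ∈ Finset.univ.erase i, b j * k j) j : ℤ) : ZMod p) =
        ∑ j ∈ Finset.univ.erase i, a j * (k j : ZMod p) :=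
      Finset.sum_congr rfl fun j hj => by rw [Function.update_of_ne (Finset.ne_of_mem_erase hj)]
    rw [h1, Int.cast_add, mul_add, hsum]
    simp
  · have h1 : a i * ((m i - ∑ j ∈ Finset.univ.erase i, b j * m j : ℤ) : ZMod p) = 0 := by
      rw [Int.cast_sub, mul_sub, hsum, sub_neg_eq_add, ← hsplit, hm]
    have h2 := (mul_eq_zero.1 h1).resolve_left hi
    rw [ZMod.intCast_zmod_eq_zero_iff_dvd] at h2
    obtain ⟨t, ht⟩ := h2
    refine ⟨Function.update m i t, ?_⟩
    rw [hmul, hbsplit]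
    have h3 : ∑ j ∈ Finset.univ.erase i, b j * Function.update m i t j =
        ∑ j ∈ Finset.univ.erase i, b j * m j :=
      Finset.sum_congr rfl fun j hj => by rw [Function.update_of_ne (Finset.ne_of_mem_erase hj)]
    rw [h3, Function.update_self, ← ht]
    simp

/-- The sublattice of index `p` cut out by a covector modulo `p`, rescaled to covolume one. -/
theorem exists_vecOf_eq_smul (a : {a : Fin n → ZMod p // a ≠ 0}) :
    ∃ h : SLR n, (∀ m, ∃ k, modPairing a.1 k = 0 ∧
        vecOf n h m = ((p : ℝ) ^ (-(1 : ℝ) / n)) • fun i => (k i : ℝ)) ∧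
      ∀ k, modPairing a.1 k = 0 →
        ∃ m, vecOf n h m = ((p : ℝ) ^ (-(1 : ℝ) / n)) • fun i => (k i : ℝ) := by
  have hn : n ≠ 0 := by
    rintro rfl
    exact a.2 (Subsingleton.elim _ _)
  obtain ⟨H, hH, hk⟩ := exists_matrix_range_eq_ker a.2
  set q : ℝ := (p : ℝ) ^ (-(1 : ℝ) / n) with hq
  have hp : (0 : ℝ) < p := mod_cast (Fact.out : p.Prime).pos
  have hqn : q ^ n = (p : ℝ)⁻¹ := by
    rw [hq, ← Real.rpow_natCast, ← Real.rpow_mul hp.le, div_mul_cancel₀ _ (by exact_mod_cast hn),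
      Real.rpow_neg_one]
  have hdet : (q • H.map (Int.castRingHom ℝ)).det = 1 := by
    rw [Matrix.det_smul, Fintype.card_fin, hqn, ← RingHom.mapMatrix_apply, ← RingHom.map_det, hH]
    simp [hp.ne']
  have hv : ∀ m : Fin n → ℤ, vecOf n ⟨_, hdet⟩ m = q • fun i => ((H.mulVec m i : ℤ) : ℝ) := by
    intro m
    ext i
    simp [vecOf, Matrix.mulVec, dotProduct, Finset.mul_sum, mul_assoc]
  refine ⟨⟨_, hdet⟩, fun m => ⟨H.mulVec m, (hk _).1 ⟨m, rfl⟩, hv m⟩, fun k hk0 => ?_⟩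
  obtain ⟨m, rfl⟩ := (hk k).2 hk0
  exact ⟨m, hv m⟩

/-- A matrix whose lattice is the rescaled sublattice cut out by a covector modulo `p`. -/
def heckeElt (a : {a : Fin n → ZMod p // a ≠ 0}) : SLR n := (exists_vecOf_eq_smul a).choose

theorem exists_modPairing_eq_zero (a : {a : Fin n → ZMod p // a ≠ 0}) (m : Fin n → ℤ) :
    ∃ k, modPairing a.1 k = 0 ∧
        vecOf n (heckeElt a) m = ((p : ℝ) ^ (-(1 : ℝ) / n)) • fun i => (k i : ℝ) :=
  (exists_vecOf_eq_smul a).choose_spec.1 m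

theorem exists_vecOf_heckeElt (a : {a : Fin n → ZMod p // a ≠ 0}) {k : Fin n → ℤ}
    (hk : modPairing a.1 k = 0) :
    ∃ m, vecOf n (heckeElt a) m = ((p : ℝ) ^ (-(1 : ℝ) / n)) • fun i => (k i : ℝ) :=
  (exists_vecOf_eq_smul a).choose_spec.2 k hk

/-- The action of `SL(n, ℤ)` on covectors modulo `p`. -/
def covectorAct (γ : Matrix.SpecialLinearGroup (Fin n) ℤ) (a : Fin n → ZMod p) : Fin n → ZMod p :=
  a ᵥ* ((γ⁻¹ : Matrix.SpecialLinearGroup (Fin n) ℤ) : Matrix (Fin n) (Fin n) ℤ).map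
    (Int.castRingHom (ZMod p))

theorem covectorAct_inv_covectorAct (γ : Matrix.SpecialLinearGroup (Fin n) ℤ)
    (a : Fin n → ZMod p) : covectorAct γ⁻¹ (covectorAct γ a) = a := by
  rw [covectorAct, covectorAct, Matrix.vecMul_vecMul, ← Matrix.map_mul,
    ← Matrix.SpecialLinearGroup.coe_mul]
  simp

theorem modPairing_covectorAct (γ : Matrix.SpecialLinearGroup (Fin n) ℤ)
    (a : Fin n → ZMod p) (m : Fin n → ℤ) :
    modPairing (covectorAct γ a) ((γ : Matrix (Fin n) (Fin n) ℤ).mulVec m) = modPairing a m := by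
  have h1 : (fun i => (((γ : Matrix (Fin n) (Fin n) ℤ).mulVec m i : ℤ) : ZMod p)) =
      ((γ : Matrix (Fin n) (Fin n) ℤ).map (Int.castRingHom (ZMod p))).mulVec
        fun i => (m i : ZMod p) := by
    ext i
    simp [Matrix.mulVec, dotProduct]
  rw [modPairing, h1, covectorAct, ← Matrix.dotProduct_mulVec, Matrix.mulVec_mulVec,
    ← Matrix.map_mul, ← Matrix.SpecialLinearGroup.coe_mul]
  simp [modPairing]

/-- `SL(n, ℤ)` permutes the rescaled sublattices of index `p`. -/
theorem map_smul_mk_heckeElt (γ : Matrix.SpecialLinearGroup (Fin n) ℤ)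
    (a b : {a : Fin n → ZMod p // a ≠ 0}) (hb : b.1 = covectorAct γ a.1) :
    (QuotientGroup.mk (Matrix.SpecialLinearGroup.map (Int.castRingHom ℝ) γ * heckeElt a) :
      LatticeSpace n) = QuotientGroup.mk (heckeElt b) := by
  refine mk_eq_of_vecOf_subset fun m => ?_
  obtain ⟨k, hk, hkm⟩ := exists_modPairing_eq_zero a m
  obtain ⟨m', hm'⟩ := exists_vecOf_heckeElt b (k := (γ : Matrix (Fin n) (Fin n) ℤ).mulVec k)
    (by rw [hb, modPairing_covectorAct, hk])
  refine ⟨m', ?_⟩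
  rw [vecOf_mul, hkm, hm', Matrix.mulVec_smul, ← vecOf_map]
  rfl

/-- The normalized counting measure on the rescaled sublattices of index `p` of a lattice. -/
def heckeMeasure (p : ℕ) [Fact p.Prime] (x : LatticeSpace n) : Measure (LatticeSpace n) :=
  ((Fintype.card {a : Fin n → ZMod p // a ≠ 0} : ℝ≥0∞))⁻¹ •
    ∑ a : {a : Fin n → ZMod p // a ≠ 0}, Measure.dirac (QuotientGroup.mk (x.out * heckeElt a))

theorem heckeMeasure_mk (g : SLR n) :
    heckeMeasure p (QuotientGroup.mk g : LatticeSpace n) =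
      ((Fintype.card {a : Fin n → ZMod p // a ≠ 0} : ℝ≥0∞))⁻¹ •
        ∑ a : {a : Fin n → ZMod p // a ≠ 0},
          Measure.dirac (QuotientGroup.mk (g * heckeElt a)) := by
  rw [heckeMeasure]
  congr 1
  obtain ⟨γ, hγ⟩ := QuotientGroup.eq.1 (QuotientGroup.out_eq' (QuotientGroup.mk g :
    LatticeSpace n)).symm
  set o := (QuotientGroup.mk g : LatticeSpace n).out
  have ho : o = g * Matrix.SpecialLinearGroup.map (Int.castRingHom ℝ) γ := by
    rw [hγ]; group
  have hne : ∀ a : {a : Fin n → ZMod p // a ≠ 0}, covectorAct γ a.1 ≠ 0 := fun a h0 =>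
    a.2 (by rw [← covectorAct_inv_covectorAct γ a.1, h0, covectorAct, Matrix.zero_vecMul])
  have hinj : Function.Injective (fun a : {a : Fin n → ZMod p // a ≠ 0} =>
      (⟨covectorAct γ a.1, hne a⟩ : {a : Fin n → ZMod p // a ≠ 0})) := fun a b hab => by
    have := congrArg (fun a => covectorAct γ⁻¹ a.1) hab
    simp only [covectorAct_inv_covectorAct] at this
    exact Subtype.ext this
  refine Fintype.sum_bijective _ (Finite.injective_iff_bijective.1 hinj) _ _ fun a => ?_
  congr 1
  have h1 := congrArg (fun y : LatticeSpace n => g • y) 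
    (map_smul_mk_heckeElt γ a ⟨covectorAct γ a.1, hne a⟩ rfl)
  rw [ho, mul_assoc]
  exact h1

theorem heckeMeasure_smul (g : SLR n) (x : LatticeSpace n) :
    heckeMeasure p (g • x) = (heckeMeasure p x).map (g • ·) := by
  obtain ⟨h, rfl⟩ := QuotientGroup.mk_surjective x
  have hm : Measurable (fun x : LatticeSpace n => g • x) := (continuous_const_smul g).measurable
  change heckeMeasure p (QuotientGroup.mk (g * h)) = _
  rw [heckeMeasure_mk, heckeMeasure_mk, Measure.map_smul, Measure.map_finset_sum hm.aemeasurable]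
  simp only [Measure.map_dirac' hm, mul_assoc]
  rfl

theorem measurable_heckeMeasure : Measurable (heckeMeasure p : LatticeSpace n → _) := by
  rw [measurable_latticeSpace_iff]
  simp_rw [heckeMeasure_mk]
  refine Measure.measurable_of_measurable_coe _ fun s hs => ?_
  simp only [Measure.smul_apply, Measure.finsetSum_apply, smul_eq_mul]
  refine Measurable.const_mul (Finset.measurable_sum _ fun a _ => ?_) _
  have : Measurable fun g : SLR n => (QuotientGroup.mk (g * heckeElt a) : LatticeSpace n) :=
    (QuotientGroup.continuous_mk.comp (continuous_mul_const _)).measurable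
  exact (Measure.measurable_coe hs).comp (Measure.measurable_dirac.comp this)

instance [NeZero n] (x : LatticeSpace n) : IsProbabilityMeasure (heckeMeasure p x) := by
  have hcard : (Fintype.card {a : Fin n → ZMod p // a ≠ 0} : ℝ≥0∞) ≠ 0 := by
    have : Nonempty {a : Fin n → ZMod p // a ≠ 0} :=
      ⟨⟨fun _ => 1, fun h => one_ne_zero (congrFun h 0)⟩⟩
    exact_mod_cast Fintype.card_ne_zero
  refine ⟨?_⟩
  rw [heckeMeasure, Measure.smul_apply, Measure.finsetSum_apply]
  simp only [measure_univ, Finset.sum_const, Finset.card_univ, nsmul_eq_mul, mul_one,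
    smul_eq_mul]
  exact ENNReal.inv_mul_cancel hcard (ENNReal.natCast_ne_top _)

/-- An invariant probability measure is preserved by averaging over sublattices of index `p`. -/
theorem lintegral_heckeMeasure [NeZero n] {μ : Measure (LatticeSpace n)} [IsProbabilityMeasure μ]
    (hμ : ∀ g : SLR n, MeasurePreserving (fun x : LatticeSpace n => g • x) μ μ)
    {s : Set (LatticeSpace n)} (hs : MeasurableSet s) :
    ∫⁻ x, heckeMeasure p x s ∂μ = μ s := by
  have hk := measurable_heckeMeasure (n := n) (p := p)
  have hprob : IsProbabilityMeasure (μ.bind (heckeMeasure p)) := by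
    refine ⟨?_⟩
    rw [Measure.bind_apply MeasurableSet.univ hk.aemeasurable]
    simp
  have hinv : ∀ g : SLR n, MeasurePreserving (fun x : LatticeSpace n => g • x)
      (μ.bind (heckeMeasure p)) (μ.bind (heckeMeasure p)) := by
    refine measurePreserving_smul_of_invariant fun g t ht => ?_
    have hm : Measurable (fun x : LatticeSpace n => g • x) := (continuous_const_smul g).measurable
    rw [Measure.bind_apply ht hk.aemeasurable, Measure.bind_apply (hm ht) hk.aemeasurable,
      ← (hμ g).lintegral_comp (f := fun x => heckeMeasure p x t)
        ((Measure.measurable_coe ht).comp hk)]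
    simp_rw [heckeMeasure_smul, Measure.map_apply hm ht]
  rw [← Measure.bind_apply hs hk.aemeasurable, eq_of_invariant hinv hμ]

end Hecke

section SecondMoment

variable {n p : ℕ} [Fact p.Prime]

theorem card_fiber_zero_mul_card {G H : Type*} [AddCommGroup G] [AddCommGroup H] [Fintype G]
    [Fintype H] [DecidableEq H] (f : G →+ H) (hf : Function.Surjective f) :
    (Finset.univ.filter fun a => f a = 0).card * Fintype.card H = Fintype.card G := by
  have h1 := AddSubgroup.card_mul_index f.ker
  rw [AddSubgroup.index_ker, AddMonoidHom.range_eq_top.2 hf, AddSubgroup.card_top,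
    Nat.card_eq_fintype_card, Nat.card_eq_fintype_card, Nat.card_eq_fintype_card] at h1
  rw [← h1, Fintype.card_subtype]
  simp [AddMonoidHom.mem_ker]

/-- `modPairing` as an additive map in the covector. -/
def modPairingHom (p : ℕ) [Fact p.Prime] (m : Fin n → ℤ) : (Fin n → ZMod p) →+ ZMod p where
  toFun a := modPairing a m
  map_zero' := by simp [modPairing]
  map_add' a b := by simp [modPairing, add_dotProduct]

theorem card_modPairing_eq_zero {m : Fin n → ℤ} (hm : ∃ i, (m i : ZMod p) ≠ 0) :
    ((Finset.univ.filter fun a : Fin n → ZMod p => modPairing a m = 0).card : ℝ) * p =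
      (p : ℝ) ^ n := by
  obtain ⟨i, hi⟩ := hm
  have h1 := card_fiber_zero_mul_card (modPairingHom p m) fun y => by
    refine ⟨Pi.single i (y / m i), ?_⟩
    simp [modPairingHom, modPairing, div_mul_cancel₀ _ hi]
  simp only [ZMod.card, Fintype.card_fun, Fintype.card_fin] at h1
  exact_mod_cast h1

theorem card_modPairing_eq_zero_and {m m' : Fin n → ℤ}
    (hm : ∃ i j, ((m i * m' j - m j * m' i : ℤ) : ZMod p) ≠ 0) :
    ((Finset.univ.filter fun a : Fin n → ZMod p =>
      modPairing a m = 0 ∧ modPairing a m' = 0).card : ℝ) * (p * p) = (p : ℝ) ^ n := by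
  obtain ⟨i, j, hD⟩ := hm
  push_cast at hD
  have h1 := card_fiber_zero_mul_card ((modPairingHom p m).prod (modPairingHom p m')) fun y => by
    refine ⟨Pi.single i ((y.1 * m' j - y.2 * m j) / (m i * m' j - m j * m' i)) +
      Pi.single j ((y.2 * m i - y.1 * m' i) / (m i * m' j - m j * m' i)), ?_⟩
    ext
    · simp [modPairingHom, modPairing, add_dotProduct]
      rw [div_mul_eq_mul_div, div_mul_eq_mul_div, ← add_div, div_eq_iff hD]
      ring
    · simp [modPairingHom, modPairing, add_dotProduct]
      rw [div_mul_eq_mul_div, div_mul_eq_mul_div, ← add_div, div_eq_iff hD]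
      ring
  simp only [ZMod.card, Fintype.card_fun, Fintype.card_fin, Fintype.card_prod,
    AddMonoidHom.prod_apply, Prod.mk_eq_zero] at h1
  exact_mod_cast h1

/-- Second moment bound: few covectors modulo `p` annihilate no element of a set of pairwise
independent vectors. -/
theorem card_forall_modPairing_ne_zero_mul_card_le {S : Finset (Fin n → ℤ)}
    (h0 : ∀ m ∈ S, ∃ i, (m i : ZMod p) ≠ 0)
    (h : ∀ m ∈ S, ∀ m' ∈ S, m ≠ m' → ∃ i j, ((m i * m' j - m j * m' i : ℤ) : ZMod p) ≠ 0) :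
    ((Finset.univ.filter fun a : Fin n → ZMod p => ∀ m ∈ S, modPairing a m ≠ 0).card : ℝ) *
      S.card ≤ (p : ℝ) ^ (n + 1) := by
  classical
  have hp : (0 : ℝ) < p := mod_cast (Fact.out : p.Prime).pos
  set z : (Fin n → ZMod p) → (Fin n → ℤ) → ℝ := fun a m => if modPairing a m = 0 then 1 else 0
    with hz
  set P : ℝ := (p : ℝ) ^ n with hP
  have hPpos : 0 < P := by positivity
  set s : ℝ := (S.card : ℝ) with hs
  have hs0 : 0 ≤ s := Nat.cast_nonneg _
  have e1 : ∀ m ∈ S, ∑ a, z a m = P / p := fun m hm => by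
    rw [eq_div_iff hp.ne', hP, ← card_modPairing_eq_zero (h0 m hm)]
    simp [hz, Finset.sum_boole]
  have e2 : ∀ m ∈ S, ∀ m' ∈ S, ∑ a, z a m * z a m' ≤ P / p ^ 2 + if m = m' then P / p else 0 := by
    intro m hm m' hm'
    by_cases hmm : m = m'
    · subst hmm
      have : ∀ a, z a m * z a m = z a m := fun a => by simp only [hz]; split_ifs <;> simp
      simp only [this, if_true, e1 m hm]
      have : 0 ≤ P / p ^ 2 := by positivity
      linarith
    · have h2 := card_modPairing_eq_zero_and (h m hm m' hm' hmm)
      have : ∀ a, z a m * z a m' = if modPairing a m = 0 ∧ modPairing a m' = 0 then 1 else 0 :=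
        fun a => by simp only [hz]; split_ifs <;> simp_all
      simp only [this, hmm, if_false, add_zero, Finset.sum_boole]
      rw [le_div_iff₀ (by positivity), pow_two, h2]
  have e3 : ∑ a, (∑ m ∈ S, z a m - s / p) ^ 2 ≤ s * P / p := by
    have h3 : ∀ a, (∑ m ∈ S, z a m - s / p) ^ 2 =
        ∑ m ∈ S, ∑ m' ∈ S, z a m * z a m' - 2 * (s / p) * ∑ m ∈ S, z a m + (s / p) ^ 2 := by
      intro a
      rw [← Finset.sum_mul_sum]; ring
    rw [Finset.sum_congr rfl fun a _ => h3 a, Finset.sum_add_distrib, Finset.sum_sub_distrib,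
      ← Finset.mul_sum]
    have h4 : ∑ a, ∑ m ∈ S, ∑ m' ∈ S, z a m * z a m' ≤ s * (s * (P / p ^ 2) + P / p) := by
      rw [Finset.sum_comm]
      calc _ ≤ ∑ m ∈ S, (s * (P / p ^ 2) + P / p) := ?_
        _ = _ := by simp [hs, mul_add]
      refine Finset.sum_le_sum fun m hm => ?_
      rw [Finset.sum_comm]
      refine (Finset.sum_le_sum fun m' hm' => e2 m hm m' hm').trans_eq ?_
      rw [Finset.sum_add_distrib, Finset.sum_ite_eq, if_pos hm]
      simp [hs]
    have h5 : ∑ a, ∑ m ∈ S, z a m = s * (P / p) := by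
      rw [Finset.sum_comm, Finset.sum_congr rfl e1]; simp [hs]
    have h6 : ∑ _a : Fin n → ZMod p, (s / p) ^ 2 = P * (s / p) ^ 2 := by simp [hP]
    rw [h5, h6]
    calc _ ≤ s * (s * (P / p ^ 2) + P / p) - 2 * (s / p) * (s * (P / p)) + P * (s / p) ^ 2 := by
          linarith only [h4]
      _ = s * P / p := by field_simp; ring
  set B := Finset.univ.filter fun a : Fin n → ZMod p => ∀ m ∈ S, modPairing a m ≠ 0 with hB
  have e4 : (B.card : ℝ) * (s / p) ^ 2 ≤ s * P / p := by
    refine le_trans ?_ e3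
    refine le_trans (le_of_eq ?_)
      (Finset.sum_le_sum_of_subset_of_nonneg (Finset.subset_univ B) fun _ _ _ => sq_nonneg _)
    rw [Finset.sum_congr rfl (g := fun _ => (s / p) ^ 2), Finset.sum_const, nsmul_eq_mul]
    intro a ha
    have : ∑ m ∈ S, z a m = 0 := Finset.sum_eq_zero fun m hm => by
      simp [hz, (Finset.mem_filter.1 ha).2 m hm]
    rw [this]; ring
  rcases hs0.eq_or_lt with h7 | h7
  · rw [← h7, mul_zero]; positivity
  · have h8 : (B.card : ℝ) * (s / p) ^ 2 = (B.card * s) * (s / p ^ 2) := by ring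
    have h9 : s * P / p = (p ^ (n + 1)) * (s / p ^ 2) := by rw [hP]; field_simp; ring
    rw [h8, h9] at e4
    exact le_of_mul_le_mul_right e4 (by positivity)

end SecondMoment

section Counting

variable {n : ℕ}

/-- The integer points of the dilate of a set by a positive number. -/
def intPoints (B : Set (Fin n → ℝ)) (x : ℝ) : Set (Fin n → ℤ) :=
  {m | (x⁻¹ • fun i => (m i : ℝ)) ∈ B}

/-- An integer vector which is not a proper multiple of another one. -/
def IsPrimitiveVec (m : Fin n → ℤ) : Prop := ∀ (d : ℕ) (k : Fin n → ℤ), m = (d : ℤ) • k → d = 1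

theorem IsPrimitiveVec.ne_zero {m : Fin n → ℤ} (hm : IsPrimitiveVec m) : m ≠ 0 := fun h =>
  zero_ne_one (hm 0 0 (by simpa using h))

theorem abs_le_of_mem_intPoints {B : Set (Fin n → ℝ)} {R x : ℝ} (hB : ∀ v ∈ B, ‖v‖ ≤ R)
    (hx : 0 < x) {m : Fin n → ℤ} (hm : m ∈ intPoints B x) (i : Fin n) : |(m i : ℝ)| ≤ R * x := by
  have h1 := (norm_le_pi_norm _ i).trans (hB _ hm)
  rw [Pi.smul_apply, smul_eq_mul, norm_mul, norm_inv, Real.norm_eq_abs, Real.norm_eq_abs,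
    abs_of_pos hx, inv_mul_le_iff₀ hx] at h1
  linarith

theorem finite_intPoints {B : Set (Fin n → ℝ)} {R x : ℝ} (hB : ∀ v ∈ B, ‖v‖ ≤ R)
    (hx : 0 < x) : (intPoints B x).Finite := by
  refine (Set.finite_Icc (fun _ => -⌈R * x⌉) (fun _ => ⌈R * x⌉)).subset fun m hm => ?_
  have h1 : ∀ i, |m i| ≤ ⌈R * x⌉ := fun i => by
    have := (abs_le_of_mem_intPoints hB hx hm i).trans (Int.le_ceil _)
    exact_mod_cast this
  exact ⟨fun i => (abs_le.1 (h1 i)).1, fun i => (abs_le.1 (h1 i)).2⟩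

theorem intPoints_mono {B : Set (Fin n → ℝ)}
    (hstar : ∀ v ∈ B, ∀ s : ℝ, 0 < s → s ≤ 1 → s • v ∈ B) {x y : ℝ} (hx : 0 < x) (hxy : x ≤ y) :
    intPoints B x ⊆ intPoints B y := fun m hm => by
  have hy := hx.trans_le hxy
  have h1 := hstar _ hm (x / y) (by positivity) ((div_le_one hy).2 hxy)
  rw [smul_smul, div_mul_eq_mul_div, mul_inv_cancel₀ hx.ne', one_div] at h1
  exact h1

theorem ne_zero_of_mem_intPoints {B : Set (Fin n → ℝ)} {x : ℝ} (h0 : (0 : Fin n → ℝ) ∉ B)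
    {m : Fin n → ℤ} (hm : m ∈ intPoints B x) : m ≠ 0 := by
  rintro rfl
  have h1 : (x⁻¹ • fun i => (((0 : Fin n → ℤ) i : ℤ) : ℝ)) = 0 := by ext i; simp
  exact h0 (h1 ▸ hm)

theorem intPoints_eq_empty {B : Set (Fin n → ℝ)} {R x : ℝ} (hB : ∀ v ∈ B, ‖v‖ ≤ R)
    (h0 : (0 : Fin n → ℝ) ∉ B) (hx : 0 < x) (hRx : R * x < 1) : intPoints B x = ∅ := by
  refine Set.eq_empty_of_forall_notMem fun m hm => ?_
  have h1 : m = 0 := by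
    ext i
    have h2 : |(m i : ℝ)| < 1 := (abs_le_of_mem_intPoints hB hx hm i).trans_lt hRx
    have h3 : |m i| < 1 := by exact_mod_cast h2
    simpa using Int.abs_lt_one_iff.1 h3
  exact ne_zero_of_mem_intPoints h0 hm h1

open scoped Pointwise in
theorem tendsto_ncard_intPoints {B : Set (Fin n → ℝ)} {R : ℝ} (hB : ∀ v ∈ B, ‖v‖ ≤ R)
    (hmeas : MeasurableSet B) (hfr : volume (frontier B) = 0)
    (hstar : ∀ v ∈ B, ∀ s : ℝ, 0 < s → s ≤ 1 → s • v ∈ B) :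
    Tendsto (fun x : ℝ => ((intPoints B x).ncard : ℝ) / x ^ n) atTop (nhds (volume.real B)) := by
  have h1 := tendsto_card_div_pow_atTop_volume' B
    (isBounded_iff_forall_norm_le.2 ⟨R, hB⟩) hmeas hfr (by
      rintro x y hx hxy _ ⟨v, hv, rfl⟩
      have hy := hx.trans_le hxy
      refine ⟨(x / y) • v, hstar v hv _ (by positivity) ((div_le_one hy).2 hxy), ?_⟩
      change y • (x / y) • v = x • v
      rw [smul_smul, mul_div_cancel₀ _ hy.ne'])
  refine h1.congr' ?_
  filter_upwards [eventually_gt_atTop 0] with x hx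
  rw [Fintype.card_fin, ← Nat.card_coe_set_eq]
  symm
  have hinj : Function.Injective fun m : Fin n → ℤ => (x⁻¹ • fun i => (m i : ℝ)) := by
    intro m m' h
    have h2 := smul_right_injective (Fin n → ℝ) (inv_ne_zero hx.ne') h
    ext i
    exact_mod_cast congrFun h2 i
  have himg : (fun m : Fin n → ℤ => (x⁻¹ • fun i => (m i : ℝ))) '' intPoints B x =
      B ∩ x⁻¹ • (Submodule.span ℤ (Set.range (Pi.basisFun ℝ (Fin n))) : Set (Fin n → ℝ)) := by
    ext v
    constructor
    · rintro ⟨m, hm, rfl⟩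
      refine ⟨hm, _, ?_, rfl⟩
      rw [SetLike.mem_coe, Module.Basis.mem_span_iff_repr_mem]
      exact fun i => ⟨m i, by simp⟩
    · rintro ⟨hv, w, hw, rfl⟩
      rw [SetLike.mem_coe, Module.Basis.mem_span_iff_repr_mem] at hw
      choose m hm using hw
      have hmw : (fun i => (m i : ℝ)) = w := by
        ext i; simpa using hm i
      subst hmw
      exact ⟨m, hv, rfl⟩
  rw [← himg, Nat.card_image_of_injective hinj]

theorem exists_ncard_intPoints_le {B : Set (Fin n → ℝ)} {R : ℝ} (hB : ∀ v ∈ B, ‖v‖ ≤ R)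
    (hR : 0 < R) (h0 : (0 : Fin n → ℝ) ∉ B)
    (hmeas : MeasurableSet B) (hfr : volume (frontier B) = 0)
    (hstar : ∀ v ∈ B, ∀ s : ℝ, 0 < s → s ≤ 1 → s • v ∈ B) :
    ∃ C : ℝ, 0 ≤ C ∧ ∀ x, 0 < x → ((intPoints B x).ncard : ℝ) ≤ C * x ^ n := by
  obtain ⟨Y, hY⟩ := (((tendsto_ncard_intPoints hB hmeas hfr hstar).eventually
    (gt_mem_nhds (lt_add_one _))).and (eventually_gt_atTop (0 : ℝ))).exists_forall_of_atTop
  have hY0 := (hY Y le_rfl).2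
  have hV : (0 : ℝ) ≤ volume.real B := measureReal_nonneg
  refine ⟨volume.real B + 1 + (intPoints B Y).ncard * R ^ n, by positivity, fun x hx => ?_⟩
  rcases le_total Y x with h | h
  · have h1 := (hY x h).1
    rw [div_lt_iff₀ (by positivity)] at h1
    refine h1.le.trans ?_
    gcongr ?_ * _
    have : 0 ≤ ((intPoints B Y).ncard : ℝ) * R ^ n := by positivity
    linarith
  · rcases lt_or_ge (R * x) 1 with h2 | h2
    · rw [intPoints_eq_empty hB h0 hx h2]
      simp only [Set.ncard_empty, Nat.cast_zero]
      positivity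
    · have h3 : ((intPoints B x).ncard : ℝ) ≤ (intPoints B Y).ncard := by
        exact_mod_cast Set.ncard_le_ncard (intPoints_mono hstar hx h) (finite_intPoints hB hY0)
      have h4 : 1 ≤ R ^ n * x ^ n := by rw [← mul_pow]; exact one_le_pow₀ h2
      calc ((intPoints B x).ncard : ℝ) ≤ (intPoints B Y).ncard * (R ^ n * x ^ n) :=
            h3.trans (le_mul_of_one_le_right (Nat.cast_nonneg _) h4)
        _ = ((intPoints B Y).ncard * R ^ n) * x ^ n := by ring
        _ ≤ _ := by gcongr ?_ * _; linarith

theorem ncard_intPoints_le {B : Set (Fin n → ℝ)} {R : ℝ} (hB : ∀ v ∈ B, ‖v‖ ≤ R)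
    (h0 : (0 : Fin n → ℝ) ∉ B) {x : ℝ} (hx : 0 < x)
    (hs : Summable fun d : ℕ => ((intPoints B (x / (d + 2 : ℕ))).ncard : ℝ)) :
    ((intPoints B x).ncard : ℝ) ≤ ({m ∈ intPoints B x | IsPrimitiveVec m}.ncard : ℝ) +
      ∑' d : ℕ, ((intPoints B (x / (d + 2 : ℕ))).ncard : ℝ) := by
  obtain ⟨D, hD⟩ := exists_nat_gt (R * x)
  have hsub : intPoints B x ⊆ {m ∈ intPoints B x | IsPrimitiveVec m} ∪
      ⋃ d ∈ Finset.range D, (fun k => ((d + 2 : ℕ) : ℤ) • k) '' intPoints B (x / (d + 2 : ℕ)) := by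
    intro m hm
    by_cases hp : IsPrimitiveVec m
    · exact Or.inl ⟨hm, hp⟩
    · right
      simp only [IsPrimitiveVec, not_forall] at hp
      obtain ⟨d, k, hmk, hd⟩ := hp
      have hm0 : m ≠ 0 := ne_zero_of_mem_intPoints h0 hm
      have hd0 : d ≠ 0 := by
        rintro rfl
        exact hm0 (by simpa using hmk)
      obtain ⟨e, rfl⟩ : ∃ e, d = e + 2 := ⟨d - 2, by omega⟩
      have hk : k ∈ intPoints B (x / (e + 2 : ℕ)) := by
        have : ((x / (e + 2 : ℕ))⁻¹ • fun i => (k i : ℝ)) = x⁻¹ • fun i => (m i : ℝ) := by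
          ext i
          simp only [hmk, Pi.smul_apply, smul_eq_mul]
          push_cast
          field_simp
        change _ ∈ B
        rw [this]
        exact hm
      have hpos : (0 : ℝ) < (e + 2 : ℕ) := by positivity
      have heD : e < D := by
        by_contra hcon
        have h1 : R * (x / (e + 2 : ℕ)) < 1 := by
          rw [← mul_div_assoc, div_lt_one hpos]
          refine hD.trans_le ?_
          exact_mod_cast (by omega : D ≤ e + 2)
        rw [intPoints_eq_empty hB h0 (by positivity) h1] at hk
        exact hk
      simp only [Set.mem_iUnion]
      exact ⟨e, Finset.mem_range.2 heD, k, hk, hmk.symm⟩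
  have hfin : ∀ d : ℕ, (intPoints B (x / (d + 2 : ℕ))).Finite := fun d =>
    finite_intPoints hB (by positivity)
  have h1 : (intPoints B x).ncard ≤ {m ∈ intPoints B x | IsPrimitiveVec m}.ncard +
      ∑ d ∈ Finset.range D, (intPoints B (x / (d + 2 : ℕ))).ncard := by
    refine (Set.ncard_le_ncard hsub (((finite_intPoints hB hx).subset (Set.sep_subset _ _)).union
      ((Finset.range D).finite_toSet.biUnion fun d _ => (hfin d).image _))).trans ?_
    refine (Set.ncard_union_le _ _).trans (add_le_add_right ?_ _)
    refine (Finset.set_ncard_biUnion_le _ _).trans (Finset.sum_le_sum fun d _ => ?_)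
    exact Set.ncard_image_le (hfin d)
  calc ((intPoints B x).ncard : ℝ) ≤ ({m ∈ intPoints B x | IsPrimitiveVec m}.ncard : ℝ) +
      ∑ d ∈ Finset.range D, ((intPoints B (x / (d + 2 : ℕ))).ncard : ℝ) := by exact_mod_cast h1
    _ ≤ _ := by
      gcongr
      exact hs.sum_le_tsum _ fun _ _ => Nat.cast_nonneg _

theorem tsum_inv_sq_le : Summable (fun d : ℕ => 1 / ((d + 2 : ℕ) : ℝ) ^ 2) ∧
    ∑' d : ℕ, 1 / ((d + 2 : ℕ) : ℝ) ^ 2 < 2 / 3 := by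
  have h1 := (hasSum_nat_add_iff' 2).2 hasSum_zeta_two
  refine ⟨h1.summable, ?_⟩
  rw [h1.tsum_eq]
  have := pi_lt_d2
  have := pi_pos
  norm_num [Finset.sum_range_succ]
  nlinarith

/-- A positive proportion of the integer points in large dilates is primitive. -/
theorem eventually_le_ncard_primitive (hn : 2 ≤ n) {B : Set (Fin n → ℝ)} {R : ℝ}
    (hB : ∀ v ∈ B, ‖v‖ ≤ R) (hR : 0 < R) (h0 : (0 : Fin n → ℝ) ∉ B)
    (hmeas : MeasurableSet B) (hfr : volume (frontier B) = 0)
    (hstar : ∀ v ∈ B, ∀ s : ℝ, 0 < s → s ≤ 1 → s • v ∈ B) (hV : 0 < volume.real B) :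
    ∀ᶠ x in atTop,
      volume.real B / 3 * x ^ n ≤ ({m ∈ intPoints B x | IsPrimitiveVec m}.ncard : ℝ) := by
  obtain ⟨C, hC, hCx⟩ := exists_ncard_intPoints_le hB hR h0 hmeas hfr hstar
  set V := volume.real B
  have hlim := tendsto_ncard_intPoints hB hmeas hfr hstar
  obtain ⟨hsum, hlt⟩ := tsum_inv_sq_le
  have hpos : ∀ d : ℕ, (0 : ℝ) < (d + 2 : ℕ) := fun d => by positivity
  have hpow : ∀ d : ℕ, 1 / ((d + 2 : ℕ) : ℝ) ^ n ≤ 1 / ((d + 2 : ℕ) : ℝ) ^ 2 := fun d =>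
    one_div_le_one_div_of_le (by positivity) (pow_le_pow_right₀ (by norm_cast; omega) hn)
  have hbd : ∀ x : ℝ, 0 < x → ∀ d : ℕ,
      ((intPoints B (x / (d + 2 : ℕ))).ncard : ℝ) / x ^ n ≤ C * (1 / ((d + 2 : ℕ) : ℝ) ^ 2) := by
    intro x hx d
    rw [div_le_iff₀ (by positivity)]
    refine (hCx _ (div_pos hx (hpos d))).trans ?_
    calc C * (x / (d + 2 : ℕ)) ^ n = C * (1 / ((d + 2 : ℕ) : ℝ) ^ n) * x ^ n := by
          rw [div_pow]; ring
      _ ≤ _ := by gcongr ?_ * _; exact mul_le_mul_of_nonneg_left (hpow d) hC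
  have hT : Tendsto (fun x : ℝ => ∑' d : ℕ, ((intPoints B (x / (d + 2 : ℕ))).ncard : ℝ) / x ^ n)
      atTop (nhds (∑' d : ℕ, V * (1 / ((d + 2 : ℕ) : ℝ) ^ n))) := by
    refine tendsto_tsum_of_dominated_convergence (hsum.mul_left C) (fun d => ?_) ?_
    · have h1 := (hlim.comp (tendsto_id.atTop_div_const (hpos d))).mul_const
        (1 / ((d + 2 : ℕ) : ℝ) ^ n)
      refine h1.congr' ?_
      filter_upwards [eventually_gt_atTop 0] with x hx
      simp only [Function.comp, id]
      rw [div_pow]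
      have := hpos d
      field_simp
    · filter_upwards [eventually_gt_atTop 0] with x hx d
      rw [Real.norm_of_nonneg (by positivity)]
      exact hbd x hx d
  have hS : ∑' d : ℕ, V * (1 / ((d + 2 : ℕ) : ℝ) ^ n) < 2 / 3 * V := by
    have hsn : Summable fun d : ℕ => 1 / ((d + 2 : ℕ) : ℝ) ^ n :=
      Summable.of_nonneg_of_le (fun d => by positivity) hpow hsum
    rw [tsum_mul_left, mul_comm]
    gcongr
    exact (hsn.tsum_le_tsum hpow hsum).trans_lt hlt
  have hfin := (hlim.sub hT).eventually (lt_mem_nhds (by linarith : V / 3 < V - _))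
  filter_upwards [hfin, eventually_gt_atTop 0] with x hx hx0
  have hxn : 0 < x ^ n := by positivity
  have hsx : Summable fun d : ℕ => ((intPoints B (x / (d + 2 : ℕ))).ncard : ℝ) := by
    refine Summable.of_nonneg_of_le (fun d => by positivity) (fun d => ?_)
      ((hsum.mul_left C).mul_right (x ^ n))
    exact (div_le_iff₀ hxn).1 (hbd x hx0 d)
  have h2 := ncard_intPoints_le hB h0 hx0 hsx
  rw [tsum_div_const, ← sub_div, lt_div_iff₀ hxn] at hx
  linarith

end Counting

section Miss

variable {n : ℕ}

theorem IsPrimitiveVec.eq_or_eq_neg {m m' : Fin n → ℤ} (hm : IsPrimitiveVec m)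
    (hm' : IsPrimitiveVec m') (h : ∀ i j, m i * m' j - m j * m' i = 0) : m = m' ∨ m = -m' := by
  obtain ⟨i, hi⟩ := Function.ne_iff.1 hm.ne_zero
  replace hi : m i ≠ 0 := hi
  have hi' : m' i ≠ 0 := by
    intro h0
    refine hm'.ne_zero (funext fun j => ?_)
    have h1 := h i j
    rw [h0, mul_zero, sub_zero] at h1
    exact (mul_eq_zero.1 h1).resolve_left hi
  obtain ⟨d, a, b, hd, hab, ha, hb⟩ := Int.exists_gcd_one' (Int.gcd_pos_of_ne_zero_left (m' i) hi)
  have hd' : (d : ℤ) ≠ 0 := by exact_mod_cast hd.ne'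
  have hprop : ∀ j, a * m' j = b * m j := by
    intro j
    have h1 := h i j
    rw [ha, hb] at h1
    have h2 : (d : ℤ) * (a * m' j - b * m j) = 0 := by linarith
    have := (mul_eq_zero.1 h2).resolve_left hd'
    linarith
  have hcop : IsCoprime a b := Int.isCoprime_iff_gcd_eq_one.2 hab
  have key : ∀ {a : ℤ} {m : Fin n → ℤ}, IsPrimitiveVec m → (∀ j, a ∣ m j) → a.natAbs = 1 := by
    intro a m hm h
    refine hm a.natAbs (fun j => a.sign * (m j / a)) (funext fun j => ?_)
    change m j = (a.natAbs : ℤ) * (a.sign * (m j / a))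
    rw [← mul_assoc, mul_comm _ a.sign, Int.sign_mul_natAbs, Int.mul_ediv_cancel' (h j)]
  have h1 : a.natAbs = 1 := key hm fun j => hcop.dvd_of_dvd_mul_left ⟨m' j, (hprop j).symm⟩
  have h2 : b.natAbs = 1 := key hm' fun j => hcop.symm.dvd_of_dvd_mul_left ⟨m j, hprop j⟩
  rcases Int.natAbs_eq a with h3 | h3 <;> rcases Int.natAbs_eq b with h4 | h4 <;>
    rw [h1] at h3 <;> rw [h2] at h4 <;> subst h3 <;> subst h4
  · left; ext j; simpa using (hprop j).symm
  · right; ext j; simpa [eq_neg_iff_add_eq_zero, add_comm] using (hprop j)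
  · right; ext j; simpa using (hprop j).symm
  · left; ext j; simpa using (hprop j).symm

theorem measurableSet_intersects {A : Set (Fin n → ℝ)} (hA : MeasurableSet A) :
    MeasurableSet {Λ : LatticeSpace n | Intersects n Λ A} := by
  rw [measurableSet_latticeSpace_iff]
  have h1 : (QuotientGroup.mk : SLR n → LatticeSpace n) ⁻¹' {Λ | Intersects n Λ A} =
      ⋃ m : Fin n → ℤ, ⋃ _ : m ≠ 0, {g | vecOf n g m ∈ A} := by
    ext g
    simp only [Set.mem_preimage, Set.mem_ofPred_eq, intersects_mk, Set.mem_iUnion, exists_prop]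
  rw [h1]
  refine MeasurableSet.iUnion fun m => MeasurableSet.iUnion fun _ => ?_
  exact (SLR.continuous_coe.matrix_mulVec continuous_const).measurable hA

/-- A bounded open star-shaped region containing no pair of opposite vectors. -/
structure IsTarget (A : Set (Fin n → ℝ)) : Prop where
  isOpen : IsOpen A
  bounded : ∃ R, 0 < R ∧ ∀ v ∈ A, ‖v‖ ≤ R
  frontier : volume (frontier A) = 0
  star : ∀ v ∈ A, ∀ s : ℝ, 0 < s → s ≤ 1 → s • v ∈ A
  neg : ∀ v ∈ A, -v ∉ A

theorem IsTarget.zero_notMem {A : Set (Fin n → ℝ)} (hA : IsTarget A) : (0 : Fin n → ℝ) ∉ A :=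
  fun h => hA.neg 0 h (by simpa using h)

theorem volume_preimage_toLin' (g : SLR n) (A : Set (Fin n → ℝ)) :
    volume (Matrix.SpecialLinearGroup.toLin' g ⁻¹' A) = volume A := by
  have h1 : LinearMap.det (Matrix.toLin' (g : Matrix (Fin n) (Fin n) ℝ)) = 1 := by
    rw [LinearMap.det_toLin', g.det_coe]
  have h2 := Measure.addHaar_preimage_linearMap (volume : Measure (Fin n → ℝ))
    (f := Matrix.toLin' (g : Matrix (Fin n) (Fin n) ℝ)) (by rw [h1]; exact one_ne_zero) A
  rw [h1, inv_one, abs_one, ENNReal.ofReal_one, one_mul] at h2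
  exact h2

theorem IsTarget.preimage {A : Set (Fin n → ℝ)} (hA : IsTarget A) (g : SLR n) :
    IsTarget (Matrix.SpecialLinearGroup.toLin' g ⁻¹' A) := by
  set e := (Matrix.SpecialLinearGroup.toLin' g).toContinuousLinearEquiv with he
  refine ⟨hA.isOpen.preimage e.continuous, ?_, ?_, fun v hv s hs hs1 => ?_, fun v hv => ?_⟩
  · obtain ⟨R, hR, h⟩ := hA.bounded
    obtain ⟨C, hC, hb⟩ := (e.symm : (Fin n → ℝ) →L[ℝ] (Fin n → ℝ)).bound
    refine ⟨C * R, by positivity, fun v hv => ?_⟩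
    have h1 := hb (e v)
    simp only [ContinuousLinearEquiv.coe_coe, ContinuousLinearEquiv.symm_apply_apply] at h1
    exact h1.trans (mul_le_mul_of_nonneg_left (h _ hv) hC.le)
  · have h1 := e.toHomeomorph.preimage_frontier A
    change e ⁻¹' _ = _root_.frontier (e ⁻¹' A) at h1
    change volume (_root_.frontier (e ⁻¹' A)) = 0
    rw [← h1]
    exact (volume_preimage_toLin' g _).trans hA.frontier
  · rw [Set.mem_preimage, map_smul]
    exact hA.star _ hv s hs hs1
  · rw [Set.mem_preimage, map_neg]
    exact hA.neg _ hv

theorem heckeMeasure_not_intersects_le {p : ℕ} [Fact p.Prime] (g : SLR n) {A : Set (Fin n → ℝ)}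
    (hA : IsTarget A) {R : ℝ} 
    (hR : ∀ v ∈ Matrix.SpecialLinearGroup.toLin' g ⁻¹' A, ‖v‖ ≤ R)
    (h1 : R * (p : ℝ) ^ ((1 : ℝ) / n) < p) (h2 : 2 * (R * (p : ℝ) ^ ((1 : ℝ) / n)) ^ 2 < p)
    {V : ℝ} (hV : 0 < V) (hn : n ≠ 0)
    (h3 : V / 3 * p ≤ ({m ∈ intPoints (Matrix.SpecialLinearGroup.toLin' g ⁻¹' A)
      ((p : ℝ) ^ ((1 : ℝ) / n)) | IsPrimitiveVec m}.ncard : ℝ)) :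
    heckeMeasure p (QuotientGroup.mk g : LatticeSpace n) {Λ | ¬ Intersects n Λ A} ≤
      ENNReal.ofReal (6 / V) := by
  classical
  set B := Matrix.SpecialLinearGroup.toLin' g ⁻¹' A with hB
  have hBt : IsTarget B := hA.preimage g
  set x : ℝ := (p : ℝ) ^ ((1 : ℝ) / n) with hx
  have hp2 : (2 : ℝ) ≤ p := mod_cast (Fact.out : p.Prime).two_le
  have hp : (0 : ℝ) < p := by linarith
  have hx0 : 0 < x := by positivity
  have hfin : {m ∈ intPoints B x | IsPrimitiveVec m}.Finite :=
    (finite_intPoints hR hx0).subset (Set.sep_subset _ _)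
  set S := hfin.toFinset with hS
  have hScard : V / 3 * p ≤ (S.card : ℝ) := by rwa [Set.ncard_eq_toFinset_card _ hfin] at h3
  have hcast : ∀ z : ℤ, |(z : ℝ)| < p → (z : ZMod p) = 0 → z = 0 := by
    intro z hz h0
    rw [ZMod.intCast_zmod_eq_zero_iff_dvd] at h0
    refine Int.eq_zero_of_abs_lt_dvd h0 ?_
    exact_mod_cast hz
  have habs : ∀ m ∈ S, ∀ i, |(m i : ℝ)| ≤ R * x := fun m hm i =>
    abs_le_of_mem_intPoints hR hx0 (hfin.mem_toFinset.1 hm).1 i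
  have hcount := card_forall_modPairing_ne_zero_mul_card_le (p := p) (S := S)
    (fun m hm => by
      obtain ⟨i, hi⟩ := Function.ne_iff.1 (hfin.mem_toFinset.1 hm).2.ne_zero
      exact ⟨i, fun h0 => hi (hcast _ ((habs m hm i).trans_lt h1) h0)⟩)
    (fun m hm m' hm' hne => by
      by_contra! hcon
      have hminor : ∀ i j, |((m i * m' j - m j * m' i : ℤ) : ℝ)| ≤ 2 * (R * x) ^ 2 := by
        intro i j
        push_cast
        refine (abs_sub _ _).trans ?_
        rw [abs_mul, abs_mul, two_mul, pow_two]
        exact add_le_add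
          (mul_le_mul (habs m hm i) (habs m' hm' j) (abs_nonneg _) ((abs_nonneg _).trans (habs m hm i)))
          (mul_le_mul (habs m hm j) (habs m' hm' i) (abs_nonneg _) ((abs_nonneg _).trans (habs m hm i)))
      rcases (hfin.mem_toFinset.1 hm).2.eq_or_eq_neg (hfin.mem_toFinset.1 hm').2 fun i j =>
        hcast _ ((hminor i j).trans_lt h2) (hcon i j) with h | h
      · exact hne h
      · have h4 : (x⁻¹ • fun i => (m i : ℝ)) = - (x⁻¹ • fun i => (m' i : ℝ)) := by
          ext i; simp [h]
        have h5 := (hfin.mem_toFinset.1 hm).1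
        rw [intPoints, Set.mem_ofPred_eq, h4] at h5
        exact hBt.neg _ (hfin.mem_toFinset.1 hm').1 h5)
  set bad := Finset.univ.filter fun a : Fin n → ZMod p => ∀ m ∈ S, modPairing a m ≠ 0 with hbad
  have hhit : ∀ a : {a : Fin n → ZMod p // a ≠ 0}, a.1 ∉ bad →
      Intersects n (QuotientGroup.mk (g * heckeElt a)) A := by
    intro a ha
    simp only [hbad, Finset.mem_filter, Finset.mem_univ, true_and, not_forall, not_not] at ha
    obtain ⟨m, hm, hm0⟩ := ha
    obtain ⟨k, hk⟩ := exists_vecOf_heckeElt a hm0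
    have hkA : vecOf n (g * heckeElt a) k ∈ A := by
      have h4 : (p : ℝ) ^ (-(1 : ℝ) / n) = x⁻¹ := by rw [hx, ← Real.rpow_neg hp.le, neg_div]
      rw [vecOf_mul, hk, h4]
      exact (hfin.mem_toFinset.1 hm).1
    refine intersects_mk.2 ⟨k, ?_, hkA⟩
    rintro rfl
    refine hA.zero_notMem ?_
    have h5 : vecOf n (g * heckeElt a) 0 = 0 := by
      simp only [vecOf, Pi.zero_apply, Int.cast_zero]
      exact Matrix.mulVec_zero _
    rwa [h5] at hkA
  have hmeas : MeasurableSet {Λ : LatticeSpace n | ¬ Intersects n Λ A} :=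
    (measurableSet_intersects hA.isOpen.measurableSet).compl
  have hdirac : ∀ a : {a : Fin n → ZMod p // a ≠ 0},
      Measure.dirac (QuotientGroup.mk (g * heckeElt a) : LatticeSpace n)
        {Λ | ¬ Intersects n Λ A} ≤ if a.1 ∈ bad then 1 else 0 := by
    intro a
    split_ifs with h
    · exact prob_le_one
    · rw [Measure.dirac_apply' _ hmeas, Set.indicator_of_notMem]
      exact fun h' => h' (hhit a h)
  have hsum : ∑ a : {a : Fin n → ZMod p // a ≠ 0}, (if a.1 ∈ bad then (1 : ℝ≥0∞) else 0) ≤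
      bad.card := by
    rw [Finset.sum_boole]
    norm_cast
    refine Finset.card_le_card_of_injOn Subtype.val (fun a ha => ?_) Subtype.val_injective.injOn
    simpa using ha
  have hcard : (Fintype.card {a : Fin n → ZMod p // a ≠ 0} : ℝ) = (p : ℝ) ^ n - 1 := by
    rw [Fintype.card_subtype_compl, Fintype.card_fun, ZMod.card, Fintype.card_fin,
      Fintype.card_subtype_eq, Nat.cast_sub (Nat.one_le_pow _ _ (Fact.out : p.Prime).pos)]
    simp
  have hpn : (2 : ℝ) ≤ (p : ℝ) ^ n := hp2.trans (le_self_pow₀ (by linarith) hn)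
  have hbadV : (bad.card : ℝ) * V ≤ 3 * (p : ℝ) ^ n := by
    have h6 : (bad.card : ℝ) * (V / 3 * p) ≤ (p : ℝ) ^ (n + 1) :=
      (mul_le_mul_of_nonneg_left hScard (Nat.cast_nonneg _)).trans hcount
    have h7 : (bad.card : ℝ) * V * p ≤ 3 * (p : ℝ) ^ n * p := by
      rw [pow_succ] at h6; linarith
    exact le_of_mul_le_mul_right h7 hp
  rw [heckeMeasure_mk, Measure.smul_apply, Measure.finsetSum_apply, smul_eq_mul]
  calc _ ≤ ((Fintype.card {a : Fin n → ZMod p // a ≠ 0} : ℝ≥0∞))⁻¹ * bad.card := by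
        gcongr
        exact (Finset.sum_le_sum fun a _ => hdirac a).trans hsum
    _ = ENNReal.ofReal (bad.card / ((p : ℝ) ^ n - 1)) := by
        rw [← hcard, ENNReal.ofReal_div_of_pos (by rw [hcard]; linarith), ENNReal.ofReal_natCast,
          ENNReal.ofReal_natCast, mul_comm, ENNReal.div_eq_inv_mul, mul_comm]
    _ ≤ _ := by
        refine ENNReal.ofReal_le_ofReal ?_
        rw [div_le_div_iff₀ (by linarith) hV]
        linarith

/-- The set of lattices missing a target region of volume `V` has measure `O(1 / V)`. -/
theorem measure_not_intersects_le (hn : 3 ≤ n) {μ : Measure (LatticeSpace n)}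
    [IsProbabilityMeasure μ]
    (hμ : ∀ g : SLR n, MeasurePreserving (fun x : LatticeSpace n => g • x) μ μ)
    {A : Set (Fin n → ℝ)} (hA : IsTarget A) (hV : 0 < volume.real A) :
    μ {Λ | ¬ Intersects n Λ A} ≤ ENNReal.ofReal (6 / volume.real A) := by
  have : NeZero n := ⟨by omega⟩
  have hmeas : MeasurableSet {Λ : LatticeSpace n | ¬ Intersects n Λ A} :=
    (measurableSet_intersects hA.isOpen.measurableSet).compl
  have hprime : ∀ k, Fact (Nat.nth Nat.Prime k).Prime := fun k => ⟨Nat.prime_nth_prime k⟩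
  have hlim : Tendsto (fun k => ((Nat.nth Nat.Prime k : ℕ) : ℝ)) atTop atTop :=
    tendsto_natCast_atTop_atTop.comp (Nat.nth_strictMono Nat.infinite_setOfPred_prime).tendsto_atTop
  have hn0 : (n : ℝ) ≠ 0 := by exact_mod_cast NeZero.ne n
  have hroot : Tendsto (fun k => ((Nat.nth Nat.Prime k : ℕ) : ℝ) ^ ((1 : ℝ) / n)) atTop atTop :=
    (tendsto_rpow_atTop (by positivity)).comp hlim
  have hpt : ∀ x : LatticeSpace n, limsup (fun k => heckeMeasure (Nat.nth Nat.Prime k) x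
      {Λ | ¬ Intersects n Λ A}) atTop ≤ ENNReal.ofReal (6 / volume.real A) := by
    intro x
    obtain ⟨g, rfl⟩ := QuotientGroup.mk_surjective x
    refine limsup_le_of_le (by isBoundedDefault) ?_
    have hB := hA.preimage g
    obtain ⟨R, hR, hRB⟩ := hB.bounded
    have hvol : volume.real (Matrix.SpecialLinearGroup.toLin' g ⁻¹' A) = volume.real A := by
      rw [measureReal_def, volume_preimage_toLin', measureReal_def]
    have hprim := eventually_le_ncard_primitive (by omega) hRB hR hB.zero_notMem
      hB.isOpen.measurableSet hB.frontier hB.star (hvol ▸ hV)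
    filter_upwards [hroot.eventually hprim, hroot.eventually (eventually_gt_atTop (R + 2 * R ^ 2)),
      hroot.eventually (eventually_ge_atTop 1)] with k hk1 hk2 hk3
    set p := Nat.nth Nat.Prime k
    set y : ℝ := (p : ℝ) ^ ((1 : ℝ) / n)
    have hyn : y ^ n = p := by
      rw [← Real.rpow_natCast, ← Real.rpow_mul (Nat.cast_nonneg _), one_div_mul_cancel hn0,
        Real.rpow_one]
    have hy3 : y ^ 3 ≤ p := hyn ▸ pow_le_pow_right₀ hk3 hn
    rw [hyn, hvol] at hk1
    refine heckeMeasure_not_intersects_le g hA hRB (lt_of_lt_of_le ?_ hy3)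
      (lt_of_lt_of_le ?_ hy3) hV (NeZero.ne n) hk1
    · have h1 : R < y := by nlinarith
      have h2 : y * y ≤ y ^ 3 := by nlinarith
      nlinarith
    · have h1 : 2 * R ^ 2 < y := by nlinarith
      have h2 : 0 < y ^ 2 := by positivity
      nlinarith
  calc μ {Λ | ¬ Intersects n Λ A} = limsup (fun k => ∫⁻ x, heckeMeasure (Nat.nth Nat.Prime k) x
        {Λ | ¬ Intersects n Λ A} ∂μ) atTop := by
        simp_rw [lintegral_heckeMeasure hμ hmeas]
        exact (limsup_const _).symm
    _ ≤ ∫⁻ x, limsup (fun k => heckeMeasure (Nat.nth Nat.Prime k) x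
        {Λ | ¬ Intersects n Λ A}) atTop ∂μ :=
        limsup_lintegral_le (fun _ => 1)
          (fun k => (Measure.measurable_coe hmeas).comp measurable_heckeMeasure)
          (fun k => Eventually.of_forall fun x => prob_le_one) (by simp)
    _ ≤ ∫⁻ _, ENNReal.ofReal (6 / volume.real A) ∂μ := lintegral_mono hpt
    _ = _ := by simp

end Miss

section Functionals

variable {n : ℕ}

/-- A pair of linear functionals exhibiting a nontrivial unipotent matrix as a shear. -/
structure IsShearPair (g : SLR n) (φ ℓ : (Fin n → ℝ) →ₗ[ℝ] ℝ) : Prop where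
  exists_left : ∃ v, φ v = 1 ∧ ℓ v = 0
  exists_right : ∃ v, φ v = 0 ∧ ℓ v = 1
  left : ∀ v, φ (Matrix.SpecialLinearGroup.toLin' g v) = φ v + ℓ v
  right : ∀ v, ℓ (Matrix.SpecialLinearGroup.toLin' g v) = ℓ v

theorem exists_isShearPair {g : SLR n}
    (hg : IsNilpotent ((g : Matrix (Fin n) (Fin n) ℝ) - 1)) (hg1 : g ≠ 1) :
    ∃ φ ℓ, IsShearPair g φ ℓ := by
  set N := (g : Matrix (Fin n) (Fin n) ℝ) - 1 with hN
  have hN0 : N ≠ 0 := fun h => hg1 (Subtype.ext (sub_eq_zero.1 h))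
  have hNe : Nontrivial (Matrix (Fin n) (Fin n) ℝ) := ⟨⟨N, 0, hN0⟩⟩
  obtain ⟨k, hk⟩ : ∃ k, nilpotencyClass N = k + 2 := by
    refine ⟨nilpotencyClass N - 2, ?_⟩
    have h1 := pos_nilpotencyClass_iff.2 hg
    have h2 : nilpotencyClass N ≠ 1 := fun h => hN0 (nilpotencyClass_eq_one.1 h)
    omega
  obtain ⟨hk2, hk1⟩ := nilpotencyClass_eq_succ_iff.1 hk
  obtain ⟨i, j, hij⟩ : ∃ i j, (N ^ (k + 1)) i j ≠ 0 := by
    by_contra! h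
    exact hk1 (Matrix.ext h)
  have hgv : ∀ v, Matrix.SpecialLinearGroup.toLin' g v = v + N *ᵥ v := fun v => by
    rw [hN, Matrix.sub_mulVec, Matrix.one_mulVec]
    exact (add_sub_cancel _ _).symm
  set φ : (Fin n → ℝ) →ₗ[ℝ] ℝ := LinearMap.proj i ∘ₗ Matrix.mulVecLin (N ^ k) with hφ
  set ℓ : (Fin n → ℝ) →ₗ[ℝ] ℝ := LinearMap.proj i ∘ₗ Matrix.mulVecLin (N ^ (k + 1)) with hℓ
  have hφN : ∀ v, φ (N *ᵥ v) = ℓ v := fun v => by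
    simp [hφ, hℓ, Matrix.mulVec_mulVec, pow_succ]
  have hℓN : ∀ v, ℓ (N *ᵥ v) = 0 := fun v => by
    simp [hℓ, Matrix.mulVec_mulVec, ← pow_succ, hk2]
  set v₀ : Fin n → ℝ := Pi.single j ((N ^ (k + 1)) i j)⁻¹
  have hv₀ : ℓ v₀ = 1 := by simp [hℓ, v₀, hij]
  refine ⟨φ, ℓ, ⟨N *ᵥ v₀, ?_, ?_⟩, ⟨v₀ - φ v₀ • (N *ᵥ v₀), ?_, ?_⟩, fun v => ?_, fun v => ?_⟩
  · rw [hφN, hv₀]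
  · rw [hℓN]
  · simp [hφN, hv₀]
  · simp [hℓN, hv₀]
  · rw [hgv, map_add, hφN]
  · rw [hgv, map_add, hℓN, add_zero]

variable {g : SLR n} {φ ℓ : (Fin n → ℝ) →ₗ[ℝ] ℝ}

theorem IsShearPair.pow_right (h : IsShearPair g φ ℓ) (j : ℕ) (v : Fin n → ℝ) :
    ℓ (Matrix.SpecialLinearGroup.toLin' (g ^ j) v) = ℓ v := by
  induction j generalizing v with
  | zero => simp
  | succ j ih =>
    rw [pow_succ, map_mul, LinearEquiv.mul_apply, ih, h.right]

theorem IsShearPair.pow_left (h : IsShearPair g φ ℓ) (j : ℕ) (v : Fin n → ℝ) :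
    φ (Matrix.SpecialLinearGroup.toLin' (g ^ j) v) = φ v + j * ℓ v := by
  induction j generalizing v with
  | zero => simp
  | succ j ih =>
    rw [pow_succ, map_mul, LinearEquiv.mul_apply, ih, h.right, h.left]
    push_cast
    ring

/-- The points of a ball lying in the cone where one functional dominates another. -/
def coneBall (φ ℓ : (Fin n → ℝ) →ₗ[ℝ] ℝ) (ε : ℝ) : Set (Fin n → ℝ) :=
  {v | ‖v‖ < ε ∧ 2 * |φ v| < ℓ v}

theorem pos_of_mem_coneBall {ε : ℝ} {v : Fin n → ℝ} (hv : v ∈ coneBall φ ℓ ε) : 0 < ℓ v :=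
  lt_of_le_of_lt (by positivity) hv.2

theorem isTarget_coneBall {ε : ℝ} (hε : 0 < ε) : IsTarget (coneBall φ ℓ ε) := by
  have hφ := φ.continuous_of_finiteDimensional
  have hℓ := ℓ.continuous_of_finiteDimensional
  refine ⟨?_, ⟨ε, hε, fun v hv => hv.1.le⟩, ?_, fun v hv s hs hs1 => ⟨?_, ?_⟩, fun v hv hv' => ?_⟩
  · exact (isOpen_lt continuous_norm continuous_const).inter
      (isOpen_lt (continuous_const.mul hφ.abs) hℓ)
  · refine Convex.addHaar_frontier volume ?_
    have h1 : Convex ℝ {v : Fin n → ℝ | ‖v‖ < ε} := by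
      simpa [Metric.ball, dist_zero_right] using convex_ball (0 : Fin n → ℝ) ε
    refine h1.inter fun v hv w hw a b ha hb hab => ?_
    change 2 * |φ v| < ℓ v at hv
    change 2 * |φ w| < ℓ w at hw
    change 2 * |φ (a • v + b • w)| < ℓ (a • v + b • w)
    simp only [map_add, map_smul, smul_eq_mul]
    have h2 : |a * φ v + b * φ w| ≤ a * |φ v| + b * |φ w| := by
      refine (abs_add_le _ _).trans_eq ?_
      rw [abs_mul, abs_mul, abs_of_nonneg ha, abs_of_nonneg hb]
    rcases ha.eq_or_lt with rfl | ha'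
    · have : b = 1 := by linarith
      subst this
      simpa using hw
    · nlinarith [mul_lt_mul_of_pos_left hv ha', mul_le_mul_of_nonneg_left hw.le hb]
  · rw [norm_smul, Real.norm_of_nonneg hs.le]
    exact (mul_le_of_le_one_left (norm_nonneg _) hs1).trans_lt hv.1
  · rw [map_smul, map_smul, smul_eq_mul, smul_eq_mul, abs_mul, abs_of_pos hs]
    nlinarith [mul_lt_mul_of_pos_left hv.2 hs]
  · have h1 := pos_of_mem_coneBall hv
    have h2 := pos_of_mem_coneBall hv'
    rw [map_neg] at h2
    linarith

open scoped Pointwise in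
theorem volume_real_coneBall {ε : ℝ} (hε : 0 < ε) :
    volume.real (coneBall φ ℓ ε) = ε ^ n * volume.real (coneBall φ ℓ 1) := by
  have h1 : coneBall φ ℓ ε = ε • coneBall φ ℓ 1 := by
    ext v
    rw [Set.mem_smul_set_iff_inv_smul_mem₀ hε.ne']
    have h2 : 0 < ε⁻¹ := inv_pos.2 hε
    refine and_congr ?_ ?_
    · rw [norm_smul, Real.norm_of_nonneg h2.le, inv_mul_lt_iff₀ hε, mul_one]
    · rw [map_smul, map_smul, smul_eq_mul, smul_eq_mul, abs_mul, abs_of_pos h2,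
        mul_left_comm, mul_lt_mul_iff_right₀ h2]
  rw [h1, measureReal_def, Measure.addHaar_smul, ENNReal.toReal_mul, Module.finrank_fin_fun,
    ENNReal.toReal_ofReal (abs_nonneg _), abs_of_pos (pow_pos hε n), measureReal_def]

theorem IsShearPair.volume_real_coneBall_pos (h : IsShearPair g φ ℓ) {ε : ℝ} (hε : 0 < ε) :
    0 < volume.real (coneBall φ ℓ ε) := by
  have ht := isTarget_coneBall (φ := φ) (ℓ := ℓ) hε
  refine ENNReal.toReal_pos ((ht.isOpen.measure_pos volume ?_).ne') ?_
  · obtain ⟨v, hv1, hv2⟩ := h.exists_right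
    have hv : 0 < ‖v‖ := norm_pos_iff.2 fun h0 => by simp [h0] at hv2
    refine ⟨(ε / (2 * ‖v‖)) • v, ?_, ?_⟩
    · rw [norm_smul, Real.norm_of_nonneg (by positivity)]
      field_simp
      linarith
    · simp only [map_smul, hv1, hv2]
      simp
      positivity
  · obtain ⟨R, -, hR⟩ := ht.bounded
    exact (isBounded_iff_forall_norm_le.2 ⟨R, hR⟩).measure_lt_top.ne

theorem IsTarget.biUnion {ι : Type*} {s : Finset ι} {A : ι → Set (Fin n → ℝ)}
    (hA : ∀ i, IsTarget (A i)) (hneg : ∀ i j, ∀ v ∈ A i, -v ∉ A j) :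
    IsTarget (⋃ i ∈ s, A i) := by
  have h0 : IsOpen (⋃ i ∈ s, A i) := isOpen_biUnion fun i _ => (hA i).isOpen
  refine ⟨h0, ?_, ?_, fun v hv r hr hr1 => ?_,
    fun v hv hv' => ?_⟩
  · have h1 : Bornology.IsBounded (⋃ i ∈ s, A i) :=
      (Bornology.isBounded_biUnion_finset s).2 fun i _ => by
        obtain ⟨R, -, hR⟩ := (hA i).bounded
        exact isBounded_iff_forall_norm_le.2 ⟨R, hR⟩
    obtain ⟨R, hR0, hR⟩ := h1.exists_pos_norm_le
    exact ⟨R, hR0, hR⟩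
  · have h1 : _root_.frontier (⋃ i ∈ s, A i) ⊆ ⋃ i ∈ s, _root_.frontier (A i) := by
      intro v hv
      rw [_root_.frontier, s.closure_biUnion, h0.interior_eq] at hv
      obtain ⟨hv1, hv2⟩ := hv
      simp only [Set.mem_iUnion, not_exists] at hv1 hv2 ⊢
      obtain ⟨i, hi, hv1⟩ := hv1
      exact ⟨i, hi, hv1, fun h => hv2 i hi (interior_subset h)⟩
    refine measure_mono_null h1 ((measure_biUnion_null_iff s.countable_toSet).2 fun i _ => ?_)
    exact (hA i).frontier
  · simp only [Set.mem_iUnion] at hv ⊢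
    obtain ⟨i, hi, hv⟩ := hv
    exact ⟨i, hi, (hA i).star v hv r hr hr1⟩
  · simp only [Set.mem_iUnion] at hv hv'
    obtain ⟨i, hi, hv⟩ := hv
    obtain ⟨j, hj, hv'⟩ := hv'
    exact hneg i j v hv hv'

end Functionals

section ThreeLe

variable {n : ℕ} {g : SLR n} {φ ℓ : (Fin n → ℝ) →ₗ[ℝ] ℝ}

theorem intersects_smul_iff {Λ : LatticeSpace n} {A : Set (Fin n → ℝ)} :
    Intersects n (g • Λ) A ↔ Intersects n Λ (Matrix.SpecialLinearGroup.toLin' g ⁻¹' A) := by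
  induction Λ using QuotientGroup.induction_on with
  | H h =>
    rw [MulAction.Quotient.smul_mk, intersects_mk, intersects_mk]
    simp only [smul_eq_mul, vecOf_mul]
    rfl

/-- The points carried into the cone-shaped part of a ball by some `g ^ j` with `J < j ≤ 2 * J`. -/
def sweptCone (g : SLR n) (φ ℓ : (Fin n → ℝ) →ₗ[ℝ] ℝ) (ε : ℝ) (J : ℕ) : Set (Fin n → ℝ) :=
  ⋃ j ∈ Finset.Ioc J (2 * J), Matrix.SpecialLinearGroup.toLin' (g ^ j) ⁻¹' coneBall φ ℓ ε

theorem IsShearPair.isTarget_sweptCone (h : IsShearPair g φ ℓ) {ε : ℝ} (hε : 0 < ε) (J : ℕ) :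
    IsTarget (sweptCone g φ ℓ ε J) := by
  refine IsTarget.biUnion (fun j => (isTarget_coneBall hε).preimage _) fun i j v hv hv' => ?_
  have h1 := pos_of_mem_coneBall hv
  have h2 := pos_of_mem_coneBall hv'
  rw [h.pow_right] at h1 h2
  rw [map_neg] at h2
  linarith

theorem IsShearPair.volume_real_sweptCone (h : IsShearPair g φ ℓ) {ε : ℝ} (hε : 0 < ε) (J : ℕ) :
    volume.real (sweptCone g φ ℓ ε J) = J * (ε ^ n * volume.real (coneBall φ ℓ 1)) := by
  have hdisj : Pairwise fun i j : ℕ =>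
      Disjoint (Matrix.SpecialLinearGroup.toLin' (g ^ i) ⁻¹' coneBall φ ℓ ε)
        (Matrix.SpecialLinearGroup.toLin' (g ^ j) ⁻¹' coneBall φ ℓ ε) := by
    refine (pairwise_disjoint_on _).2 fun i j hij => ?_
    rw [Set.disjoint_left]
    intro v hi hj
    have h0 := pos_of_mem_coneBall hi
    have h1 := hi.2
    have h2 := hj.2
    rw [h.pow_right] at h0 h1 h2
    rw [h.pow_left] at h1 h2
    have h3 : (i : ℝ) + 1 ≤ j := by exact_mod_cast hij
    have h4 := neg_abs_le (φ v + i * ℓ v)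
    have h5 := le_abs_self (φ v + j * ℓ v)
    nlinarith
  have hvol : ∀ j, volume.real (Matrix.SpecialLinearGroup.toLin' (g ^ j) ⁻¹' coneBall φ ℓ ε) =
      ε ^ n * volume.real (coneBall φ ℓ 1) := fun j => by
    rw [measureReal_def, volume_preimage_toLin', ← measureReal_def, volume_real_coneBall hε]
  have ht : ∀ j, IsTarget (Matrix.SpecialLinearGroup.toLin' (g ^ j) ⁻¹' coneBall φ ℓ ε) :=
    fun j => (isTarget_coneBall hε).preimage _
  rw [sweptCone, measureReal_biUnion_finset (hdisj.set_pairwise _)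
    (fun j _ => (ht j).isOpen.measurableSet) fun j _ => ?_]
  · simp only [hvol, Finset.sum_const, Nat.card_Ioc, nsmul_eq_mul]
    congr 2
    omega
  · obtain ⟨R, -, hR⟩ := (ht j).bounded
    exact (isBounded_iff_forall_norm_le.2 ⟨R, hR⟩).measure_lt_top.ne

theorem IsShearPair.ae_forall_exists_intersects_of_three_le (h : IsShearPair g φ ℓ) (hn : 3 ≤ n)
    {μ : Measure (LatticeSpace n)} [IsProbabilityMeasure μ]
    (hμ : ∀ g : SLR n, MeasurePreserving (fun x : LatticeSpace n => g • x) μ μ)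
    {β : ℝ} (hβ : 0 < β) (hβn : β * n < 1) :
    ∀ᵐ Λ ∂μ, ∀ K : ℕ, ∃ j ≥ K, Intersects n (g ^ j • Λ) {w | ‖w‖ < (j : ℝ) ^ (-β)} := by
  refine ae_all_iff.2 fun K => ?_
  set V := volume.real (coneBall φ ℓ 1) with hV
  have hV0 : 0 < V := h.volume_real_coneBall_pos one_pos
  set c : ℝ := 2 ^ (-(β * n)) * V with hc
  have hc0 : 0 < c := by positivity
  have hvol : ∀ J : ℕ, 0 < J →
      volume.real (sweptCone g φ ℓ ((2 * J : ℝ) ^ (-β)) J) = c * (J : ℝ) ^ (1 - β * n) := by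
    intro J hJ
    have hJ' : (0 : ℝ) < J := by exact_mod_cast hJ
    rw [h.volume_real_sweptCone (by positivity), ← Real.rpow_natCast, ← Real.rpow_mul (by positivity),
      Real.mul_rpow two_pos.le hJ'.le, sub_eq_add_neg, Real.rpow_add hJ', Real.rpow_one, neg_mul]
    ring
  have hle : ∀ J : ℕ, 0 < J → K ≤ J →
      μ {Λ | ¬ ∃ j ≥ K, Intersects n (g ^ j • Λ) {w | ‖w‖ < (j : ℝ) ^ (-β)}} ≤
        ENNReal.ofReal (6 / (c * (J : ℝ) ^ (1 - β * n))) := by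
    intro J hJ hK
    have hJ' : (0 : ℝ) < J := by exact_mod_cast hJ
    rw [← hvol J hJ]
    refine le_trans (measure_mono fun Λ hΛ => ?_) (measure_not_intersects_le hn hμ
      (h.isTarget_sweptCone (by positivity) J) (by rw [hvol J hJ]; positivity))
    refine fun hi : Intersects n Λ _ => hΛ ?_
    induction Λ using QuotientGroup.induction_on with
    | H x =>
      obtain ⟨m, hm, hi⟩ := intersects_mk.1 hi
      simp only [sweptCone, Set.mem_iUnion, Finset.mem_Ioc] at hi
      obtain ⟨j, ⟨hj1, hj2⟩, hi⟩ := hi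
      refine ⟨j, by omega, intersects_smul_iff.2 (intersects_mk.2 ⟨m, hm, hi.1.trans_le ?_⟩)⟩
      refine Real.rpow_le_rpow_of_nonpos (by exact_mod_cast hJ.trans hj1) ?_ (by linarith)
      exact_mod_cast hj2
  have hlim : Tendsto (fun J : ℕ => ENNReal.ofReal (6 / (c * (J : ℝ) ^ (1 - β * n)))) atTop
      (nhds 0) := by
    rw [← ENNReal.ofReal_zero]
    refine ENNReal.tendsto_ofReal (tendsto_const_nhds.div_atTop (Tendsto.const_mul_atTop hc0 ?_))
    exact (tendsto_rpow_atTop (by linarith)).comp tendsto_natCast_atTop_atTop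
  refine le_antisymm (ge_of_tendsto hlim ?_) zero_le
  filter_upwards [eventually_ge_atTop (K + 1)] with J hJ
  exact hle J (by omega) (by omega)

end ThreeLe

section OneSided

theorem exists_int_int_pos_mul_sub_lt {ξ : ℝ} (hξ : ∀ k j : ℤ, 0 < k → k * ξ ≠ j) {ε : ℝ}
    (hε : 0 < ε) :
    ∃ k j : ℤ, 0 < k ∧ 0 < k * ξ - j ∧ k * ξ - j < ε ∧ k * (k * ξ - j) ≤ 2 := by
  obtain ⟨N, hN⟩ := exists_nat_one_div_lt hε
  have hN1 : (1 : ℝ) / ((N + 1 : ℕ) + 1) ≤ 1 / (N + 1) := by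
    push_cast
    gcongr
    linarith
  have hdir : ∀ M : ℕ, 0 < M → ∃ k j : ℤ, 0 < k ∧ k ≤ M ∧ |k * ξ - j| ≤ 1 / (M + 1) ∧
      k * |k * ξ - j| ≤ 1 := by
    intro M hM
    obtain ⟨j, k, hk, hkM, h⟩ := Real.exists_int_int_abs_mul_sub_le ξ hM
    refine ⟨k, j, hk, hkM, h, ?_⟩
    have h1 : (k : ℝ) ≤ M := by exact_mod_cast hkM
    calc (k : ℝ) * |k * ξ - j| ≤ M * (1 / (M + 1)) := by gcongr
      _ ≤ 1 := by rw [mul_one_div, div_le_one (by positivity)]; linarith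
  obtain ⟨k₀, j₀, hk₀, hk₀N, h₀, -⟩ := hdir (N + 1) (by omega)
  obtain ⟨k₁, hk₁, hmin⟩ := (Finset.Icc (1 : ℤ) ((N + 1 : ℕ) : ℤ)).exists_min_image
    (fun k => |k * ξ - round (k * ξ)|) ⟨k₀, Finset.mem_Icc.2 ⟨hk₀, hk₀N⟩⟩
  obtain ⟨hk₁0, hk₁N⟩ := Finset.mem_Icc.1 hk₁
  have hk₁pos : (0 : ℝ) < k₁ := by exact_mod_cast hk₁0
  set j₁ := round (k₁ * ξ) with hj₁
  have hy : |k₁ * ξ - j₁| ≤ 1 / ((N + 1 : ℕ) + 1) :=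
    ((hmin k₀ (Finset.mem_Icc.2 ⟨hk₀, hk₀N⟩)).trans (round_le _ _)).trans h₀
  have hy1 : |k₁ * ξ - j₁| ≤ 1 := hy.trans (by rw [div_le_one (by positivity)]; norm_cast; omega)
  have hk₁y : k₁ * |k₁ * ξ - j₁| ≤ 1 := by
    have h1 : (k₁ : ℝ) ≤ (N + 1 : ℕ) := by exact_mod_cast hk₁N
    calc (k₁ : ℝ) * |k₁ * ξ - j₁| ≤ (N + 1 : ℕ) * (1 / ((N + 1 : ℕ) + 1)) := by gcongr
      _ ≤ 1 := by rw [mul_one_div, div_le_one (by positivity)]; linarith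
  have hyε := (hy.trans hN1).trans_lt hN
  have hne : k₁ * ξ - j₁ ≠ 0 := sub_ne_zero.2 (hξ k₁ j₁ hk₁0)
  rcases hne.lt_or_gt with hneg | hpos
  swap
  · rw [abs_of_pos hpos] at hyε hk₁y
    exact ⟨k₁, j₁, hk₁0, hpos, hyε, by linarith⟩
  have habs := abs_of_neg hneg
  set y := |k₁ * ξ - j₁| with hydef
  have hy0 : 0 < y := abs_pos.2 hne
  have hM : 0 < ⌈1 / y⌉₊ := Nat.ceil_pos.2 (by positivity)
  obtain ⟨k₂, j₂, hk₂, hk₂M, h₂, hk₂y⟩ := hdir _ hM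
  have hy₂ : |k₂ * ξ - j₂| < y := by
    refine h₂.trans_lt ?_
    rw [div_lt_comm₀ (by positivity) hy0]
    linarith [Nat.le_ceil (1 / y)]
  have hlt : k₁ < k₂ := by
    refine hk₁N.trans_lt (lt_of_not_ge fun hle => ?_)
    exact (((hmin k₂ (Finset.mem_Icc.2 ⟨hk₂, hle⟩)).trans (round_le _ _)).trans_lt hy₂).ne rfl
  rcases (sub_ne_zero.2 (hξ k₂ j₂ hk₂)).lt_or_gt with hneg₂ | hpos₂
  swap
  · rw [abs_of_pos hpos₂] at hy₂ hk₂y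
    exact ⟨k₂, j₂, hk₂, hpos₂, hy₂.trans hyε, by linarith⟩
  rw [abs_of_neg hneg₂] at hy₂
  refine ⟨k₂ - k₁, j₂ - j₁, by omega, ?_, ?_, ?_⟩ <;> push_cast
  · linarith
  · linarith
  · have h3 : (k₂ : ℝ) ≤ 1 / y + 1 := by
      have h4 : (k₂ : ℝ) ≤ ⌈1 / y⌉₊ := by exact_mod_cast hk₂M
      linarith [Nat.ceil_lt_add_one (one_div_pos.2 hy0).le]
    have h5 : (k₁ : ℝ) < k₂ := by exact_mod_cast hlt
    calc ((k₂ : ℝ) - k₁) * ((k₂ - k₁) * ξ - (j₂ - j₁)) ≤ (1 / y + 1) * y := by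
          gcongr
          · linarith
          · linarith
          · linarith
      _ = 1 + y := by field_simp
      _ ≤ 2 := by linarith

theorem exists_int_int_sign_mul_sub_lt {ξ : ℝ} (hξ : ∀ k j : ℤ, 0 < k → k * ξ ≠ j) {s : ℝ}
    (hs : s = 1 ∨ s = -1) {ε : ℝ} (hε : 0 < ε) :
    ∃ k j : ℤ, 0 < k ∧ 0 < s * (k * ξ - j) ∧ s * (k * ξ - j) < ε ∧
      k * (s * (k * ξ - j)) ≤ 2 := by
  rcases hs with rfl | rfl
  · simpa using exists_int_int_pos_mul_sub_lt hξ hε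
  · obtain ⟨k, j, hk, h1, h2, h3⟩ := exists_int_int_pos_mul_sub_lt (ξ := -ξ)
      (fun k j hk h => hξ k (-j) hk (by push_cast; linarith)) hε
    have h : -1 * (k * ξ - ((-j : ℤ) : ℝ)) = k * -ξ - j := by
      push_cast
      ring
    exact ⟨k, -j, hk, h ▸ h1, h ▸ h2, h ▸ h3⟩

end OneSided

section Planar

variable {n : ℕ}

theorem exists_pos_forall_le_norm_vecOf (g : SLR n) :
    ∃ c > 0, ∀ m : Fin n → ℤ, m ≠ 0 → c ≤ ‖vecOf n g m‖ := by
  set e := (Matrix.SpecialLinearGroup.toLin' g).toContinuousLinearEquiv with he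
  obtain ⟨C, hC, hb⟩ := (e.symm : (Fin n → ℝ) →L[ℝ] (Fin n → ℝ)).bound
  refine ⟨C⁻¹, inv_pos.2 hC, fun m hm => ?_⟩
  have h1 : ‖fun i => (m i : ℝ)‖ ≤ C * ‖vecOf n g m‖ := by
    have h2 := hb (vecOf n g m)
    have h3 : e.symm (vecOf n g m) = fun i => (m i : ℝ) := e.symm_apply_apply _
    exact h3 ▸ h2
  obtain ⟨i, hi⟩ := Function.ne_iff.1 hm
  have h4 : (1 : ℝ) ≤ |(m i : ℝ)| := by exact_mod_cast Int.one_le_abs hi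
  have h5 : |(m i : ℝ)| ≤ ‖fun i => (m i : ℝ)‖ := norm_le_pi_norm (fun i => (m i : ℝ)) i
  rw [inv_le_iff_one_le_mul₀' hC]
  linarith

variable {g : SLR 2} {φ ℓ : (Fin 2 → ℝ) →ₗ[ℝ] ℝ}

theorem IsShearPair.exists_linearEquiv (h : IsShearPair g φ ℓ) :
    ∃ e : (Fin 2 → ℝ) ≃ₗ[ℝ] (Fin 2 → ℝ), ∀ v, e v = ![φ v, ℓ v] := by
  obtain ⟨v, hv1, hv2⟩ := h.exists_left
  obtain ⟨w, hw1, hw2⟩ := h.exists_right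
  set T : (Fin 2 → ℝ) →ₗ[ℝ] (Fin 2 → ℝ) := LinearMap.pi ![φ, ℓ] with hT
  have hTv : ∀ v, T v = ![φ v, ℓ v] := fun v => by
    ext i
    fin_cases i <;> rfl
  have hsurj : Function.Surjective T := fun x => ⟨x 0 • v + x 1 • w, by
    ext i
    fin_cases i <;> simp [hTv, hv1, hv2, hw1, hw2]⟩
  exact ⟨LinearEquiv.ofBijective T ⟨LinearMap.injective_iff_surjective.2 hsurj, hsurj⟩, hTv⟩

theorem IsShearPair.exists_norm_le (h : IsShearPair g φ ℓ) :
    ∃ C > 0, ∀ v, ‖v‖ ≤ C * max |φ v| |ℓ v| := by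
  obtain ⟨e, he⟩ := h.exists_linearEquiv
  obtain ⟨C, hC, hb⟩ := (e.toContinuousLinearEquiv.symm : (Fin 2 → ℝ) →L[ℝ] (Fin 2 → ℝ)).bound
  refine ⟨C, hC, fun v => ?_⟩
  have h2 := hb (e v)
  have h3 : e.toContinuousLinearEquiv.symm (e v) = v := e.symm_apply_apply _
  have h4 : ‖e v‖ ≤ max |φ v| |ℓ v| := by
    rw [he, pi_norm_le_iff_of_nonneg (by positivity)]
    intro i
    fin_cases i
    · exact le_max_left _ _
    · exact le_max_right _ _
  calc ‖v‖ ≤ C * ‖e v‖ := by simpa [h3] using h2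
    _ ≤ _ := by gcongr

theorem IsShearPair.exists_scaling (h : IsShearPair g φ ℓ) :
    ∃ a : SLR 2, ∀ v, φ (Matrix.SpecialLinearGroup.toLin' a v) = 2 * φ v ∧
      ℓ (Matrix.SpecialLinearGroup.toLin' a v) = 2⁻¹ * ℓ v := by
  obtain ⟨e, he⟩ := h.exists_linearEquiv
  set D : (Fin 2 → ℝ) →ₗ[ℝ] (Fin 2 → ℝ) := Matrix.toLin' (Matrix.diagonal ![2, 2⁻¹]) with hD
  set L : (Fin 2 → ℝ) →ₗ[ℝ] (Fin 2 → ℝ) := (e.symm : (Fin 2 → ℝ) →ₗ[ℝ] _) ∘ₗ D ∘ₗ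
    (e : (Fin 2 → ℝ) →ₗ[ℝ] _) with hL
  have hdet : (LinearMap.toMatrix' L).det = 1 := by
    rw [LinearMap.det_toMatrix', hL]
    have := LinearMap.det_conj D e.symm
    rw [LinearEquiv.symm_symm] at this
    rw [this, hD, LinearMap.det_toLin']
    simp
  refine ⟨⟨LinearMap.toMatrix' L, hdet⟩, fun v => ?_⟩
  have h1 : Matrix.SpecialLinearGroup.toLin' ⟨LinearMap.toMatrix' L, hdet⟩ v = L v :=
    LinearMap.toMatrix'_mulVec L v
  have h2 : e (L v) = D (e v) := by simp [hL]
  rw [he, he] at h2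
  rw [h1]
  refine ⟨?_, ?_⟩
  · simpa [hD, Matrix.mulVec_diagonal] using congrFun h2 0
  · simpa [hD, Matrix.mulVec_diagonal] using congrFun h2 1

theorem IsShearPair.ae_not_intersects_ker (h : IsShearPair g φ ℓ)
    {μ : Measure (LatticeSpace 2)} [IsProbabilityMeasure μ]
    (hμ : ∀ g : SLR 2, MeasurePreserving (fun x : LatticeSpace 2 => g • x) μ μ) :
    ∀ᵐ Λ ∂μ, ¬ Intersects 2 Λ {v | ℓ v = 0} := by
  obtain ⟨a, ha⟩ := h.exists_scaling
  have hφ := φ.continuous_of_finiteDimensional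
  have hℓ := ℓ.continuous_of_finiteDimensional
  set A : ℝ → Set (Fin 2 → ℝ) := fun s => {v | ℓ v = 0 ∧ |φ v| ≤ s} with hA
  have hAm : ∀ s, MeasurableSet (A s) := fun s =>
    ((isClosed_eq hℓ continuous_const).inter (isClosed_le hφ.abs continuous_const)).measurableSet
  set F : ℝ → Set (LatticeSpace 2) := fun s => {Λ | Intersects 2 Λ (A s)} with hF
  have hFm : ∀ s, MeasurableSet (F s) := fun s => measurableSet_intersects (hAm s)
  have hinv : ∀ s, μ (F (s / 2)) = μ (F s) := fun s => by
    rw [← (hμ a).measure_preimage (hFm s).nullMeasurableSet]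
    congr 1
    ext Λ
    simp only [hF, Set.mem_preimage, Set.mem_ofPred_eq, intersects_smul_iff]
    congr! 1
    ext v
    simp only [hA, Set.mem_preimage, Set.mem_ofPred_eq, (ha v).1, (ha v).2, abs_mul, abs_two]
    refine and_congr (by simp) ?_
    rw [le_div_iff₀' two_pos]
  have hpow : ∀ s, ∀ k : ℕ, μ (F (s / 2 ^ k)) = μ (F s) := fun s k => by
    induction k with
    | zero => simp
    | succ k ih => rw [← ih, ← hinv (s / 2 ^ k), pow_succ, div_div]
  have hmono : ∀ {s t}, s ≤ t → F s ⊆ F t := by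
    intro s t hst Λ hΛ x hx
    obtain ⟨m, hm, h1, h2⟩ := hΛ x hx
    exact ⟨m, hm, h1, h2.trans hst⟩
  have hempty : ∀ s, ⋂ k : ℕ, F (s / 2 ^ k) = ∅ := by
    refine fun s => Set.eq_empty_of_forall_notMem fun Λ hΛ => ?_
    induction Λ using QuotientGroup.induction_on with
    | H x =>
      obtain ⟨c, hc, hlow⟩ := exists_pos_forall_le_norm_vecOf x
      obtain ⟨C, hC, hup⟩ := h.exists_norm_le
      have hlim : Tendsto (fun k : ℕ => C * (s / 2 ^ k)) atTop (nhds 0) := by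
        have := (tendsto_pow_atTop_nhds_zero_of_lt_one (r := (2⁻¹ : ℝ)) (by norm_num)
          (by norm_num)).const_mul (C * s)
        simpa [div_eq_mul_inv, mul_assoc] using this
      obtain ⟨k, hk⟩ := (hlim.eventually_lt_const hc).exists
      obtain ⟨m, hm, h1, h2⟩ := intersects_mk.1 (Set.mem_iInter.1 hΛ k)
      have h3 := (hlow m hm).trans (hup _)
      rw [h1, abs_zero, max_eq_left (abs_nonneg _)] at h3
      nlinarith [mul_le_mul_of_nonneg_left h2 hC.le]
  have hzero : ∀ s, 0 < s → μ (F s) = 0 := by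
    intro s hs
    have hanti : Antitone fun k : ℕ => F (s / 2 ^ k) := fun i j hij => hmono (by gcongr; norm_num)
    have hlim := tendsto_measure_iInter_atTop (μ := μ)
      (fun k => (hFm (s / 2 ^ k)).nullMeasurableSet) hanti ⟨0, measure_ne_top _ _⟩
    rw [hempty, measure_empty] at hlim
    simp only [Function.comp_def, hpow] at hlim
    exact tendsto_nhds_unique tendsto_const_nhds hlim
  have hall : ∀ᵐ Λ ∂μ, ∀ k : ℕ, Λ ∉ F (k + 1) :=
    ae_all_iff.2 fun k => measure_eq_zero_iff_ae_notMem.1 (hzero _ (by positivity))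
  filter_upwards [hall] with Λ hΛ hi
  induction Λ using QuotientGroup.induction_on with
  | H x =>
    obtain ⟨m, hm, h1⟩ := intersects_mk.1 hi
    refine hΛ ⌈|φ (vecOf 2 x m)|⌉₊ (intersects_mk.2 ⟨m, hm, h1, ?_⟩)
    linarith [Nat.le_ceil |φ (vecOf 2 x m)|]

end Planar

section PlanarReturn

variable {g : SLR 2} {φ ℓ : (Fin 2 → ℝ) →ₗ[ℝ] ℝ}

theorem exists_vecOf_two (f : (Fin 2 → ℝ) →ₗ[ℝ] ℝ) (x : SLR 2) :
    ∃ p q : ℝ, ∀ z, f (Matrix.SpecialLinearGroup.toLin' x z) = z 0 * p + z 1 * q := by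
  refine ⟨f (Matrix.SpecialLinearGroup.toLin' x ![1, 0]),
    f (Matrix.SpecialLinearGroup.toLin' x ![0, 1]), fun z => ?_⟩
  have hz : z = z 0 • ![1, 0] + z 1 • ![0, 1] := by
    ext i
    fin_cases i <;> simp
  conv_lhs => rw [hz]
  simp only [map_add, map_smul, smul_eq_mul]

/-- A planar lattice without nonzero vectors on the line `ℓ = 0` has vectors arbitrarily close to
that line which lie on the incoming side of the shear. -/
theorem IsShearPair.exists_vecOf_incoming (h : IsShearPair g φ ℓ) {x : SLR 2}
    (hx : ∀ m : Fin 2 → ℤ, m ≠ 0 → ℓ (vecOf 2 x m) ≠ 0) :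
    ∃ D > 0, ∀ B : ℝ, ∃ m : Fin 2 → ℤ, m ≠ 0 ∧ ∃ X ≥ B, φ (vecOf 2 x m) = -X * ℓ (vecOf 2 x m) ∧
      X * ℓ (vecOf 2 x m) ^ 2 ≤ D := by
  obtain ⟨p, q, hφx⟩ := exists_vecOf_two φ x
  obtain ⟨a, b, hℓx⟩ := exists_vecOf_two ℓ x
  have hℓm : ∀ k j : ℤ, ℓ (vecOf 2 x ![k, j]) = k * a + j * b := fun k j =>
    (hℓx fun i => (![k, j] i : ℝ)).trans (by simp)
  have hφm : ∀ k j : ℤ, φ (vecOf 2 x ![k, j]) = k * p + j * q := fun k j =>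
    (hφx fun i => (![k, j] i : ℝ)).trans (by simp)
  have hb0 : b ≠ 0 := by
    have h1 := hx ![0, 1] (by simp)
    rw [hℓm] at h1
    simpa using h1
  have hdet : p * b - q * a ≠ 0 := by
    intro h0
    obtain ⟨e, he⟩ := h.exists_linearEquiv
    have h1 : e (Matrix.SpecialLinearGroup.toLin' x ![b, -a]) = 0 := by
      rw [he, hφx, hℓx]
      ext i
      fin_cases i
      · simp
        linarith
      · simp
        ring
    rw [LinearEquiv.map_eq_zero_iff, LinearEquiv.map_eq_zero_iff] at h1
    exact hb0 (by simpa using congrFun h1 0)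
  set ξ := a / b with hξ
  have hξ0 : ∀ k j : ℤ, 0 < k → k * ξ ≠ j := by
    intro k j hk h0
    refine hx ![k, -j] (fun h1 => hk.ne' (by simpa using congrFun h1 0)) ?_
    rw [hℓm, Int.cast_neg, ← h0, hξ]
    field_simp
    ring
  set ρ := (p - q * ξ) / b with hρ
  have hρ0 : ρ ≠ 0 := by
    have : ρ = (p * b - q * a) / b ^ 2 := by
      rw [hρ, hξ]
      field_simp
    rw [this]
    positivity
  have hρpos : 0 < |ρ| := abs_pos.2 hρ0
  obtain ⟨s, hs, hsρ⟩ : ∃ s : ℝ, (s = 1 ∨ s = -1) ∧ ρ = -(s * |ρ|) := by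
    rcases hρ0.lt_or_gt with h1 | h1
    · exact ⟨1, Or.inl rfl, by rw [abs_of_neg h1]; ring⟩
    · exact ⟨-1, Or.inr rfl, by rw [abs_of_pos h1]; ring⟩
  have hss : s * s = 1 := by rcases hs with rfl | rfl <;> norm_num
  refine ⟨b ^ 2 * (2 * |ρ| + |q / b|), by positivity, fun B => ?_⟩
  have hM0 : 0 < |B| + 1 + |q / b| := by positivity
  obtain ⟨k, j, hk, ht0, htε, hkt⟩ := exists_int_int_sign_mul_sub_lt hξ0 hs
    (lt_min one_pos (div_pos hρpos hM0))
  obtain ⟨t, ht⟩ : ∃ t, t = s * (k * ξ - j) := ⟨_, rfl⟩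
  rw [← ht] at ht0 htε hkt
  obtain ⟨ht1, htB⟩ := lt_min_iff.1 htε
  rw [lt_div_iff₀ hM0] at htB
  have hk1 : (1 : ℝ) ≤ k := by exact_mod_cast hk
  have hy : k * ξ - j = s * t := by rw [ht, ← mul_assoc, hss, one_mul]
  have hℓv : ℓ (vecOf 2 x ![k, -j]) = b * (s * t) := by
    rw [hℓm, ← hy, hξ]
    push_cast
    field_simp
    ring
  have hφv : φ (vecOf 2 x ![k, -j]) = b * (k * ρ) + q * (s * t) := by
    rw [hφm, ← hy, hρ]
    push_cast
    field_simp
    ring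
  have hqb := abs_le.1 (le_refl |q / b|)
  refine ⟨![k, -j], fun h0 => hk.ne' (by simpa using congrFun h0 0), |ρ| * k / t - q / b, ?_, ?_, ?_⟩
  · have h1 : |B| + 1 + |q / b| ≤ |ρ| * k / t := by
      rw [le_div_iff₀ ht0]
      nlinarith
    linarith [le_abs_self B]
  · rw [hφv, hℓv]
    field_simp
    linear_combination b * k * hsρ
  · have h1 : (|ρ| * k / t - q / b) * (b * (s * t)) ^ 2 =
        b ^ 2 * (|ρ| * (k * t) - q / b * t ^ 2) := by
      rw [show (b * (s * t)) ^ 2 = b ^ 2 * (s * s) * t ^ 2 by ring, hss]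
      field_simp
    rw [hℓv, h1]
    have h2 : |ρ| * (k * t) ≤ |ρ| * 2 := mul_le_mul_of_nonneg_left hkt hρpos.le
    have h3 : -(q / b) * t ^ 2 ≤ |q / b| * 1 :=
      mul_le_mul (neg_le_abs _) (by nlinarith) (sq_nonneg t) (abs_nonneg _)
    refine mul_le_mul_of_nonneg_left ?_ (sq_nonneg b)
    linarith

/-- A vector with `φ v = -X * ℓ v` is brought close to the kernel of `φ` by the
`⌊X⌋`-th iterate of the shear. -/
theorem IsShearPair.abs_pow_floor_le (h : IsShearPair g φ ℓ) {v : Fin 2 → ℝ} {X : ℝ} (hX : 0 ≤ X)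
    (hv : φ v = -X * ℓ v) :
    |φ (Matrix.SpecialLinearGroup.toLin' (g ^ ⌊X⌋₊) v)| ≤ |ℓ v| := by
  have h1 : |(⌊X⌋₊ : ℝ) - X| ≤ 1 := abs_le.2
    ⟨by linarith [Nat.lt_floor_add_one X], by linarith [Nat.floor_le hX]⟩
  rw [h.pow_left, hv, show -X * ℓ v + ⌊X⌋₊ * ℓ v = (⌊X⌋₊ - X) * ℓ v by ring, abs_mul]
  exact mul_le_of_le_one_left (abs_nonneg _) h1

theorem eventually_const_mul_rpow_neg_lt (M : ℝ) {γ β : ℝ} (hβ : β < γ) :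
    ∀ᶠ i : ℕ in atTop, M * (i : ℝ) ^ (-γ) < (i : ℝ) ^ (-β) := by
  have hlim : Tendsto (fun i : ℕ => M * (i : ℝ) ^ (-(γ - β))) atTop (nhds 0) := by
    simpa using ((tendsto_rpow_neg_atTop (sub_pos.2 hβ)).comp
      tendsto_natCast_atTop_atTop).const_mul M
  filter_upwards [hlim.eventually_lt_const one_pos, eventually_gt_atTop 0] with i hi hi0
  have hi0' : (0 : ℝ) < i := by exact_mod_cast hi0
  have h1 : (i : ℝ) ^ (-γ) = (i : ℝ) ^ (-(γ - β)) * (i : ℝ) ^ (-β) := by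
    rw [← Real.rpow_add hi0']
    congr 1
    ring
  rw [h1, ← mul_assoc]
  exact mul_lt_of_lt_one_left (by positivity) hi

theorem IsShearPair.exists_intersects_of_not_intersects_ker (h : IsShearPair g φ ℓ)
    {Λ : LatticeSpace 2} (hΛ : ¬ Intersects 2 Λ {v | ℓ v = 0}) {β : ℝ} (hβ : β < 1 / 2) (K : ℕ) :
    ∃ j ≥ K, Intersects 2 (g ^ j • Λ) {w | ‖w‖ < (j : ℝ) ^ (-β)} := by
  induction Λ using QuotientGroup.induction_on with
  | H x =>
  obtain ⟨C, hC, hnorm⟩ := h.exists_norm_le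
  obtain ⟨D, hD0, hD⟩ := h.exists_vecOf_incoming fun m hm h0 =>
    hΛ (intersects_mk.2 ⟨m, hm, h0⟩)
  obtain ⟨I, hI⟩ := eventually_atTop.1 (eventually_const_mul_rpow_neg_lt (C * √D) hβ)
  obtain ⟨m, hm, X, hX, hφ, hℓ⟩ := hD ((I + K + 1 : ℕ) : ℝ)
  have hX0 : 0 ≤ X := (Nat.cast_nonneg _).trans hX
  have hfl : I + K + 1 ≤ ⌊X⌋₊ := Nat.le_floor hX
  have hi0 : (0 : ℝ) < ⌊X⌋₊ := by exact_mod_cast (by omega : 0 < ⌊X⌋₊)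
  refine ⟨⌊X⌋₊, by omega, intersects_smul_iff.2 (intersects_mk.2 ⟨m, hm, ?_⟩)⟩
  have hℓD : |ℓ (vecOf 2 x m)| ≤ √D * (⌊X⌋₊ : ℝ) ^ (-(1 / 2) : ℝ) := by
    rw [Real.rpow_neg hi0.le, ← Real.sqrt_eq_rpow, ← div_eq_mul_inv, ← Real.sqrt_div hD0.le]
    refine Real.abs_le_sqrt ?_
    rw [le_div_iff₀ hi0]
    nlinarith [Nat.floor_le hX0, sq_nonneg (ℓ (vecOf 2 x m))]
  have hmax : max |φ (Matrix.SpecialLinearGroup.toLin' (g ^ ⌊X⌋₊) (vecOf 2 x m))|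
      |ℓ (Matrix.SpecialLinearGroup.toLin' (g ^ ⌊X⌋₊) (vecOf 2 x m))| ≤ |ℓ (vecOf 2 x m)| := by
    rw [h.pow_right]
    exact max_le (h.abs_pow_floor_le hX0 hφ) le_rfl
  calc ‖Matrix.SpecialLinearGroup.toLin' (g ^ ⌊X⌋₊) (vecOf 2 x m)‖
      ≤ C * (√D * (⌊X⌋₊ : ℝ) ^ (-(1 / 2) : ℝ)) :=
        (hnorm _).trans (mul_le_mul_of_nonneg_left (hmax.trans hℓD) hC.le)
    _ = C * √D * (⌊X⌋₊ : ℝ) ^ (-(1 / 2) : ℝ) := by ring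
    _ < _ := hI _ (by omega)

end PlanarReturn

section Assembly

variable {n : ℕ}

theorem IsShearPair.ae_forall_exists_intersects {g : SLR n} {φ ℓ : (Fin n → ℝ) →ₗ[ℝ] ℝ}
    (h : IsShearPair g φ ℓ) (hn : 2 ≤ n)
    {μ : Measure (LatticeSpace n)} [IsProbabilityMeasure μ]
    (hμ : ∀ g : SLR n, MeasurePreserving (fun x : LatticeSpace n => g • x) μ μ)
    {β : ℝ} (hβ : 0 < β) (hβn : β * n < 1) :
    ∀ᵐ Λ ∂μ, ∀ K : ℕ, ∃ j ≥ K, Intersects n (g ^ j • Λ) {w | ‖w‖ < (j : ℝ) ^ (-β)} := by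
  rcases hn.eq_or_lt with rfl | hn
  · filter_upwards [h.ae_not_intersects_ker hμ] with Λ hΛ
    refine h.exists_intersects_of_not_intersects_ker hΛ ?_
    push_cast at hβn
    linarith
  · exact h.ae_forall_exists_intersects_of_three_le hn hμ hβ hβn

theorem norm_le_eNorm (v : Fin n → ℝ) : ‖v‖ ≤ eNorm v :=
  (pi_norm_le_iff_of_nonneg (norm_nonneg _)).2 fun i =>
    PiLp.norm_apply_le ((WithLp.equiv 2 (Fin n → ℝ)).symm v) i

theorem eNorm_le_sqrt_mul_norm (v : Fin n → ℝ) : eNorm v ≤ √n * ‖v‖ := by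
  rw [eNorm, EuclideanSpace.norm_eq]
  refine Real.sqrt_le_iff.2 ⟨by positivity, ?_⟩
  rw [mul_pow, Real.sq_sqrt n.cast_nonneg]
  calc ∑ i, ‖v i‖ ^ 2 ≤ ∑ _i : Fin n, ‖v‖ ^ 2 := by
        gcongr with i
        exact norm_le_pi_norm v i
    _ = n * ‖v‖ ^ 2 := by simp

theorem one_div_le_alpha1 {Λ : LatticeSpace n} {s : ℝ}
    (h : Intersects n Λ {w | ‖w‖ < s}) : 1 / (√n * s) ≤ alpha1 n Λ := by
  induction Λ using QuotientGroup.induction_on with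
  | H g =>
  obtain ⟨c, hc, hlow⟩ := exists_pos_forall_le_norm_vecOf g
  obtain ⟨m, hm, hs⟩ := intersects_mk.1 h
  have hbdd : BddAbove {r : ℝ | ∃ g' : SLR n,
      (QuotientGroup.mk g' : LatticeSpace n) = QuotientGroup.mk g ∧
        ∃ m : Fin n → ℤ, m ≠ 0 ∧ r = 1 / eNorm (vecOf n g' m)} := by
    refine ⟨1 / c, ?_⟩
    rintro _ ⟨g', hg', m', hm', rfl⟩
    obtain ⟨m'', hm'', he⟩ := exists_vecOf_eq_of_mk_eq hg' m' hm'
    exact one_div_le_one_div_of_le hc ((he ▸ hlow m'' hm'').trans (norm_le_eNorm _))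
  refine le_trans ?_ (le_csSup hbdd ⟨g, rfl, m, hm, rfl⟩)
  refine one_div_le_one_div_of_le ((hc.trans_le (hlow m hm)).trans_le (norm_le_eNorm _)) ?_
  exact (eNorm_le_sqrt_mul_norm _).trans (mul_le_mul_of_nonneg_left (le_of_lt hs) (Real.sqrt_nonneg _))

theorem eventually_const_mul_le_one_div {r : ℝ → ℝ} {δ β τ : ℝ} (hτ : 0 < τ) (hn : 0 < n)
    (hr : Tendsto (fun t => r t / t ^ ((1 + δ) / (n : ℝ))) atTop (nhds 0))
    (hβ : (1 - δ) / n < β) {M : ℝ} (hM : 0 ≤ M) :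
    ∀ᶠ j : ℕ in atTop, M * r (j * τ) * (j * τ) ^ (-(2 * δ) / (n : ℝ)) ≤
      1 / (√n * (j : ℝ) ^ (-β)) := by
  have hn' : (0 : ℝ) < n := by exact_mod_cast hn
  have hlim : Tendsto (fun j : ℕ => (j : ℝ) * τ) atTop atTop :=
    tendsto_natCast_atTop_atTop.atTop_mul_const hτ
  filter_upwards [hlim.eventually (hr.eventually_lt_const one_pos), eventually_gt_atTop 0,
    eventually_const_mul_rpow_neg_lt (√n * (M * τ ^ ((1 - δ) / n))) (neg_lt_neg hβ)]
    with j hj hj0 hlt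
  have hj0' : (0 : ℝ) < j := by exact_mod_cast hj0
  have hjτ : 0 < j * τ := by positivity
  rw [div_lt_one (by positivity)] at hj
  rw [neg_neg, neg_neg] at hlt
  have h1 : M * r (j * τ) * (j * τ) ^ (-(2 * δ) / (n : ℝ)) ≤
      M * τ ^ ((1 - δ) / n) * (j : ℝ) ^ ((1 - δ) / n) := by
    calc M * r (j * τ) * (j * τ) ^ (-(2 * δ) / (n : ℝ))
        ≤ M * (j * τ) ^ ((1 + δ) / n) * (j * τ) ^ (-(2 * δ) / (n : ℝ)) := by gcongr
      _ = M * (j * τ) ^ ((1 - δ) / n) := by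
          rw [mul_assoc, ← Real.rpow_add hjτ]
          congr 2
          ring
      _ = _ := by
          rw [Real.mul_rpow hj0'.le hτ.le]
          ring
  refine h1.trans ?_
  rw [Real.rpow_neg hj0'.le, le_div_iff₀ (by positivity), ← mul_assoc, ← div_eq_mul_inv,
    div_le_one (by positivity)]
  linarith

theorem map_natCast_mul_of_map_add {u : ℝ → SLR n} (hu : ∀ s t : ℝ, u (s + t) = u s * u t)
    (j : ℕ) (t : ℝ) : u (j * t) = u t ^ j := by
  induction j with
  | zero => simpa using hu 0 0
  | succ j ih => rw [Nat.cast_succ, add_mul, one_mul, hu, ih, pow_succ]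

theorem exists_pos_map_ne_one {u : ℝ → SLR n} (hu : ∀ s t : ℝ, u (s + t) = u s * u t)
    (h : ∃ t, u t ≠ 1) : ∃ t > 0, u t ≠ 1 := by
  obtain ⟨t, ht⟩ := h
  have hu0 : u 0 = 1 := by simpa using hu 0 0
  rcases lt_trichotomy t 0 with h0 | rfl | h0
  · refine ⟨-t, neg_pos.2 h0, fun h1 => ht ?_⟩
    have h2 := hu t (-t)
    rwa [add_neg_cancel, hu0, h1, mul_one, eq_comm] at h2
  · exact absurd hu0 ht
  · exact ⟨t, h0, ht⟩

end Assembly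

/-- **A sharpening of the lower bound.** Let `r : ℝ → ℝ⁺` satisfy, for constants `c, δ > 0`:
`t ↦ r(t)/t^{1/n}` non-decreasing (for `t > 0`), `r(t)/t^{(1+δ)/n} → 0`, and
`liminf r(t) t^{2δ/n}/r(t^{1+2δ}) > c`. Then for almost every unimodular lattice `Λ` there is
a sequence `t_k → ∞` with `α₁(u_{t_k} Λ) ≥ (c/(n-1)) r(t_k) t_k^{-2δ/n}`. -/
theorem sharpened_lower_bound (n : ℕ) (hn : 2 ≤ n)
    (μ : Measure (LatticeSpace n)) [IsProbabilityMeasure μ]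
    (hinv : ∀ (g : SLR n) (s : Set (LatticeSpace n)), μ ((fun x => g • x) ⁻¹' s) = μ s)
    (u : ℝ → SLR n) (hu_hom : ∀ s t : ℝ, u (s + t) = u s * u t)
    (hu_cont : Continuous fun t => (u t : Matrix (Fin n) (Fin n) ℝ))
    (hu_unip : ∀ t, IsNilpotent ((u t : Matrix (Fin n) (Fin n) ℝ) - 1))
    (hu_ne : ∃ t, u t ≠ 1)
    (r : ℝ → ℝ) (hr_pos : ∀ t, 0 < r t) (c δ : ℝ) (hc : 0 < c) (hδ : 0 < δ)
    (h1 : MonotoneOn (fun t => r t / t ^ ((1 : ℝ) / n)) (Set.Ioi 0))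
    (h2 : Tendsto (fun t => r t / t ^ ((1 + δ) / (n : ℝ))) atTop (nhds 0))
    (h3 : c < Filter.liminf
      (fun t => r t * t ^ (2 * δ / (n : ℝ)) / r (t ^ (1 + 2 * δ))) atTop) :
    ∀ᵐ Λ ∂μ, ∃ tk : ℕ → ℝ, Tendsto tk atTop atTop ∧ ∀ k : ℕ,
      (c / ((n : ℝ) - 1)) * r (tk k) * (tk k) ^ (-(2 * δ) / (n : ℝ)) ≤
        alpha1 n (u (tk k) • Λ) := by
  have hn' : (2 : ℝ) ≤ n := by exact_mod_cast hn
  have hn0 : (0 : ℝ) < n := by linarith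
  obtain ⟨τ, hτ, huτ⟩ := exists_pos_map_ne_one hu_hom hu_ne
  obtain ⟨φ, ℓ, hφℓ⟩ := exists_isShearPair (hu_unip τ) huτ
  obtain ⟨β, hβ, hβn⟩ : ∃ β, max 0 ((1 - δ) / n) < β ∧ β < 1 / n :=
    exists_between (max_lt (by positivity) (by gcongr; linarith))
  obtain ⟨hβ0, hβδ⟩ := max_lt_iff.1 hβ
  obtain ⟨K, hK⟩ := eventually_atTop.1 (eventually_const_mul_le_one_div hτ (by omega) h2 hβδ
    (M := c / ((n : ℝ) - 1)) (div_nonneg hc.le (by linarith)))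
  filter_upwards [hφℓ.ae_forall_exists_intersects hn
    (measurePreserving_smul_of_invariant fun g s _ => hinv g s) hβ0 ((lt_div_iff₀ hn0).1 hβn)]
    with Λ hΛ
  choose j hjk hj using fun k : ℕ => hΛ (K + k)
  refine ⟨fun k => j k * τ, ?_, fun k => ?_⟩
  · refine Tendsto.atTop_mul_const hτ (tendsto_natCast_atTop_atTop.comp ?_)
    exact tendsto_atTop_mono (fun k => (Nat.le_add_left k K).trans (hjk k)) tendsto_id
  · refine (hK (j k) ((Nat.le_add_right K k).trans (hjk k))).trans ?_
    rw [map_natCast_mul_of_map_add hu_hom]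
    exact one_div_le_alpha1 (hj k)
end
end
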